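/- (Armitage–Fröhlich) Let K be a number field with r₁ real places, r₁ > 0. If ρ is the 2-rank of the class group of K and ρ⁺ is the 2-rank of the narrow class group of K, then ρ⁺ − ρ ≤ ⌊r₁/2⌋. -/

import Mathlib

open NumberField FractionalIdeal
open scoped nonZeroDivisors

variable (K : Type*) [Field K] [NumberField K]

/-- The subgroup `P_K⁺` of the group of invertible fractional ideals consisting of principal
fractional ideals generated by a totally positive element. -/
noncomputable def totPosPrincipalSubgroup : Subgroup (FractionalIdeal (𝓞 K)⁰ K)ˣ where
  carrier := {I | ∃ x : Kˣ, (∀ φ : K →+* ℝ, 0 < φ (x : K)) ∧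
    (I : FractionalIdeal (𝓞 K)⁰ K) = spanSingleton (𝓞 K)⁰ (x : K)}
  one_mem' := ⟨1, fun φ => by simp, by simp⟩
  mul_mem' := by
    rintro I J ⟨x, hx, hI⟩ ⟨y, hy, hJ⟩
    refine ⟨x * y, fun φ => ?_, ?_⟩
    · rw [Units.val_mul, _root_.map_mul]; exact mul_pos (hx φ) (hy φ)
    · rw [Units.val_mul, hI, hJ, spanSingleton_mul_spanSingleton, Units.val_mul]
  inv_mem' := by
    rintro I ⟨x, hx, hI⟩
    refine ⟨x⁻¹, fun φ => ?_, ?_⟩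
    · rw [Units.val_inv_eq_inv_val, map_inv₀]; exact inv_pos.mpr (hx φ)
    · rw [Units.val_inv_eq_inv_val, hI, spanSingleton_inv, Units.val_inv_eq_inv_val]

/-- The narrow (strict) class group `C_K⁺ = I_K/P_K⁺` of the number field `K`. -/
noncomputable abbrev NarrowClassGroup :=
  (FractionalIdeal (𝓞 K)⁰ K)ˣ ⧸ totPosPrincipalSubgroup K

section
open Filter Topology Complex Real

lemma AF.summable_quad {a : ℂ} (ha : 0 < a.re) (b : ℂ) :
    Summable (fun m : ℤ => cexp (-π * a * (m:ℂ)^2 + 2 * π * b * m)) := by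
  have := (summable_jacobiTheta₂_term_iff (-I * b) (I * a)).mpr (by simpa using ha)
  refine this.congr ?_
  intro m
  unfold jacobiTheta₂_term
  congr 1
  linear_combination (π * (m:ℂ)^2 * a - 2 * π * m * b) * I_sq

/-- dominated theta limit -/
lemma AF.theta_limit (θ : ℤ → ℝ) (h0 : θ 0 = 0) :
    Tendsto (fun η : ℝ => ∑' m : ℤ, cexp (-(π * (1/η) * (m:ℝ)^2 : ℝ) + I * (θ m : ℝ)))
      (𝓝[>] 0) (𝓝 1) := by
  have hs : Summable (fun m : ℤ => rexp (-(π * (m:ℝ)^2))) := by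
    have := (AF.summable_quad (a := 1) (by simp) 0).norm
    refine this.congr ?_ 
    intro m
    rw [Complex.norm_exp]
    congr 1
    have : (-(π:ℂ) * 1 * (m:ℂ) ^ 2 + 2 * π * 0 * m) = ((-(π * (m:ℝ)^2) : ℝ) : ℂ) := by
      push_cast; ring
    rw [this, ofReal_re]
  have h1 : (∑' m : ℤ, if m = 0 then (1:ℂ) else 0) = 1 := by
    rw [tsum_ite_eq]
  rw [← h1]
  have hre : ∀ (η : ℝ) (m : ℤ), (-((π * (1/η) * (m:ℝ)^2 : ℝ):ℂ) + I * (θ m : ℝ)).re = -(π * (m:ℝ)^2 * η⁻¹) := by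
    intro η m
    rw [add_re, neg_re, ofReal_re, I_mul_re, ofReal_im]; ring
  refine tendsto_tsum_of_dominated_convergence hs ?_ ?_
  · intro m
    by_cases hm : m = 0
    · subst hm
      simp [h0]
    · simp only [hm, if_false]
      rw [tendsto_zero_iff_norm_tendsto_zero]
      simp_rw [Complex.norm_exp, hre]
      refine Real.tendsto_exp_neg_atTop_nhds_zero.comp ?_
      have hm' : (m:ℝ) ≠ 0 := by exact_mod_cast hm
      refine Tendsto.const_mul_atTop (by positivity) tendsto_inv_nhdsGT_zero
  · have : ∀ᶠ η : ℝ in 𝓝[>] 0, η ∈ Set.Ioo (0:ℝ) 1 := Ioo_mem_nhdsGT (by norm_num)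
    filter_upwards [this] with η hη m
    rw [Complex.norm_exp, hre]
    apply Real.exp_le_exp.mpr
    have h1 : 1 ≤ η⁻¹ := (one_le_inv₀ hη.1).mpr hη.2.le
    have h2 : 0 ≤ π * (m:ℝ)^2 := by positivity
    nlinarith

lemma AF.inner_sum (N : ℕ) (hN : 0 < N) (hev : Even N) (r : ℤ) (η : ℝ) (hη : 0 < η) :
    (∑' m : ℤ, cexp (-π / (η + I * N) * ((r + N * m : ℤ):ℂ)^2)) =
      cexp (π * I * r^2 / N) * (1 / ((η:ℂ) * (1 - I * η / N)⁻¹) ^ (1/2:ℂ)) *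
        ∑' m : ℤ, cexp (-(π * (1/η) * (m:ℝ)^2 : ℝ) + I * (π * m^2 / N + 2 * π * m * r / N : ℝ)) := by
  have hN' : (N:ℂ) ≠ 0 := by exact_mod_cast hN.ne'
  have hη' : (η:ℂ) ≠ 0 := by exact_mod_cast hη.ne'
  set u : ℂ := (1 - I * η / N) with hu
  have hu0 : u ≠ 0 := by
    intro h
    have := congrArg Complex.re h
    rw [hu] at this
    simp [div_natCast_re] at this
  have hd : (η + I * N : ℂ) ≠ 0 := by
    intro h
    have := congrArg Complex.re h
    simp at this; exact hη.ne' this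
  have hdu : (η + I * N : ℂ) = I * N * u := by
    rw [hu]; field_simp; linear_combination (η:ℂ) * I_sq
  set a : ℂ := η * u⁻¹ with ha
  have hainv : a⁻¹ = 1/η - I / N := by
    rw [ha, hu]; field_simp
  have ha0 : a ≠ 0 := by rw [ha]; positivity
  have hare : 0 < a.re := by
    have : 0 < (a⁻¹).re := by
      rw [hainv]
      have : ((1:ℂ)/η - I / N).re = 1/η := by
        rw [sub_re, div_natCast_re, I_re, zero_div, sub_zero, ← ofReal_one, ← ofReal_div, ofReal_re]
      rw [this]; positivity
    rw [Complex.inv_re] at this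
    have h2 : 0 < normSq a := normSq_pos.mpr ha0
    exact (div_pos_iff_of_pos_right h2).mp this
  have key := Complex.tsum_exp_neg_quadratic hare (-(a * r / N))
  -- LHS termwise
  have hL : ∀ m : ℤ, cexp (-π / (η + I * N) * ((r + N * m : ℤ):ℂ)^2) =
      cexp (π * I * r^2 / N) * cexp (-π * a * (r/N)^2) * cexp (-π * a * m^2 + 2 * π * (-(a * r / N)) * m) := by
    intro m
    obtain ⟨k, hk⟩ := hev
    have hk' : (N:ℂ) = 2 * k := by rw [hk]; push_cast; ring
    rw [← Complex.exp_add, ← Complex.exp_add, Complex.exp_eq_exp_iff_exists_int]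
    refine ⟨r * m + k * m^2, ?_⟩
    have e1 : (1:ℂ) / (η + I * N) = -I / N + a / N^2 := by
      rw [hdu, ha]
      field_simp
      rw [hu]; field_simp
      linear_combination ((N:ℂ) - I * η)  * I_sq
    rw [neg_div, div_eq_mul_one_div, e1]
    push_cast
    field_simp
    rw [hk']
    ring
  rw [tsum_congr hL, tsum_mul_left, key]
  have hR : ∀ m : ℤ, cexp (-π / a * (m + I * (-(a * r / N)))^2) =
      cexp (π * a * (r/N)^2) * cexp (-(π * (1/η) * (m:ℝ)^2 : ℝ) + I * (π * m^2 / N + 2 * π * m * r / N : ℝ)) := by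
    intro m
    rw [← Complex.exp_add]
    congr 1
    rw [div_eq_mul_inv]
    have : -(π:ℂ) * a⁻¹ * (m + I * (-(a * r / N)))^2 = -π * a⁻¹ * m^2 + 2 * π * I * m * r / N - π * a * I ^ 2 * ((r:ℂ)/N)^2 := by
      field_simp; ring
    rw [this, hainv, I_sq]
    push_cast
    ring
  rw [tsum_congr hR, tsum_mul_left]
  have : cexp (-π * a * (r/N)^2) * cexp (π * a * (r/N)^2) = 1 := by
    rw [← Complex.exp_add]; simp
  linear_combination (cexp (π * I * r^2 / N) * (1 / a ^ (1/2:ℂ)) * ∑' m : ℤ, cexp (-(π * (1/η) * (m:ℝ)^2 : ℝ) + I * (π * m^2 / N + 2 * π * m * r / N : ℝ))) * this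

lemma AF.gauss_one (N : ℕ) (hN : 0 < N) (hev : Even N) :
    ∑ r : Fin N, cexp (π * I * ((r:ℕ):ℂ)^2 / N) = (I * N) ^ (1/2:ℂ) := by
  have : NeZero N := ⟨hN.ne'⟩
  have hN' : (N:ℂ) ≠ 0 := by exact_mod_cast hN.ne'
  -- exact identity
  let T : ℕ → ℝ → ℂ := fun r η => ∑' m : ℤ, cexp (-(π * (1/η) * (m:ℝ)^2 : ℝ) + I * (π * m^2 / N + 2 * π * m * r / N : ℝ))
  let T0 : ℝ → ℂ := fun η => ∑' m : ℤ, cexp (-(π * (1/η) * (m:ℝ)^2 : ℝ) + I * ((0:ℝ):ℂ))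
  have hT : ∀ r, Tendsto (T r) (𝓝[>] 0) (𝓝 1) := fun r =>
    AF.theta_limit (fun m => (π * m^2 / N + 2 * π * m * r / N : ℝ)) (by simp)
  have hT0 : Tendsto T0 (𝓝[>] 0) (𝓝 1) := AF.theta_limit (fun _ => 0) rfl
  have hid : ∀ η : ℝ, 0 < η → (η + I * N : ℂ) ^ (1/2:ℂ) * T0 η = (1 / ((1 - I * η / N)⁻¹) ^ (1/2:ℂ)) *
      ∑ r : Fin N, cexp (π * I * ((r:ℕ):ℂ)^2 / N) * T r η := by
    intro η hη
    have hη' : (η:ℂ) ≠ 0 := by exact_mod_cast hη.ne'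
    have hu0 : (1 - I * η / N : ℂ) ≠ 0 := by
      intro h
      have := congrArg Complex.re h
      simp [div_natCast_re] at this
    have hre : 0 < (η + I * N : ℂ).re := by simpa using hη
    have hd : (η + I * N : ℂ) ≠ 0 := by
      intro h; rw [h] at hre; simp at hre
    have h1 := Complex.tsum_exp_neg_quadratic hre 0
    have h2 := Complex.tsum_exp_neg_quadratic (a := (η:ℂ)) (by simpa using hη) 0
    have h3 : (∑' n : ℤ, cexp (-π * (η + I * N) * n ^ 2 + 2 * π * 0 * n)) = ∑' n : ℤ, cexp (-π * η * n ^ 2 + 2 * π * 0 * n) := by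
      refine tsum_congr fun n => ?_
      rw [Complex.exp_eq_exp_iff_exists_int]
      obtain ⟨k, hk⟩ := hev
      refine ⟨-(k * n^2), ?_⟩
      rw [hk]; push_cast; ring
    have h4 : (∑' n : ℤ, cexp (-π / η * (n + I * 0) ^ 2)) = T0 η := by
      refine tsum_congr fun n => ?_
      congr 1; push_cast; ring
    have h5 : (∑' n : ℤ, cexp (-π / (η + I * N) * (n + I * 0) ^ 2)) =
        ∑ r : Fin N, ∑' m : ℤ, cexp (-π / (η + I * N) * (((r:ℕ) + N * m : ℤ):ℂ)^2) := by
      have hsum : Summable (fun n : ℤ => cexp (-π / (η + I * N) * (n + I * 0) ^ 2)) := by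
        have : 0 < ((η + I * N : ℂ)⁻¹).re := by
          rw [Complex.inv_re]; exact div_pos hre (normSq_pos.mpr hd)
        refine (AF.summable_quad this 0).congr fun m => ?_
        congr 1; ring
      rw [← (Int.divModEquiv N).symm.tsum_eq]
      have hsum' := (Int.divModEquiv N).symm.summable_iff.mpr hsum
      have hsw := (Equiv.prodComm (Fin N) ℤ).summable_iff.mpr hsum'
      rw [← (Equiv.prodComm (Fin N) ℤ).tsum_eq]
      refine (Summable.tsum_prod hsw).trans ?_
      rw [tsum_fintype]
      refine Finset.sum_congr rfl fun r _ => tsum_congr fun m => ?_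
      simp only [Function.comp_def, Equiv.prodComm_apply, Prod.swap_prod_mk, Int.divModEquiv_symm_apply]
      congr 2
      push_cast
      ring
    have h6 : ∀ r : Fin N, _ := fun r => AF.inner_sum N hN hev (r:ℕ) η hη
    rw [h3, h2, h4, h5, Finset.sum_congr rfl (fun r _ => h6 r)] at h1
    have hpow : ((η:ℂ) * (1 - I * η / N)⁻¹) ^ (1/2:ℂ) = (η:ℂ)^(1/2:ℂ) * ((1 - I * η / N)⁻¹) ^ (1/2:ℂ) := by
      have hi := inv_ne_zero hu0
      rw [cpow_def_of_ne_zero (mul_ne_zero hη' hi), cpow_def_of_ne_zero hη', cpow_def_of_ne_zero hi,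
        Complex.log_ofReal_mul hη hi, ← Complex.exp_add, ← Complex.ofReal_log hη.le, add_mul]
    rw [hpow] at h1
    have c1 : (η:ℂ)^(1/2:ℂ) ≠ 0 := by simp [cpow_eq_zero_iff, hη']
    have c2 : (η + I * N : ℂ)^(1/2:ℂ) ≠ 0 := by simp [cpow_eq_zero_iff, hd]
    have c3 : ((1 - I * η / N)⁻¹ : ℂ)^(1/2:ℂ) ≠ 0 := by
      rw [Ne, cpow_eq_zero_iff]; push Not; intro h; exact absurd h (inv_ne_zero hu0)
    have h7 : ∑ r : Fin N, cexp (π * I * (((r:ℕ):ℤ):ℂ)^2 / N) * (1 / ((η:ℂ)^(1/2:ℂ) * ((1 - I * η / N)⁻¹) ^ (1/2:ℂ))) *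
        (∑' m : ℤ, cexp (-(π * (1/η) * (m:ℝ)^2 : ℝ) + I * (π * m^2 / N + 2 * π * m * (((r:ℕ):ℤ):ℝ) / N : ℝ)))
        = (1 / ((η:ℂ)^(1/2:ℂ) * ((1 - I * η / N)⁻¹) ^ (1/2:ℂ))) * ∑ r : Fin N, cexp (π * I * ((r:ℕ):ℂ)^2 / N) * T r η := by
      rw [Finset.mul_sum]
      refine Finset.sum_congr rfl fun r _ => ?_
      simp only [T, Int.cast_natCast]
      ring
    rw [h7] at h1
    set Sg := ∑ r : Fin N, cexp (π * I * ((r:ℕ):ℂ)^2 / N) * T r η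
    field_simp at h1 ⊢
    linear_combination h1
  have hη0 : Tendsto (fun η : ℝ => (η:ℂ)) (𝓝[>] 0) (𝓝 0) := by
    have : ContinuousAt (fun η : ℝ => (η:ℂ)) 0 := by fun_prop
    have h := this.tendsto
    simp only [ofReal_zero] at h
    exact h.mono_left nhdsWithin_le_nhds
  have hslit : (I * N : ℂ) ∈ slitPlane := by
    right; simp; exact_mod_cast hN.ne'
  have hl : Tendsto (fun η : ℝ => (η + I * N : ℂ) ^ (1/2:ℂ) * T0 η) (𝓝[>] 0) (𝓝 ((I * N : ℂ) ^ (1/2:ℂ) * 1)) := by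
    refine Tendsto.mul ?_ hT0
    have h : Tendsto (fun η : ℝ => (η + I * N : ℂ)) (𝓝[>] 0) (𝓝 (0 + I * N)) := hη0.add_const _
    rw [zero_add] at h
    exact h.cpow tendsto_const_nhds hslit
  have hr : Tendsto (fun η : ℝ => (1 / ((1 - I * η / N)⁻¹ : ℂ) ^ (1/2:ℂ)) *
      ∑ r : Fin N, cexp (π * I * ((r:ℕ):ℂ)^2 / N) * T r η) (𝓝[>] 0)
      (𝓝 ((1 / ((1:ℂ)) ^ (1/2:ℂ)) * ∑ r : Fin N, cexp (π * I * ((r:ℕ):ℂ)^2 / N) * 1)) := by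
    refine Tendsto.mul ?_ (tendsto_finsetSum _ fun r _ => tendsto_const_nhds.mul (hT r))
    refine tendsto_const_nhds.div ?_ (by simp)
    refine Tendsto.cpow ?_ tendsto_const_nhds (by simp)
    have : Tendsto (fun η : ℝ => (1 - I * η / N : ℂ)) (𝓝[>] 0) (𝓝 (1 - I * 0 / N)) :=
      tendsto_const_nhds.sub ((tendsto_const_nhds.mul hη0).div_const _)
    have h2 := this.inv₀ (by simp)
    simpa using h2
  have := tendsto_nhds_unique_of_eventuallyEq hl hr (by
    filter_upwards [self_mem_nhdsWithin] with η hη using hid η hη)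
  simpa using this.symm

/-- the phase of a one-dimensional Gauss sum -/
lemma AF.gauss_pos (a : ℕ) (ha : 0 < a) :
    ∃ c : ℝ, 0 < c ∧ ∑ r : Fin (2 * a), cexp (2 * π * I * (((r:ℕ):ℂ)^2 / (4 * a))) = c * cexp (I * π / 4) := by
  refine ⟨Real.sqrt (2 * a), by positivity, ?_⟩
  have := AF.gauss_one (2 * a) (by omega) (by simp)
  have h2 : ∑ r : Fin (2 * a), cexp (2 * π * I * (((r:ℕ):ℂ)^2 / (4 * a))) = ∑ r : Fin (2 * a), cexp (π * I * ((r:ℕ):ℂ)^2 / (2 * a : ℕ)) := by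
    refine Finset.sum_congr rfl fun r _ => ?_
    congr 1; push_cast; ring
  rw [h2, this]
  have ha' : (0:ℝ) < 2 * a := by positivity
  have : (I * (2 * a : ℕ) : ℂ) = ((2 * a : ℝ) : ℂ) * I := by push_cast; ring
  rw [this, cpow_def_of_ne_zero (mul_ne_zero (by exact_mod_cast ha'.ne') I_ne_zero),
    Complex.log_ofReal_mul ha' I_ne_zero, Complex.log_I, add_mul, Complex.exp_add]
  congr 1
  · rw [Real.sqrt_eq_rpow, Real.rpow_def_of_pos ha']; push_cast; ring_nf
  · congr 1; ring
end

section
open Filter Topology Complex Real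

/-- additive character -/
noncomputable def AF.e (x : ℚ) : ℂ := cexp (2 * π * I * (x:ℂ))

lemma AF.e_add (x y : ℚ) : AF.e (x + y) = AF.e x * AF.e y := by
  unfold AF.e; rw [← Complex.exp_add]; congr 1; push_cast; ring
lemma AF.e_zero : AF.e 0 = 1 := by simp [AF.e]
lemma AF.e_eq_one_iff (x : ℚ) : AF.e x = 1 ↔ ∃ n : ℤ, x = n := by
  unfold AF.e
  rw [Complex.exp_eq_one_iff]
  have : (2 * π * I : ℂ) ≠ 0 := Complex.two_pi_I_ne_zero
  constructor
  · rintro ⟨n, hn⟩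
    refine ⟨n, ?_⟩
    rw [mul_comm] at hn
    have := mul_right_cancel₀ this hn
    exact_mod_cast this
  · rintro ⟨n, hn⟩
    refine ⟨n, ?_⟩
    rw [hn]; push_cast; ring
lemma AF.e_int (n : ℤ) : AF.e n = 1 := (AF.e_eq_one_iff _).2 ⟨n, rfl⟩
lemma AF.e_ne_zero (x : ℚ) : AF.e x ≠ 0 := Complex.exp_ne_zero _
lemma AF.e_add_int (x : ℚ) (n : ℤ) : AF.e (x + n) = AF.e x := by rw [AF.e_add, AF.e_int, mul_one]
lemma AF.e_sum {ι : Type*} (s : Finset ι) (g : ι → ℚ) : AF.e (∑ i ∈ s, g i) = ∏ i ∈ s, AF.e (g i) := by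
  classical
  induction s using Finset.induction_on with
  | empty => simp [AF.e_zero]
  | insert a s ha ih => rw [Finset.sum_insert ha, Finset.prod_insert ha, AF.e_add, ih]

section
variable {V : Type*} [AddCommGroup V]

/-- `s` is a complete system of representatives of `B / A`. -/
structure AF.Reps (A B : AddSubgroup V) {ι : Type*} (s : ι → V) : Prop where
  mem : ∀ i, s i ∈ B
  ex : ∀ b ∈ B, ∃ i, b - s i ∈ A
  uniq : ∀ i j, s i - s j ∈ A → i = j

def AF.Inv (A B : AddSubgroup V) (f : V → ℂ) : Prop := ∀ b ∈ B, ∀ a ∈ A, f (b + a) = f b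

/-- Gauss sum over B/A -/
noncomputable def AF.gs (A B : AddSubgroup V) (f : V → ℂ) : ℂ :=
  ∑ᶠ q : B ⧸ A.addSubgroupOf B, f (Quotient.out q : B)

lemma AF.reps_out (A B : AddSubgroup V) :
    AF.Reps A B (fun q : B ⧸ A.addSubgroupOf B => ((Quotient.out q : B) : V)) := by
  refine ⟨fun i => (Quotient.out i : B).2, fun b hb => ⟨((⟨b, hb⟩ : B) : B ⧸ A.addSubgroupOf B), ?_⟩, fun i j h => ?_⟩
  · have := QuotientAddGroup.mk_out_eq_add (A.addSubgroupOf B) ⟨b, hb⟩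
    obtain ⟨h, hh⟩ := this
    have h2 := congrArg (Subtype.val) hh
    change b - ((Quotient.out ((⟨b, hb⟩ : B) : B ⧸ A.addSubgroupOf B) : B) : V) ∈ A
    rw [h2]
    have h3 := h.2
    rw [AddSubgroup.mem_addSubgroupOf] at h3
    simpa using h3
  · rw [← QuotientAddGroup.out_eq' i, ← QuotientAddGroup.out_eq' j]
    rw [QuotientAddGroup.eq, AddSubgroup.mem_addSubgroupOf]
    have := A.neg_mem h
    simpa [add_comm, sub_eq_add_neg] using this

lemma AF.reps_bij {A B : AddSubgroup V} {ι κ : Type*} {s : ι → V} {t : κ → V}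
    (hs : AF.Reps A B s) (ht : AF.Reps A B t) : ∃ φ : ι ≃ κ, ∀ i, s i - t (φ i) ∈ A := by
  choose φ hφ using fun i => ht.ex (s i) (hs.mem i)
  refine ⟨Equiv.ofBijective φ ⟨fun i j hij => ?_, fun k => ?_⟩, hφ⟩
  · apply hs.uniq
    have := A.sub_mem (hφ i) (hφ j)
    rw [hij] at this; simpa using this
  · obtain ⟨i, hi⟩ := hs.ex (t k) (ht.mem k)
    refine ⟨i, ht.uniq _ _ ?_⟩
    have := A.add_mem (hφ i) hi
    have := A.neg_mem this
    simpa using this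

lemma AF.gs_eq {A B : AddSubgroup V} {f : V → ℂ} (hf : AF.Inv A B f) {ι : Type*} [Fintype ι]
    {s : ι → V} (hs : AF.Reps A B s) : AF.gs A B f = ∑ i, f (s i) := by
  obtain ⟨φ, hφ⟩ := AF.reps_bij (AF.reps_out A B) hs
  unfold AF.gs
  rw [← finsum_eq_sum_of_fintype, ← finsum_comp_equiv φ]
  refine finsum_congr fun q => ?_
  have := hf (s (φ q)) (hs.mem _) _ (hφ q)
  rw [← this]; congr 1; abel

lemma AF.reps_card {A B : AddSubgroup V} {ι : Type*} {s : ι → V} (hs : AF.Reps A B s) :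
    Nat.card ι = A.relIndex B := by
  obtain ⟨φ, _⟩ := AF.reps_bij hs (AF.reps_out A B)
  rw [Nat.card_congr φ]; rfl

lemma AF.finite_quot {A B : AddSubgroup V} (h : A.relIndex B ≠ 0) : Finite (B ⧸ A.addSubgroupOf B) :=
  AddSubgroup.index_ne_zero_iff_finite.mp h

lemma AF.Reps.tower {A B C : AddSubgroup V} (hAB : A ≤ B) (hBC : B ≤ C) {ι κ : Type*} {s : ι → V} {t : κ → V}
    (hs : AF.Reps B C s) (ht : AF.Reps A B t) : AF.Reps A C (fun p : ι × κ => s p.1 + t p.2) := by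
  refine ⟨fun p => C.add_mem (hs.mem _) (hBC (ht.mem _)), fun b hb => ?_, ?_⟩
  · obtain ⟨i, hi⟩ := hs.ex b hb
    obtain ⟨j, hj⟩ := ht.ex _ hi
    exact ⟨(i, j), by simpa [sub_sub] using hj⟩
  · rintro ⟨i, j⟩ ⟨i', j'⟩ h
    simp only at h
    have h1 : i = i' := by
      apply hs.uniq
      have h2 := B.sub_mem (hAB h) (B.sub_mem (ht.mem j) (ht.mem j'))
      convert h2 using 1; abel
    subst h1
    have h1 : j = j' := by
      apply ht.uniq
      simpa using h
    rw [h1]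

lemma AF.Reps.g3 {A B A' B' : AddSubgroup V} (hA : A = B ⊓ A') (hB : B' = B ⊔ A') {ι : Type*} {s : ι → V}
    (hs : AF.Reps A B s) : AF.Reps A' B' s := by
  subst hA hB
  refine ⟨fun i => (le_sup_left : B ≤ B ⊔ A') (hs.mem i), fun b hb => ?_, fun i j h => ?_⟩
  · obtain ⟨x, hx, y, hy, rfl⟩ := AddSubgroup.mem_sup.mp hb
    obtain ⟨i, hi⟩ := hs.ex x hx
    refine ⟨i, ?_⟩
    have := A'.add_mem hi.2 hy
    convert this using 1; abel
  · exact hs.uniq _ _ ⟨B.sub_mem (hs.mem i) (hs.mem j), h⟩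

lemma AF.relIndex_g3 {A B A' B' : AddSubgroup V} (hA : A = B ⊓ A') (hB : B' = B ⊔ A') :
    A'.relIndex B' = A.relIndex B :=
  (AF.reps_card ((AF.reps_out A B).g3 hA hB)).symm.trans (AF.reps_card (AF.reps_out A B))

lemma AF.gs_g3 {A B A' B' : AddSubgroup V} (hA : A = B ⊓ A') (hB : B' = B ⊔ A') {f : V → ℂ}
    (hf : AF.Inv A' B' f) (hfin : A.relIndex B ≠ 0) : AF.gs A B f = AF.gs A' B' f := by
  have := AF.finite_quot hfin
  have := Fintype.ofFinite (B ⧸ A.addSubgroupOf B)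
  have h1 := AF.reps_out A B
  have hf' : AF.Inv A B f := by
    subst hA hB
    intro b hb a ha
    exact hf b ((le_sup_left : B ≤ B ⊔ A') hb) a ha.2
  rw [AF.gs_eq hf' h1, AF.gs_eq hf (h1.g3 hA hB)]

lemma AF.gs_congr {A B : AddSubgroup V} {f g : V → ℂ} (h : ∀ x ∈ B, f x = g x) : AF.gs A B f = AF.gs A B g := by
  unfold AF.gs
  exact finsum_congr fun q => h _ (Quotient.out q : B).2

lemma AF.gs_g2 {A B B1 B2 : AddSubgroup V} (hA : A = B1 ⊓ B2) (hB : B = B1 ⊔ B2) {f : V → ℂ}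
    (hf : AF.Inv A B f) (hmul : ∀ x ∈ B1, ∀ y ∈ B2, f (x + y) = f x * f y)
    (h1 : A.relIndex B1 ≠ 0) (h2 : A.relIndex B2 ≠ 0) :
    AF.gs A B f = AF.gs A B1 f * AF.gs A B2 f := by
  have := AF.finite_quot h1
  have := Fintype.ofFinite (B1 ⧸ A.addSubgroupOf B1)
  have := AF.finite_quot h2
  have := Fintype.ofFinite (B2 ⧸ A.addSubgroupOf B2)
  have r1 := AF.reps_out A B1
  have r2 := AF.reps_out A B2
  have hB1 : B1 ≤ B := hB ▸ le_sup_left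
  have hB2 : B2 ≤ B := hB ▸ le_sup_right
  have r3 := AF.Reps.tower (hA ▸ inf_le_right) hB2 (r1.g3 hA hB) r2
  rw [AF.gs_eq hf r3, AF.gs_eq (fun b hb => hf b (hB1 hb)) r1, AF.gs_eq (fun b hb => hf b (hB2 hb)) r2,
    Finset.sum_mul_sum, Fintype.sum_prod_type]
  refine Finset.sum_congr rfl fun i _ => Finset.sum_congr rfl fun j _ => ?_
  exact hmul _ (r1.mem i) _ (r2.mem j)

lemma AF.gs_zero_of_mul {A B : AddSubgroup V} {g : V → ℂ} (hg : ∀ x ∈ B, ∀ y ∈ B, g (x + y) = g x * g y)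
    (hA : ∀ a ∈ A, g a = 1) (hAB : A ≤ B) (hfin : A.relIndex B ≠ 0) {y : V} (hy : y ∈ B) (hgy : g y ≠ 1) :
    AF.gs A B g = 0 := by
  have := AF.finite_quot hfin
  have := Fintype.ofFinite (B ⧸ A.addSubgroupOf B)
  have r1 := AF.reps_out A B
  have hI : AF.Inv A B g := fun b hb a ha => by rw [hg b hb a (hAB ha), hA a ha, mul_one]
  have r2 : AF.Reps A B (fun q : B ⧸ A.addSubgroupOf B => ((Quotient.out q : B) : V) + y) := by
    refine ⟨fun i => B.add_mem (r1.mem i) hy, fun b hb => ?_, fun i j h => r1.uniq _ _ (by simpa using h)⟩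
    obtain ⟨i, hi⟩ := r1.ex (b - y) (B.sub_mem hb hy)
    exact ⟨i, by convert hi using 1; abel⟩
  have e1 := AF.gs_eq hI r1
  have e2 := AF.gs_eq hI r2
  rw [Finset.sum_congr rfl (fun i _ => hg _ (r1.mem i) y hy), ← Finset.sum_mul, ← e1] at e2
  have : AF.gs A B g * (g y - 1) = 0 := by linear_combination -e2
  rcases mul_eq_zero.mp this with h | h
  · exact h
  · exact absurd (sub_eq_zero.mp h) hgy

lemma AF.gs_sub {L' L M M' : AddSubgroup V} (hL : L' ≤ L) (hLM : L ≤ M) (hM : M ≤ M') (f : V → ℂ) (ψ : V → V → ℂ)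
    (hf : ∀ x y, f (x + y) = f x * f y * ψ x y) (hf1 : ∀ x ∈ L, f x = 1)
    (hψ : ∀ x y y', ψ x (y + y') = ψ x y * ψ x y') (hψ1 : ∀ x ∈ M', ∀ y ∈ L', ψ x y = 1)
    (hMd : ∀ x ∈ M', x ∈ M ↔ ∀ y ∈ L, ψ x y = 1) (hfin : L'.relIndex M' ≠ 0) :
    L'.relIndex L ≠ 0 ∧ AF.gs L' M' f = L'.relIndex L * AF.gs L M f := by
  classical
  have hLM' := hLM.trans hM
  have hmul := AddSubgroup.relIndex_mul_relIndex L' L M' hL hLM'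
  rw [← hmul] at hfin
  have hf1' := left_ne_zero_of_mul hfin
  have hf2' := right_ne_zero_of_mul hfin
  refine ⟨hf1', ?_⟩
  have := AF.finite_quot hf1'
  have := Fintype.ofFinite (L ⧸ L'.addSubgroupOf L)
  have := AF.finite_quot hf2'
  have := Fintype.ofFinite (M' ⧸ L.addSubgroupOf M')
  have r1 := AF.reps_out L M'
  have r2 := AF.reps_out L' L
  have r3 := AF.Reps.tower hL hLM' r1 r2
  set w := (fun q : M' ⧸ L.addSubgroupOf M' => ((Quotient.out q : M') : V)) with hw
  have r4 : AF.Reps L M (fun i : {i // w i ∈ M} => w i.1) := by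
    refine ⟨fun i => i.2, fun b hb => ?_, fun i j h => Subtype.ext (r1.uniq _ _ h)⟩
    obtain ⟨i, hi⟩ := r1.ex b (hM hb)
    refine ⟨⟨i, ?_⟩, hi⟩
    have := M.sub_mem hb (hLM hi)
    simpa using this
  have i1 : AF.Inv L' M' f := fun b hb a ha => by
    rw [hf, hf1 a (hL ha), hψ1 b hb a ha]; simp
  have i2 : AF.Inv L M f := fun b hb a ha => by
    rw [hf, hf1 a ha, (hMd b (hM hb)).1 hb a ha]; simp
  rw [AF.gs_eq i1 r3, AF.gs_eq i2 r4, Fintype.sum_prod_type]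
  have key : ∀ i, ∑ j : L ⧸ L'.addSubgroupOf L, f (w i + (Quotient.out j : L)) = if w i ∈ M then (L'.relIndex L : ℂ) * f (w i) else 0 := by
    intro i
    have e1 : ∀ j : L ⧸ L'.addSubgroupOf L, f (w i + (Quotient.out j : L)) = f (w i) * ψ (w i) (Quotient.out j : L) := by
      intro j
      rw [hf, hf1 _ (r2.mem j), mul_one]
    rw [Finset.sum_congr rfl (fun j _ => e1 j), ← Finset.mul_sum]
    split_ifs with h
    · rw [Finset.sum_congr rfl (fun j _ => (hMd _ (r1.mem i)).1 h _ (r2.mem j)), ← AF.reps_card r2]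
      simp [Nat.card_eq_fintype_card, mul_comm]
    · rw [hMd _ (r1.mem i)] at h
      push Not at h
      obtain ⟨y, hy, hne⟩ := h
      have := AF.gs_zero_of_mul (A := L') (B := L) (g := ψ (w i)) (fun x _ y _ => hψ _ _ _)
        (fun a ha => hψ1 _ (r1.mem i) a ha) hL hf1' hy hne
      rw [AF.gs_eq _ r2] at this
      · rw [this, mul_zero]
      · intro b hb a ha
        rw [hψ, hψ1 _ (r1.mem i) a ha, mul_one]
  rw [Finset.sum_congr rfl (fun i _ => key i), ← Finset.sum_filter, ← Finset.mul_sum]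
  congr 1
  rw [Finset.sum_subtype (p := fun i => w i ∈ M)]
  simp
end
end

section
open Filter Topology Complex Real

noncomputable def AF.phase (a : ℚ) : ℂ := if 0 < a then cexp (I * π / 4) else cexp (-(I * π / 4))

lemma AF.one_dim (m : ℕ) (hm : 0 < m) (σ : ℤ) (hσ : σ = 1 ∨ σ = -1) : ∃ c : ℝ, 0 < c ∧
    ∑ r : Fin (2 * m), AF.e ((σ * m : ℚ) * (((r:ℕ):ℚ) / (2 * (m:ℚ)))^2) = c * AF.phase (σ * m) := by
  obtain ⟨c, hc, h⟩ := AF.gauss_pos m hm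
  refine ⟨c, hc, ?_⟩
  have hn : (m : ℂ) ≠ 0 := by exact_mod_cast hm.ne'
  have hmq : (0:ℚ) < m := by exact_mod_cast hm
  rcases hσ with rfl | rfl
  · have hph : AF.phase ((1:ℤ) * m) = (cexp (I * π / 4)) := by
      unfold AF.phase
      rw [if_pos (by simpa using hm)]
    rw [hph, ← h]
    refine Finset.sum_congr rfl fun r _ => ?_
    unfold AF.e
    congr 1
    push_cast
    field_simp
    norm_num
    ring
  · have hph : AF.phase ((-1:ℤ) * m) = (starRingEnd ℂ) (cexp (I * π / 4)) := by
      unfold AF.phase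
      rw [if_neg (by simp), ← Complex.exp_conj]
      congr 1
      rw [map_div₀, map_mul, Complex.conj_I, Complex.conj_ofReal, Complex.conj_ofNat]
      ring
    have h2 := congrArg (starRingEnd ℂ) h
    rw [map_sum, map_mul, Complex.conj_ofReal, ← hph] at h2
    rw [← h2]
    refine Finset.sum_congr rfl fun r _ => ?_
    rw [← Complex.exp_conj]
    unfold AF.e
    congr 1
    simp only [map_div₀, map_mul, map_pow, Complex.conj_I, Complex.conj_ofReal, Complex.conj_ofNat, Complex.conj_natCast]
    push_cast
    field_simp
    norm_num
    ring

section
variable {V : Type*} [AddCommGroup V] [Module ℚ V]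

def AF.dual (B : V →ₗ[ℚ] V →ₗ[ℚ] ℚ) (L : AddSubgroup V) : AddSubgroup V where
  carrier := {x | ∀ y ∈ L, ∃ n : ℤ, 2 * B x y = n}
  zero_mem' := fun y _ => ⟨0, by simp⟩
  add_mem' := by
    intro x x' hx hx' y hy
    obtain ⟨n, hn⟩ := hx y hy
    obtain ⟨m, hm⟩ := hx' y hy
    exact ⟨n + m, by rw [map_add, LinearMap.add_apply, mul_add, hn, hm]; push_cast; rfl⟩
  neg_mem' := by
    intro x hx y hy
    obtain ⟨n, hn⟩ := hx y hy
    exact ⟨-n, by rw [map_neg, LinearMap.neg_apply, mul_neg, hn]; push_cast; rfl⟩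

lemma AF.mem_dual {B : V →ₗ[ℚ] V →ₗ[ℚ] ℚ} {L : AddSubgroup V} {x : V} :
    x ∈ AF.dual B L ↔ ∀ y ∈ L, ∃ n : ℤ, 2 * B x y = n := Iff.rfl

lemma AF.q_add {B : V →ₗ[ℚ] V →ₗ[ℚ] ℚ} (hB : ∀ x y, B x y = B y x) (x y : V) :
    AF.e (B (x + y) (x + y)) = AF.e (B x x) * AF.e (B y y) * AF.e (2 * B x y) := by
  rw [← AF.e_add, ← AF.e_add]
  congr 1
  simp only [map_add, LinearMap.add_apply]
  rw [hB y x]; ring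

variable {ι : Type*} [Fintype ι]

lemma AF.B_repr {B : V →ₗ[ℚ] V →ₗ[ℚ] ℚ} (e : Module.Basis ι ℚ V) (ho : ∀ i j, i ≠ j → B (e i) (e j) = 0)
    (x y : V) : B x y = ∑ i, B (e i) (e i) * e.repr x i * e.repr y i := by
  classical
  conv_lhs => rw [← e.sum_repr x, ← e.sum_repr y]
  simp only [map_sum, LinearMap.sum_apply, map_smul, LinearMap.smul_apply, smul_eq_mul]
  refine Finset.sum_congr rfl fun i _ => ?_
  rw [Finset.sum_eq_single i]
  · ring
  · intro j _ hj; rw [ho j i hj]; ring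
  · simp

lemma AF.milgram_diag {B : V →ₗ[ℚ] V →ₗ[ℚ] ℚ} (hB : ∀ x y, B x y = B y x) (e : Module.Basis ι ℚ V)
    (ho : ∀ i j, i ≠ j → B (e i) (e j) = 0) (a : ι → ℤ) (ha : ∀ i, a i ≠ 0) (hea : ∀ i, B (e i) (e i) = a i)
    (L' : AddSubgroup V) (hL' : L' = (Submodule.span ℤ (Set.range e)).toAddSubgroup) :
    L'.relIndex (AF.dual B L') ≠ 0 ∧ ∃ c : ℝ, 0 < c ∧
      AF.gs L' (AF.dual B L') (fun x => AF.e (B x x)) = c * ∏ i, AF.phase (B (e i) (e i)) := by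
  classical
  have mL : ∀ x, x ∈ L' ↔ ∀ i, ∃ n : ℤ, e.repr x i = n := by
    intro x
    rw [hL', Submodule.mem_toAddSubgroup, Module.Basis.mem_span_iff_repr_mem ℤ e x]
    refine forall_congr' fun i => ?_
    constructor
    · rintro ⟨n, hn⟩; exact ⟨n, hn.symm⟩
    · rintro ⟨n, hn⟩; exact ⟨n, hn.symm⟩
  have heL : ∀ i, e i ∈ L' := fun i => by
    rw [hL', Submodule.mem_toAddSubgroup]; exact Submodule.subset_span ⟨i, rfl⟩
  have Br := AF.B_repr e ho
  have mD : ∀ x, x ∈ AF.dual B L' ↔ ∀ i, ∃ n : ℤ, 2 * (a i) * e.repr x i = n := by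
    intro x
    constructor
    · intro h i
      obtain ⟨n, hn⟩ := h _ (heL i)
      refine ⟨n, ?_⟩
      rw [← hn, Br, Finset.sum_eq_single i]
      · simp [hea]; ring
      · intro j _ hj; simp [Finsupp.single_apply, hj.symm]
      · simp
    · intro h y hy
      choose n hn using h
      choose m hm using (mL y).1 hy
      refine ⟨∑ i, n i * m i, ?_⟩
      rw [Br, Finset.mul_sum]
      push_cast
      refine Finset.sum_congr rfl fun i _ => ?_
      rw [← hn, ← hm, hea]; ring
  have habs : ∀ i, ∃ (m : ℕ) (σ : ℤ), 0 < m ∧ (σ = 1 ∨ σ = -1) ∧ (a i : ℚ) = σ * (m:ℚ) := by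
    intro i
    have h0 := Int.natAbs_pos.mpr (ha i)
    rcases Int.natAbs_eq (a i) with h | h
    · refine ⟨(a i).natAbs, 1, h0, Or.inl rfl, ?_⟩
      conv_lhs => rw [h]
      rw [Int.cast_natCast]; simp
    · refine ⟨(a i).natAbs, -1, h0, Or.inr rfl, ?_⟩
      conv_lhs => rw [h]
      rw [Int.cast_neg, Int.cast_natCast]; simp
  choose m σ hm hσ1 hσ using habs
  have hap : ∀ i, 0 < 2 * m i := fun i => by have := hm i; omega
  have haq : ∀ i, (2 * (m i : ℚ)) ≠ 0 := fun i => by exact_mod_cast (hap i).ne'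
  let s : (∀ i, Fin (2 * m i)) → V := fun k => ∑ i, (((k i : ℕ):ℚ) / (2 * (m i:ℚ))) • e i
  have hs : ∀ k i, e.repr (s k) i = ((k i : ℕ):ℚ) / (2 * (m i:ℚ)) := by
    intro k i
    simp only [s]
    rw [e.repr_sum_self]
  have hr : AF.Reps L' (AF.dual B L') s := by
    refine ⟨fun k => ?_, fun b hb => ?_, fun k k' h => ?_⟩
    · rw [mD]
      intro i
      refine ⟨σ i * (k i : ℕ), ?_⟩
      rw [hs]
      have h' := hσ i
      rw [h']
      have : (m i : ℚ) ≠ 0 := by exact_mod_cast (hm i).ne'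
      push_cast
      field_simp
    · choose n hn using (mD b).1 hb
      -- k i = σ n mod
      refine ⟨fun i => ⟨((σ i * n i) % (2 * (m i:ℤ))).toNat, ?_⟩, ?_⟩
      · have h0 : (0:ℤ) < 2 * (m i:ℤ) := by exact_mod_cast hap i
        have h1 := Int.emod_nonneg (σ i * n i) h0.ne'
        have h2 := Int.emod_lt_of_pos (σ i * n i) h0
        omega
      · rw [mL]
        intro i
        have h0 : (0:ℤ) < 2 * (m i:ℤ) := by exact_mod_cast hap i
        have h1 := Int.emod_nonneg (σ i * n i) h0.ne'
        refine ⟨(σ i * n i) / (2 * (m i:ℤ)), ?_⟩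
        rw [map_sub, Finsupp.sub_apply, hs]
        have h3 : (((((σ i * n i) % (2 * (m i:ℤ))).toNat : ℕ)) : ℚ) = (((σ i * n i) % (2 * (m i:ℤ)) : ℤ) : ℚ) := by
          exact_mod_cast congrArg (Int.cast (R := ℚ)) (Int.toNat_of_nonneg h1)
        have h4 := Int.emod_add_mul_ediv (σ i * n i) (2 * (m i:ℤ))
        have h4' : (((σ i * n i) % (2 * (m i:ℤ)) : ℤ) : ℚ) + (2 * (m i:ℚ)) * (((σ i * n i) / (2 * (m i:ℤ)) : ℤ) : ℚ) = σ i * n i := by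
          have := congrArg (Int.cast (R := ℚ)) h4
          push_cast at this ⊢
          exact this
        have h' := hσ i
        have hσσ : (σ i : ℚ) * σ i = 1 := by rcases hσ1 i with h | h <;> rw [h] <;> norm_num
        have hb' : e.repr b i = σ i * n i / (2 * (m i:ℚ)) := by
          rw [eq_div_iff (haq i), ← hn, h']
          linear_combination (- (2 * (m i:ℚ)) * e.repr b i) * hσσ
        change e.repr b i - (((((σ i * n i) % (2 * (m i:ℤ))).toNat : ℕ)) : ℚ) / (2 * (m i:ℚ)) = _
        rw [h3, hb', ← sub_div, div_eq_iff (haq i)]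
        linear_combination -h4'
    · funext i
      obtain ⟨n, hn⟩ := (mL _).1 h i
      rw [map_sub, Finsupp.sub_apply, hs, hs, ← sub_div, div_eq_iff (haq i)] at hn
      have hn' : ((k i : ℕ) : ℤ) - (k' i : ℕ) = n * (2 * (m i:ℤ)) := by
        have : ((((k i : ℕ) : ℤ) - (k' i : ℕ) : ℤ) : ℚ) = ((n * (2 * (m i:ℤ)) : ℤ) : ℚ) := by push_cast; exact hn
        exact_mod_cast this
      have l1 := (k i).2
      have l2 := (k' i).2
      apply Fin.ext
      have h0 : (0:ℤ) < 2 * (m i:ℤ) := by exact_mod_cast hap i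
      have l1' : ((k i : ℕ):ℤ) < 2 * m i := by exact_mod_cast l1
      have l2' : ((k' i : ℕ):ℤ) < 2 * m i := by exact_mod_cast l2
      have l3 : (0:ℤ) ≤ (k i : ℕ) := by positivity
      have l4 : (0:ℤ) ≤ (k' i : ℕ) := by positivity
      have : n = 0 := by
        by_contra hne
        rcases lt_or_gt_of_ne hne with h | h
        · have : n ≤ -1 := by omega
          nlinarith
        · have : 1 ≤ n := by omega
          nlinarith
      rw [this] at hn'; omega
  have hI : AF.Inv L' (AF.dual B L') (fun x => AF.e (B x x)) := by
    intro b hb y hy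
    simp only
    rw [AF.q_add hB]
    obtain ⟨n, hn⟩ := hb y hy
    choose k hk using (mL y).1 hy
    have : B y y = ((∑ i, a i * k i * k i : ℤ) : ℚ) := by
      rw [Br]; push_cast
      exact Finset.sum_congr rfl fun i _ => by rw [hea, hk]
    rw [hn, this, AF.e_int, AF.e_int, mul_one, mul_one]
  refine ⟨?_, ?_⟩
  · rw [← AF.reps_card hr]
    have : ∀ i, NeZero (2 * m i) := fun i => ⟨(hap i).ne'⟩
    exact Nat.card_ne_zero.mpr ⟨inferInstance, inferInstance⟩
  · rw [AF.gs_eq hI hr]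
    choose c hc hcs using fun i => AF.one_dim (m i) (hm i) (σ i) (hσ1 i)
    refine ⟨∏ i, c i, Finset.prod_pos fun i _ => hc i, ?_⟩
    push_cast
    rw [← Finset.prod_mul_distrib]
    have : ∀ k, AF.e (B (s k) (s k)) = ∏ i, AF.e ((a i:ℚ) * (((k i : ℕ):ℚ) / (2 * (m i:ℚ)))^2) := by
      intro k
      rw [Br, AF.e_sum]
      refine Finset.prod_congr rfl fun i _ => ?_
      rw [hs, hea]; congr 1; ring
    rw [Finset.sum_congr rfl (fun k _ => this k)]
    have h2 := Finset.prod_univ_sum (fun i => (Finset.univ : Finset (Fin (2 * m i)))) (fun i r => AF.e ((a i:ℚ) * (((r : ℕ):ℚ) / (2 * (m i:ℚ)))^2))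
    rw [Fintype.piFinset_univ] at h2
    rw [← h2]
    refine Finset.prod_congr rfl fun i _ => ?_
    rw [hea, hσ, hcs i]

/-- Milgram-type phase formula -/
lemma AF.milgram {B : V →ₗ[ℚ] V →ₗ[ℚ] ℚ} (hB : ∀ x y, B x y = B y x) (e : Module.Basis ι ℚ V)
    (ho : ∀ i j, i ≠ j → B (e i) (e j) = 0) (hnz : ∀ i, B (e i) (e i) ≠ 0)
    (L : AddSubgroup V) (hLi : ∀ x ∈ L, ∃ n : ℤ, B x x = n) (hLm : ∀ x : V, ∃ N : ℕ, N ≠ 0 ∧ N • x ∈ L) :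
    L.relIndex (AF.dual B L) ≠ 0 ∧ ∃ c : ℝ, 0 < c ∧
      AF.gs L (AF.dual B L) (fun x => AF.e (B x x)) = c * ∏ i, AF.phase (B (e i) (e i)) := by
  choose N hN hNL using fun i => hLm (e i)
  have hNq : ∀ i, (N i : ℚ) ≠ 0 := fun i => by exact_mod_cast hN i
  let e' : Module.Basis ι ℚ V := e.isUnitSMul (w := fun i => (N i : ℚ)) (fun i => (hNq i).isUnit)
  have he' : ∀ i, e' i = (N i : ℚ) • e i := fun i => by simp [e', Module.Basis.isUnitSMul_apply]
  have he'L : ∀ i, e' i ∈ L := fun i => by rw [he', Nat.cast_smul_eq_nsmul]; exact hNL i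
  choose a ha using fun i => hLi (e' i) (he'L i)
  have hea : ∀ i, B (e' i) (e' i) = (N i:ℚ)^2 * B (e i) (e i) := fun i => by
    rw [he']; simp only [map_smul, LinearMap.smul_apply, smul_eq_mul]; ring
  have hph : ∀ i, AF.phase (B (e' i) (e' i)) = AF.phase (B (e i) (e i)) := fun i => by
    unfold AF.phase
    rw [hea]
    have : 0 < (N i:ℚ)^2 := by have := hNq i; positivity
    simp only [mul_pos_iff_of_pos_left this]
  set L' : AddSubgroup V := (Submodule.span ℤ (Set.range e')).toAddSubgroup with hL'
  obtain ⟨hf, c, hc, hg⟩ := AF.milgram_diag hB e' (fun i j hij => by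
      rw [he', he']; simp [ho i j hij]) a (fun i h => by
      have h1 := ha i
      rw [h, hea] at h1
      have := hNq i
      have := hnz i
      simp_all) ha L' hL'
  have hle : L' ≤ L := by
    have : Submodule.span ℤ (Set.range e') ≤ AddSubgroup.toIntSubmodule L := by
      rw [Submodule.span_le]; rintro _ ⟨i, rfl⟩; exact he'L i
    exact this
  have hLD : L ≤ AF.dual B L := by
    intro x hx y hy
    obtain ⟨n, hn⟩ := hLi _ (L.add_mem hx hy)
    obtain ⟨m, hm⟩ := hLi _ hx
    obtain ⟨k, hk⟩ := hLi _ hy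
    refine ⟨n - m - k, ?_⟩
    push_cast
    rw [← hn, ← hm, ← hk]
    simp only [map_add, LinearMap.add_apply]
    rw [hB y x]; ring
  have hDD : AF.dual B L ≤ AF.dual B L' := fun x hx y hy => hx y (hle hy)
  obtain ⟨h0, h1⟩ := AF.gs_sub hle hLD hDD (fun x => AF.e (B x x)) (fun x y => AF.e (2 * B x y))
    (AF.q_add hB) (fun x hx => (AF.e_eq_one_iff _).2 (hLi x hx))
    (fun x y y' => by rw [map_add, mul_add, AF.e_add]) (fun x hx y hy => (AF.e_eq_one_iff _).2 (hx y hy))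
    (fun x _ => by rw [AF.mem_dual]; exact forall₂_congr fun y _ => (AF.e_eq_one_iff _).symm) hf
  constructor
  · have h2 := AddSubgroup.relIndex_mul_relIndex L' L (AF.dual B L') hle (hLD.trans hDD)
    have h3 := AddSubgroup.relIndex_mul_relIndex L (AF.dual B L) (AF.dual B L') hLD hDD
    rw [← h2, ← h3] at hf
    exact left_ne_zero_of_mul (right_ne_zero_of_mul hf)
  · have h0' : (L'.relIndex L : ℝ) ≠ 0 := by exact_mod_cast h0
    have h0c : (L'.relIndex L : ℂ) ≠ 0 := by exact_mod_cast h0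
    refine ⟨c / (L'.relIndex L : ℝ), div_pos hc (by positivity), ?_⟩
    rw [h1] at hg
    rw [Finset.prod_congr rfl (fun i _ => hph i)] at hg
    push_cast
    field_simp
    linear_combination hg
end
end

section
open Filter Topology Complex Real NumberField NumberField.InfinitePlace

section
variable {K : Type*} [Field K] [NumberField K]

noncomputable def AF.Tf (ω : K) : K →ₗ[ℚ] K →ₗ[ℚ] ℚ :=
  (LinearMap.mul ℚ K).compr₂ ((Algebra.trace ℚ K).comp (LinearMap.mulLeft ℚ ω))

lemma AF.Tf_apply (ω x y : K) : AF.Tf ω x y = Algebra.trace ℚ K (ω * (x * y)) := rfl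

lemma AF.Tf_symm (ω x y : K) : AF.Tf ω x y = AF.Tf ω y x := by
  rw [AF.Tf_apply, AF.Tf_apply, mul_comm x y]

open scoped Classical in
noncomputable def AF.Tm : mixedEmbedding.mixedSpace K →ₗ[ℝ] ℝ where
  toFun x := ∑ w : {w : InfinitePlace K // w.IsReal}, x.1 w + ∑ w : {w : InfinitePlace K // w.IsComplex}, 2 * (x.2 w).re
  map_add' x y := by
    simp [Finset.sum_add_distrib, mul_add]; ring
  map_smul' r x := by
    simp only [Prod.smul_fst, Prod.smul_snd, Pi.smul_apply, smul_eq_mul, Complex.smul_re, RingHom.id_apply]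
    rw [mul_add, Finset.mul_sum, Finset.mul_sum]
    congr 1
    exact Finset.sum_congr rfl fun _ _ => by ring

lemma AF.Tm_emb (x : K) : AF.Tm (mixedEmbedding K x) = ((Algebra.trace ℚ K x : ℚ) : ℝ) := by
  classical
  have h := trace_eq_sum_embeddings (K := ℚ) (L := K) ℂ (x := x)
  have h2 := congrArg Complex.re h
  rw [Complex.re_sum] at h2
  have h3 : (((algebraMap ℚ ℂ) ((Algebra.trace ℚ K) x))).re = ((Algebra.trace ℚ K x : ℚ) : ℝ) := by
    simp
  rw [h3] at h2
  rw [h2]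
  have h4 : ∑ σ : K →ₐ[ℚ] ℂ, (σ x).re = ∑ φ : K →+* ℂ, (φ x).re := by
    rw [← Equiv.sum_comp (RingHom.equivRatAlgHom (R := K) (S := ℂ))]
    rfl
  rw [h4, ← Finset.univ.sum_fiberwise (fun φ => InfinitePlace.mk φ)]
  have h5 : ∀ w : InfinitePlace K, ∑ φ : K →+* ℂ with InfinitePlace.mk φ = w, (φ x).re = mult w * (w.embedding x).re := by
    intro w
    rw [← card_filter_mk_eq w, ← nsmul_eq_mul, ← Finset.sum_const]
    refine Finset.sum_congr rfl fun φ hφ => ?_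
    have hw : InfinitePlace.mk φ = w := (Finset.mem_filter.mp hφ).2
    rw [← mk_embedding w, mk_eq_iff] at hw
    rcases hw with h | h
    · rw [h]
    · rw [← h]; simp
  rw [Finset.sum_congr rfl (fun w _ => h5 w), sum_eq_sum_add_sum]
  unfold AF.Tm
  simp only [LinearMap.coe_mk, AddHom.coe_mk]
  congr 1
  · refine Finset.sum_congr rfl fun w _ => ?_
    rw [mixedEmbedding.mixedEmbedding_apply_isReal, mult_isReal, ← embedding_of_isReal_apply w.2]
    simp only [Nat.cast_one, one_mul, Complex.ofReal_re]
  · refine Finset.sum_congr rfl fun w _ => ?_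
    rw [mixedEmbedding.mixedEmbedding_apply_isComplex, mult_isComplex]
    simp

noncomputable def AF.Bm (u : mixedEmbedding.mixedSpace K) : LinearMap.BilinForm ℝ (mixedEmbedding.mixedSpace K) :=
  (LinearMap.mul ℝ (mixedEmbedding.mixedSpace K)).compr₂ (AF.Tm.comp (LinearMap.mulLeft ℝ u))

lemma AF.Bm_apply (u x y : mixedEmbedding.mixedSpace K) : AF.Bm u x y = AF.Tm (u * (x * y)) := rfl

noncomputable def AF.Qm (ω : K) : QuadraticForm ℝ (mixedEmbedding.mixedSpace K) :=
  LinearMap.BilinMap.toQuadraticMap (AF.Bm (mixedEmbedding K ω))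

lemma AF.Qm_apply (ω : K) (x) : AF.Qm ω x = AF.Tm (mixedEmbedding K ω * (x * x)) := rfl

lemma AF.sigPos_Qm (ω : K) (e : Module.Basis (Fin (Module.finrank ℚ K)) ℚ K)
    (ho : ∀ i j, i ≠ j → AF.Tf ω (e i) (e j) = 0) (hnz : ∀ i, AF.Tf ω (e i) (e i) ≠ 0) :
    (sigPos (AF.Qm ω)) = {i | 0 < AF.Tf ω (e i) (e i)}.ncard := by
  classical
  set v : Fin (Module.finrank ℚ K) → mixedEmbedding.mixedSpace K := fun i => mixedEmbedding K (e i)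
  have hv : ∀ i j, AF.Bm (mixedEmbedding K ω) (v i) (v j) = ((AF.Tf ω (e i) (e j) : ℚ) : ℝ) := by
    intro i j
    rw [AF.Bm_apply, ← map_mul, ← map_mul, AF.Tm_emb]; rfl
  have horth : (AF.Bm (mixedEmbedding K ω)).IsOrthoᵢ v := by
    intro i j hij
    change AF.Bm (mixedEmbedding K ω) (v i) (v j) = 0
    rw [hv, ho i j hij]; simp
  have hli : LinearIndependent ℝ v := by
    refine LinearMap.linearIndependent_of_isOrthoᵢ horth fun i => ?_
    rw [hv]; exact_mod_cast hnz i
  have hcard : Fintype.card (Fin (Module.finrank ℚ K)) = Module.finrank ℝ (mixedEmbedding.mixedSpace K) := by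
    rw [mixedEmbedding.finrank, Fintype.card_fin]
  have : Nonempty (Fin (Module.finrank ℚ K)) := ⟨⟨0, Module.finrank_pos⟩⟩
  let b := basisOfLinearIndependentOfCardEqFinrank hli hcard
  have hb : ∀ i, b i = v i := fun i => by simp [b]
  have heq : QuadraticMap.Equivalent (AF.Qm ω) (QuadraticMap.weightedSumSquares ℝ (fun i => ((AF.Tf ω (e i) (e i) : ℚ) : ℝ))) := by
    refine ⟨⟨b.equivFun, fun x => ?_⟩⟩
    rw [QuadraticMap.weightedSumSquares_apply]
    have hx := b.sum_equivFun x
    change ∑ i, ((AF.Tf ω (e i) (e i) : ℚ) : ℝ) • (b.equivFun x i * b.equivFun x i) = AF.Bm (mixedEmbedding K ω) x x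
    generalize b.equivFun x = c at hx ⊢
    rw [← hx]
    simp only [map_sum, LinearMap.sum_apply, map_smul, LinearMap.smul_apply, smul_eq_mul, hb, hv]
    refine Finset.sum_congr rfl fun i _ => ?_
    rw [Finset.sum_eq_single i]
    · ring
    · intro j _ hj; rw [ho j i hj]; simp
    · simp
  rw [QuadraticForm.sigPos_of_equiv_weightedSumSquares heq]
  congr 1
  ext i
  simp

lemma AF.sigPos_Qm_mul (ω α : K) (hα : α ≠ 0) (hpos : ∀ φ : K →+* ℝ, 0 < φ α) :
    (sigPos (AF.Qm (α * ω))) = (sigPos (AF.Qm ω)) := by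
  classical
  -- square root of α
  obtain ⟨t, ht⟩ : ∃ t : mixedEmbedding.mixedSpace K, t * t = mixedEmbedding K α := by
    have hc : ∀ w : {w : InfinitePlace K // w.IsComplex}, ∃ z : ℂ, z * z = w.1.embedding α := by
      intro w
      obtain ⟨z, hz⟩ := IsAlgClosed.exists_eq_mul_self (w.1.embedding α)
      exact ⟨z, hz.symm⟩
    choose z hz using hc
    refine ⟨⟨fun w => Real.sqrt (embedding_of_isReal w.2 α), z⟩, ?_⟩
    ext w
    · simp only [Prod.fst_mul, Pi.mul_apply]
      rw [Real.mul_self_sqrt (hpos _).le, mixedEmbedding.mixedEmbedding_apply_isReal]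
    · simp only [Prod.snd_mul, Pi.mul_apply]
      rw [hz, mixedEmbedding.mixedEmbedding_apply_isComplex]
  have htu : IsUnit t := by
    have : IsUnit (t * t) := by
      rw [ht]; exact (hα.isUnit).map _
    exact isUnit_of_mul_isUnit_left this
  obtain ⟨u, hu⟩ := htu
  have : QuadraticMap.Equivalent (AF.Qm (α * ω)) (AF.Qm ω) := by
    refine ⟨⟨LinearEquiv.ofBijective (LinearMap.mulLeft ℝ t) ?_, fun x => ?_⟩⟩
    · rw [← hu]
      exact ⟨fun x y h => by simpa using h, fun y => ⟨(u⁻¹ : _) * y, by simp⟩⟩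
    · change AF.Qm ω (t * x) = _
      rw [AF.Qm_apply, AF.Qm_apply, (mixedEmbedding K).map_mul, ← ht]
      congr 1; ring
  exact this.sigPos_eq

noncomputable def AF.kap (ω : K) : ℂ := cexp (I * π / 4) ^ (sigPos (AF.Qm ω)) *
  cexp (-(I * π / 4)) ^ (Module.finrank ℚ K - (sigPos (AF.Qm ω)))

lemma AF.kap_ne_zero (ω : K) : AF.kap ω ≠ 0 := by
  unfold AF.kap
  exact mul_ne_zero (pow_ne_zero _ (Complex.exp_ne_zero _)) (pow_ne_zero _ (Complex.exp_ne_zero _))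

lemma AF.kap_mul (ω α : K) (hα : α ≠ 0) (hpos : ∀ φ : K →+* ℝ, 0 < φ α) : AF.kap (α * ω) = AF.kap ω := by
  unfold AF.kap
  rw [AF.sigPos_Qm_mul ω α hα hpos]

lemma AF.tr_nondeg (ω : K) (hω : ω ≠ 0) {x : K} (h : ∀ y, AF.Tf ω x y = 0) : x = 0 := by
  by_contra hx
  have h1 := h ((ω * x)⁻¹)
  rw [AF.Tf_apply, ← mul_assoc, mul_inv_cancel₀ (mul_ne_zero hω hx)] at h1
  have : Algebra.trace ℚ K (algebraMap ℚ K 1) = Module.finrank ℚ K • (1:ℚ) := Algebra.trace_algebraMap 1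
  rw [map_one, h1] at this
  have h2 : 0 < Module.finrank ℚ K := Module.finrank_pos
  rw [nsmul_eq_mul, mul_one] at this
  have h3 : Module.finrank ℚ K = 0 := by exact_mod_cast this.symm
  omega

/-- Phase of trace-form Gauss sums -/
lemma AF.milgram_tr (ω : K) (hω : ω ≠ 0) (L : AddSubgroup K) (hLi : ∀ x ∈ L, ∃ n : ℤ, AF.Tf ω x x = n)
    (hLm : ∀ x : K, ∃ N : ℕ, N ≠ 0 ∧ N • x ∈ L) :
    L.relIndex (AF.dual (AF.Tf ω) L) ≠ 0 ∧ ∃ c : ℝ, 0 < c ∧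
      AF.gs L (AF.dual (AF.Tf ω) L) (fun x => AF.e (AF.Tf ω x x)) = c * AF.kap ω := by
  classical
  have : Invertible (2:ℚ) := invertibleOfNonzero (by norm_num)
  obtain ⟨e, he⟩ := LinearMap.BilinForm.exists_orthogonal_basis (B := AF.Tf ω) ⟨fun x y => AF.Tf_symm ω x y⟩
  have ho : ∀ i j, i ≠ j → AF.Tf ω (e i) (e j) = 0 := fun i j hij => he hij
  have hnz : ∀ i, AF.Tf ω (e i) (e i) ≠ 0 := by
    intro i h
    refine e.ne_zero i (AF.tr_nondeg ω hω fun y => ?_)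
    rw [AF.B_repr e ho]
    refine Finset.sum_eq_zero fun j _ => ?_
    by_cases hij : i = j
    · rw [← hij, h]; simp
    · simp [hij]
  have := AF.milgram (AF.Tf_symm ω) e ho hnz L hLi hLm
  convert! this using 8
  unfold AF.phase AF.kap
  rw [Finset.prod_ite, Finset.prod_const, Finset.prod_const, AF.sigPos_Qm ω e ho hnz]
  have h1 : {i | 0 < AF.Tf ω (e i) (e i)}.ncard = (Finset.univ.filter fun i => 0 < AF.Tf ω (e i) (e i)).card := by
    rw [← Set.ncard_coe_finset]; congr 1; ext; simp
  rw [h1]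
  congr 2
  have h2 := Finset.card_filter_add_card_filter_not (s := (Finset.univ : Finset (Fin (Module.finrank ℚ K)))) (fun i => 0 < AF.Tf ω (e i) (e i))
  rw [Finset.card_univ, Fintype.card_fin] at h2
  omega
end
end

section
open NumberField
open scoped nonZeroDivisors

section
set_option linter.unusedSectionVars false
variable {K : Type*} [Field K] [NumberField K]

local notation "F" => FractionalIdeal (𝓞 K)⁰ K
local notation "sp" => FractionalIdeal.spanSingleton (𝓞 K)⁰

def AF.as (I : FractionalIdeal (𝓞 K)⁰ K) : AddSubgroup K := (I : Submodule (𝓞 K) K).toAddSubgroup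

lemma AF.mem_as {I : FractionalIdeal (𝓞 K)⁰ K} {x : K} : x ∈ AF.as I ↔ x ∈ I := Iff.rfl

lemma AF.as_mono {I J : FractionalIdeal (𝓞 K)⁰ K} (h : I ≤ J) : AF.as I ≤ AF.as J := fun _ hx => h hx

lemma AF.as_sup (I J : FractionalIdeal (𝓞 K)⁰ K) : AF.as (I + J) = AF.as I ⊔ AF.as J := by
  apply le_antisymm
  · intro x hx
    rw [AF.mem_as, ← FractionalIdeal.mem_coe, FractionalIdeal.coe_add, Submodule.add_eq_sup, Submodule.mem_sup] at hx
    obtain ⟨y, hy, z, hz, rfl⟩ := hx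
    exact add_mem (AddSubgroup.mem_sup_left hy) (AddSubgroup.mem_sup_right hz)
  · rw [sup_le_iff, ← FractionalIdeal.sup_eq_add]
    exact ⟨AF.as_mono le_sup_left, AF.as_mono le_sup_right⟩

noncomputable def AF.Cd (K : Type*) [Field K] [NumberField K] : FractionalIdeal (𝓞 K)⁰ K := FractionalIdeal.dual ℤ ℚ 1

lemma AF.mem_Cd {x : K} : x ∈ AF.Cd K ↔ ∀ a : 𝓞 K, ∃ n : ℤ, Algebra.trace ℚ K (x * a) = n := by
  unfold AF.Cd
  rw [FractionalIdeal.mem_dual (one_ne_zero : (1 : F) ≠ 0)]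
  constructor
  · intro h a
    obtain ⟨n, hn⟩ := h a (FractionalIdeal.coe_mem_one _ a)
    exact ⟨n, by rw [← Algebra.traceForm_apply, ← hn]; simp⟩
  · intro h a ha
    obtain ⟨a, rfl⟩ := (FractionalIdeal.mem_one_iff _).1 ha
    obtain ⟨n, hn⟩ := h a
    exact ⟨n, by rw [Algebra.traceForm_apply]; simpa using hn.symm⟩

lemma AF.Cd_ne_zero : AF.Cd K ≠ 0 := FractionalIdeal.dual_ne_zero ℤ ℚ one_ne_zero

lemma AF.Tf_int {ω : K} {I J : F} (h : sp ω * (I * J) ≤ AF.Cd K) {x y : K} (hx : x ∈ I) (hy : y ∈ J) :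
    ∃ n : ℤ, AF.Tf ω x y = n := by
  have : ω * (x * y) ∈ AF.Cd K := h (FractionalIdeal.mul_mem_mul (FractionalIdeal.mem_spanSingleton_self _ _) (FractionalIdeal.mul_mem_mul hx hy))
  obtain ⟨n, hn⟩ := AF.mem_Cd.1 this 1
  exact ⟨n, by rw [AF.Tf_apply, ← hn]; simp⟩

lemma AF.sp_mul (x y : K) : sp (x * y) = sp x * sp y := (FractionalIdeal.spanSingleton_mul_spanSingleton x y).symm

lemma AF.sp_ne {x : K} (h : x ≠ 0) : sp x ≠ 0 := by rwa [Ne, FractionalIdeal.spanSingleton_eq_zero_iff]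

lemma AF.smul_mem' {I : F} (a : 𝓞 K) {x : K} (hx : x ∈ I) : (a:K) * x ∈ I := by
  have := (I : Submodule (𝓞 K) K).smul_mem a hx
  rwa [Algebra.smul_def] at this

lemma AF.dual_eq {ω : K} (hω : ω ≠ 0) {b J : F} (hb : b ≠ 0) (hJ : J ≠ 0) (h : sp ω * b ^ 2 = J * AF.Cd K) :
    AF.dual (AF.Tf ω) (AF.as b) = AF.as (b / (sp 2 * J)) := by
  have h2 : sp (2:K) ≠ 0 := AF.sp_ne two_ne_zero
  have hω' := AF.sp_ne hω
  have e : b / (sp 2 * J) = AF.Cd K / (sp (2 * ω) * b) := by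
    rw [AF.sp_mul]
    field_simp
    rw [mul_comm, h]
    
  ext x
  rw [e, AF.mem_dual, AF.mem_as, FractionalIdeal.mem_div_iff_of_ne_zero (by rw [AF.sp_mul]; exact mul_ne_zero (mul_ne_zero h2 hω') hb)]
  constructor
  · intro hx y hy
    rw [FractionalIdeal.mem_singleton_mul] at hy
    obtain ⟨z, hz, rfl⟩ := hy
    rw [AF.mem_Cd]
    intro a
    obtain ⟨n, hn⟩ := hx (a * z) (AF.smul_mem' a hz)
    refine ⟨n, ?_⟩
    rw [← hn, AF.Tf_apply]
    rw [show x * (2 * ω * z) * (a:K) = (2:ℚ) • (ω * (x * (a * z))) by rw [Algebra.smul_def]; simp; ring, map_smul, smul_eq_mul]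
  · intro hx y hy
    obtain ⟨n, hn⟩ := AF.mem_Cd.1 (hx (2 * ω * y) (FractionalIdeal.mul_mem_mul (FractionalIdeal.mem_spanSingleton_self _ _) hy)) 1
    refine ⟨n, ?_⟩
    rw [← hn, AF.Tf_apply, show x * (2 * ω * y) * ((1:𝓞 K):K) = (2:ℚ) • (ω * (x * y)) by rw [Algebra.smul_def]; simp; ring, map_smul, smul_eq_mul]



lemma AF.multiples {b : F} (hb : b ≠ 0) (x : K) : ∃ N : ℕ, N ≠ 0 ∧ N • x ∈ AF.as b := by
  obtain ⟨y, hyb, hy⟩ : ∃ y ∈ b, y ≠ 0 := by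
    by_contra! h
    exact hb (FractionalIdeal.eq_zero_iff.2 h)
  have halg : IsAlgebraic ℤ (x / y) := (IsFractionRing.isAlgebraic_iff ℤ ℚ K).2 (Algebra.IsAlgebraic.isAlgebraic (x / y))
  obtain ⟨n, hn, hi⟩ := halg.exists_integral_multiple
  refine ⟨n.natAbs, Int.natAbs_ne_zero.2 hn, ?_⟩
  have h1 : n • x ∈ AF.as b := by
    have := AF.smul_mem' (⟨_, hi⟩ : 𝓞 K) hyb
    rw [AF.mem_as]
    convert this using 1
    change n • x = n • (x / y) * y
    rw [smul_mul_assoc, div_mul_cancel₀ _ hy]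
  rw [← natCast_zsmul]
  rcases Int.natAbs_eq n with h | h
  · rwa [← h]
  · rw [show (n.natAbs : ℤ) = -n by omega, neg_zsmul]
    exact neg_mem h1

lemma AF.milgram_id {ω : K} (hω : ω ≠ 0) {b J : F} (hb : b ≠ 0) (hJ : J ≠ 0) (hJ1 : J ≤ 1)
    (h : sp ω * b ^ 2 = J * AF.Cd K) : (AF.as b).relIndex (AF.as (b / (sp 2 * J))) ≠ 0 ∧ ∃ c : ℝ, 0 < c ∧
      AF.gs (AF.as b) (AF.as (b / (sp 2 * J))) (fun x => AF.e (AF.Tf ω x x)) = c * AF.kap ω := by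
  rw [← AF.dual_eq hω hb hJ h]
  refine AF.milgram_tr ω hω _ (fun x hx => ?_) (AF.multiples hb)
  refine AF.Tf_int (I := b) (J := b) ?_ hx hx
  rw [← pow_two, h]
  calc J * AF.Cd K ≤ 1 * AF.Cd K := by gcongr
    _ = _ := one_mul _


lemma AF.sp_le {x : K} {I : F} : sp x ≤ I ↔ x ∈ I := FractionalIdeal.spanSingleton_le_iff_mem

lemma AF.sp_int_le_one (a : 𝓞 K) : sp (a:K) ≤ 1 := AF.sp_le.2 (FractionalIdeal.coe_mem_one _ a)

lemma AF.div_le_div {b M N : F} (hM : M ≠ 0) (hN : N ≠ 0) (h : N ≤ M) : b / M ≤ b / N := by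
  intro x hx
  rw [FractionalIdeal.mem_div_iff_of_ne_zero hN]
  rw [FractionalIdeal.mem_div_iff_of_ne_zero hM] at hx
  exact fun y hy => hx y (h hy)

lemma AF.exists_ne_zero {b : F} (hb : b ≠ 0) : ∃ y ∈ b, y ≠ 0 := by
  by_contra! h
  exact hb (FractionalIdeal.eq_zero_iff.2 h)

lemma AF.relIndex_as {b M : F} (hb : b ≠ 0) (hM : M ≠ 0) (hM1 : M ≤ 1) : (AF.as b).relIndex (AF.as (b / M)) ≠ 0 := by
  have hC : AF.Cd K ≠ 0 := AF.Cd_ne_zero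
  obtain ⟨ω, hy, hω⟩ := AF.exists_ne_zero (mul_ne_zero (div_ne_zero hC (pow_ne_zero 2 hb)) hM : (AF.Cd K / b ^ 2 * M : F) ≠ 0)
  have h0 := AF.sp_ne hω
  set J : F := sp ω * b ^ 2 / AF.Cd K with hJ
  have hJ0 : J ≠ 0 := by positivity
  have hJM : J ≤ M := by
    calc J ≤ (AF.Cd K / b ^ 2 * M) * b ^ 2 / AF.Cd K := by
          rw [hJ, div_eq_mul_inv, div_eq_mul_inv _ (AF.Cd K)]; gcongr; exact AF.sp_le.2 hy
      _ = M := by field_simp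
  have := (AF.milgram_id hω hb hJ0 (hJM.trans hM1) (by rw [hJ]; field_simp)).1
  refine mt (AddSubgroup.relIndex_eq_zero_of_le_right (AF.as_mono (AF.div_le_div hM (mul_ne_zero (AF.sp_ne two_ne_zero) hJ0) ?_))) this
  calc sp (2:K) * J ≤ 1 * M := by gcongr; exact mod_cast AF.sp_int_le_one (2 : 𝓞 K)
    _ = M := one_mul _

-- coprime fractional ideals : M + N = 1
lemma AF.div_sup {b M N : F} (hM : M ≠ 0) (hN : N ≠ 0) (h : M + N = 1) : AF.as (b / (M * N)) = AF.as (b / M) ⊔ AF.as (b / N) := by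
  rw [← AF.as_sup]
  congr 1
  have : b / M + b / N = b / (M * N) * (M + N) := by field_simp; ring
  rw [this, h, mul_one]

lemma AF.div_inf {b M N : F} (hM : M ≠ 0) (hN : N ≠ 0) (hM1 : M ≤ 1) (hN1 : N ≤ 1) (h : M + N = 1) : AF.as b = AF.as (b / M) ⊓ AF.as (b / N) := by
  apply le_antisymm
  · have : ∀ M : F, M ≠ 0 → M ≤ 1 → AF.as b ≤ AF.as (b / M) := fun M hM hM1 => by
      have := AF.as_mono (AF.div_le_div (b := b) one_ne_zero hM hM1)
      rwa [_root_.div_one] at this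
    exact le_inf (this M hM hM1) (this N hN hN1)
  · rintro x ⟨hx, hy⟩
    replace hx := (FractionalIdeal.mem_div_iff_of_ne_zero hM).1 (AF.mem_as.1 hx)
    replace hy := (FractionalIdeal.mem_div_iff_of_ne_zero hN).1 (AF.mem_as.1 hy)
    have h1 : (1:K) ∈ M + N := by rw [h]; exact FractionalIdeal.one_mem_one _
    rw [← FractionalIdeal.mem_coe, FractionalIdeal.coe_add, Submodule.add_eq_sup, Submodule.mem_sup] at h1
    obtain ⟨m, hm, n, hn, e⟩ := h1
    have := add_mem (S := Submodule (𝓞 K) K) (s := (b : Submodule (𝓞 K) K)) (hx m hm) (hy n hn)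
    rw [← mul_add, e, mul_one] at this
    exact this

noncomputable def AF.G (b M : F) (ω : K) : ℂ := AF.gs (AF.as b) (AF.as (b / M)) (fun x => AF.e (AF.Tf ω x x))

lemma AF.e_Tf_add {ω : K} {I J : F} (h : sp (2 * ω) * (I * J) ≤ AF.Cd K) {x y : K} (hx : x ∈ I) (hy : y ∈ J) :
    AF.e (AF.Tf ω (x + y) (x + y)) = AF.e (AF.Tf ω x x) * AF.e (AF.Tf ω y y) := by
  obtain ⟨n, hn⟩ := AF.Tf_int h hx hy
  rw [AF.q_add (AF.Tf_symm ω)]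
  have : 2 * AF.Tf ω x y = n := by
    rw [← hn, AF.Tf_apply, AF.Tf_apply, show 2 * ω * (x * y) = (2:ℚ) • (ω * (x * y)) by rw [Algebra.smul_def]; simp; ring, map_smul, smul_eq_mul]
  rw [this, AF.e_int, mul_one]

lemma AF.inv_of {ω : K} {b B : F} (h1 : sp ω * b ^ 2 ≤ AF.Cd K) (h2 : sp (2 * ω) * (B * b) ≤ AF.Cd K) :
    AF.Inv (AF.as b) (AF.as B) (fun x => AF.e (AF.Tf ω x x)) := by
  intro x hx y hy
  dsimp only
  rw [AF.e_Tf_add h2 hx hy]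
  obtain ⟨n, hn⟩ := AF.Tf_int (I := b) (J := b) (by rwa [← pow_two]) hy hy
  rw [hn, AF.e_int, mul_one]

-- multiplicativity
lemma AF.G_mul {ω : K} {b M N : F} (hb : b ≠ 0) (hM : M ≠ 0) (hN : N ≠ 0) (hM1 : M ≤ 1) (hN1 : N ≤ 1) (h : M + N = 1)
    (h1 : sp ω * b ^ 2 ≤ AF.Cd K) (h2 : sp (2 * ω) * b ^ 2 ≤ M * N * AF.Cd K) :
    AF.G b (M * N) ω = AF.G b M ω * AF.G b N ω := by
  have hMN : M * N ≠ 0 := mul_ne_zero hM hN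
  refine AF.gs_g2 (AF.div_inf hM hN hM1 hN1 h) (AF.div_sup hM hN h) (AF.inv_of h1 ?_) ?_ (AF.relIndex_as hb hM hM1) (AF.relIndex_as hb hN hN1)
  · calc sp (2 * ω) * (b / (M * N) * b) = (sp (2 * ω) * b ^ 2) * (M * N)⁻¹ := by rw [div_eq_mul_inv]; ring
      _ ≤ (M * N * AF.Cd K) * (M * N)⁻¹ := by gcongr
      _ = _ := by field_simp
  · intro x hx y hy
    refine AF.e_Tf_add (I := b / M) (J := b / N) ?_ hx hy
    calc sp (2 * ω) * (b / M * (b / N)) = (sp (2 * ω) * b ^ 2) * (M * N)⁻¹ := by field_simp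
      _ ≤ (M * N * AF.Cd K) * (M * N)⁻¹ := by gcongr
      _ = _ := by field_simp

-- change of lattice
lemma AF.G_shift {ω : K} {b M a : F} (hb : b ≠ 0) (hM : M ≠ 0) (ha : a ≠ 0) (hM1 : M ≤ 1) (ha1 : a ≤ 1) (h : M + a = 1)
    (h1 : sp ω * b ^ 2 ≤ a ^ 2 * AF.Cd K) (h2 : sp (2 * ω) * b ^ 2 ≤ a ^ 2 * M * AF.Cd K) :
    AF.G b M ω = AF.G (b / a) M ω := by
  have e : b / a / M = b / (M * a) := by field_simp
  unfold AF.G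
  rw [e]
  refine AF.gs_g3 (AF.div_inf hM ha hM1 ha1 h) (AF.div_sup hM ha h) (AF.inv_of ?_ ?_) (AF.relIndex_as hb hM hM1)
  · calc sp ω * (b / a) ^ 2 = (sp ω * b ^ 2) * (a ^ 2)⁻¹ := by field_simp
      _ ≤ (a ^ 2 * AF.Cd K) * (a ^ 2)⁻¹ := by gcongr
      _ = _ := by field_simp
  · calc sp (2 * ω) * (b / (M * a) * (b / a)) = (sp (2 * ω) * b ^ 2) * (a ^ 2 * M)⁻¹ := by field_simp
      _ ≤ (a ^ 2 * M * AF.Cd K) * (a ^ 2 * M)⁻¹ := by gcongr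
      _ = _ := by field_simp
end
end

section
open NumberField
open scoped nonZeroDivisors

section
set_option linter.unusedSectionVars false

lemma AF.gauss_ff {k : Type*} [Field k] [Fintype k] [DecidableEq k] (hk : ringChar k ≠ 2) (Ψ : AddChar k ℂ) (hΨ : Ψ ≠ 1) {a : k} (ha : a ≠ 0) :
    ∑ r, Ψ (a * r ^ 2) = quadraticChar k a * ∑ r, Ψ (r ^ 2) := by
  have key : ∀ g : k → ℂ, ∑ r, g (r ^ 2) = ∑ t, (quadraticChar k t + 1) * g t := by
    intro g
    rw [← Finset.sum_fiberwise (s := Finset.univ) (g := fun r : k => r ^ 2)]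
    refine Finset.sum_congr rfl fun t _ => ?_
    rw [Finset.sum_congr rfl (g := fun _ => g t)]
    · rw [Finset.sum_const, nsmul_eq_mul]
      congr 1
      have := quadraticChar_card_sqrts hk t
      rw [show ((quadraticChar k t : ℂ) + 1) = ((quadraticChar k t + 1 : ℤ) : ℂ) by push_cast; rfl, ← this]
      rw [Int.cast_natCast]
      congr 2
      ext r; simp
    · intro r hr
      rw [(Finset.mem_filter.1 hr).2]
  have hsum : ∀ c : k, c ≠ 0 → ∑ t, Ψ (c * t) = 0 := by
    intro c hc
    rw [← (AddChar.sum_eq_zero_of_ne_one hΨ)]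
    exact Fintype.sum_equiv (Equiv.mulLeft₀ c hc) _ _ fun t => rfl
  rw [key (fun t => Ψ (a * t)), key (fun t => Ψ t)]
  simp only [add_mul, one_mul, Finset.sum_add_distrib, hsum a ha]
  have h1 := hsum 1 one_ne_zero
  simp only [one_mul] at h1
  rw [h1, add_zero, add_zero, Finset.mul_sum]
  rw [← Equiv.sum_comp (Equiv.mulLeft₀ a ha) (fun t => ((quadraticChar k a : ℤ):ℂ) * (((quadraticChar k t : ℤ) : ℂ) * Ψ t))]
  refine Finset.sum_congr rfl fun t _ => ?_
  change _ = _ * (((quadraticChar k (a * t) : ℤ) : ℂ) * Ψ (a * t))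
  have hm : quadraticChar k (a * t) = quadraticChar k a * quadraticChar k t := map_mul _ _ _
  rw [hm]
  have := quadraticChar_sq_one ha
  have h2 : ((quadraticChar k a : ℤ) : ℂ) ^ 2 = 1 := by exact_mod_cast this
  push_cast
  linear_combination (-(quadraticChar k t : ℂ) * Ψ (a * t)) * h2

variable {K : Type*} [Field K] [NumberField K]

local notation "F" => FractionalIdeal (𝓞 K)⁰ K
local notation "sp" => FractionalIdeal.spanSingleton (𝓞 K)⁰
local notation "P" => IsDedekindDomain.HeightOneSpectrum (𝓞 K)

open Classical in
noncomputable def AF.chi (v : IsDedekindDomain.HeightOneSpectrum (𝓞 K)) (α : 𝓞 K) : ℤ :=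
  if ∃ r : 𝓞 K, r ^ 2 - α ∈ v.asIdeal then 1 else -1

lemma AF.v_ne (v : P) : (v.asIdeal : F) ≠ 0 := by
  simpa using v.ne_bot

lemma AF.v_le (v : P) : (v.asIdeal : F) ≤ 1 := FractionalIdeal.coeIdeal_le_one

lemma AF.mem_v (v : P) (a : 𝓞 K) : (a:K) ∈ (v.asIdeal : F) ↔ a ∈ v.asIdeal := by
  rw [FractionalIdeal.mem_coeIdeal]
  constructor
  · rintro ⟨x, hx, h⟩
    rwa [← RingOfIntegers.coe_injective h]
  · exact fun h => ⟨a, h, rfl⟩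

lemma AF.G_chi {ω : K} {b J : F} (hb : b ≠ 0) (h : sp ω * b ^ 2 = J * AF.Cd K) (v : P) (h2v : (2 : 𝓞 K) ∉ v.asIdeal)
    (hJ : J ≤ v.asIdeal) (hJ2 : ¬ J ≤ (v.asIdeal : F) ^ 2) (α : 𝓞 K) (hα : α ∉ v.asIdeal) :
    AF.G b v.asIdeal (α * ω) = AF.chi v α * AF.G b v.asIdeal ω := by
  classical
  have hv := AF.v_ne v
  have hv1 := AF.v_le v
  have hC : AF.Cd K ≠ 0 := AF.Cd_ne_zero
  set V : F := (v.asIdeal : F) with hV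
  -- ω b^2 ≤ V C
  have hω1 : sp ω * b ^ 2 ≤ V * AF.Cd K := by rw [h]; gcongr
  have hlt : ¬ b / V ≤ b := by
    intro hle
    apply hJ2
    have : (1:F) ≤ V := by
      calc (1:F) = b / V * V * b⁻¹ := by field_simp
        _ ≤ b * V * b⁻¹ := by gcongr
        _ = V := by field_simp
    have : V = 1 := le_antisymm hv1 this
    rw [this, one_pow]
    exact hJ.trans hv1
  obtain ⟨x0, hx0, hx0b⟩ := SetLike.not_le_iff_exists.1 hlt
  have hvmax : v.asIdeal.IsMaximal := v.isMaximal
  -- x0 and b generate b/V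
  have hgen : sp x0 + b = b / V := by
    have hle : (sp x0 + b) * V / b ≤ 1 := by
      have h1 : sp x0 + b ≤ b / V := by
        rw [← FractionalIdeal.sup_eq_add]
        refine sup_le (AF.sp_le.2 hx0) ?_
        have := AF.div_le_div (b := b) one_ne_zero hv hv1
        rwa [_root_.div_one] at this
      calc (sp x0 + b) * V / b ≤ (b / V) * V / b := by rw [div_eq_mul_inv, div_eq_mul_inv _ b]; gcongr
        _ = 1 := by field_simp
    obtain ⟨i, hi⟩ := FractionalIdeal.le_one_iff_exists_coeIdeal.1 hle
    have hvi : v.asIdeal ≤ i := by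
      rw [← FractionalIdeal.coeIdeal_le_coeIdeal K, hi]
      calc V = b * V / b := by field_simp
        _ ≤ _ := by
          rw [div_eq_mul_inv, div_eq_mul_inv _ b]; gcongr
          rw [← FractionalIdeal.sup_eq_add]; exact le_sup_right
    have hne : v.asIdeal ≠ i := by
      intro e
      rw [← e] at hi
      have : sp x0 + b = b := by
        have h3 : (sp x0 + b) * V / b * b / V = sp x0 + b := by field_simp
        rw [← h3, ← hi, ← hV]; field_simp
      apply hx0b
      rw [← this, ← FractionalIdeal.sup_eq_add]
      exact (le_sup_left : sp x0 ≤ _) (FractionalIdeal.mem_spanSingleton_self _ _)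
    have hit : i = ⊤ := by
      by_contra hi'
      exact hne (hvmax.eq_of_le hi' hvi)
    have h3 : (sp x0 + b) * V / b * b / V = sp x0 + b := by field_simp
    rw [← h3, ← hi, hit, FractionalIdeal.coeIdeal_top, one_mul]
  have h3 : sp ω * ((b / V) * b) ≤ AF.Cd K := by
    calc sp ω * ((b / V) * b) = (sp ω * b ^ 2) * V⁻¹ := by field_simp
      _ ≤ (V * AF.Cd K) * V⁻¹ := by gcongr
      _ = _ := by field_simp
  have hinj : ∀ r : 𝓞 K, (r:K) * x0 ∈ b → r ∈ v.asIdeal := by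
    intro r hr
    by_contra hrv
    obtain ⟨s, hs⟩ := hvmax.exists_inv hrv
    obtain ⟨i, hi, e⟩ := hs
    apply hx0b
    have e1 : x0 = (s:K) * (r * x0) + x0 * i := by
      have : (s:K) * r + i = 1 := by exact_mod_cast congrArg (algebraMap (𝓞 K) K) e
      linear_combination (-x0) * this
    rw [e1]
    exact Submodule.add_mem (b : Submodule (𝓞 K) K) (AF.smul_mem' s hr)
      ((FractionalIdeal.mem_div_iff_of_ne_zero hv).1 hx0 _ ((AF.mem_v v i).2 hi))
  have hreps : AF.Reps (AF.as b) (AF.as (b / V)) (fun r : 𝓞 K ⧸ v.asIdeal => (Quotient.out r : 𝓞 K) * x0) := by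
    constructor
    · intro r
      exact AF.smul_mem' _ hx0
    · intro y hy
      rw [AF.mem_as, ← hgen, ← FractionalIdeal.mem_coe, FractionalIdeal.coe_add, Submodule.add_eq_sup, Submodule.mem_sup] at hy
      obtain ⟨y, hy, z, hz, rfl⟩ := hy
      obtain ⟨r, rfl⟩ := (FractionalIdeal.mem_spanSingleton _).1 hy
      refine ⟨Ideal.Quotient.mk _ r, ?_⟩
      rw [Algebra.smul_def, show ((algebraMap (𝓞 K) K) r * x0 + z - ((Quotient.out (Ideal.Quotient.mk v.asIdeal r) : 𝓞 K) : K) * x0) = z + x0 * ((r - (Quotient.out (Ideal.Quotient.mk v.asIdeal r)) : 𝓞 K) : K) by push_cast; ring]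
      refine Submodule.add_mem (b : Submodule (𝓞 K) K) hz ((FractionalIdeal.mem_div_iff_of_ne_zero hv).1 hx0 _ ((AF.mem_v v _).2 ?_))
      rw [← Ideal.Quotient.eq]
      exact (Ideal.Quotient.mk_out _).symm
    · intro r s hrs
      rw [← sub_mul] at hrs
      have := hinj (Quotient.out r - Quotient.out s) (by push_cast; exact hrs)
      rw [← Ideal.Quotient.eq, Ideal.Quotient.mk_out, Ideal.Quotient.mk_out] at this
      exact this
  have hfin : Finite (𝓞 K ⧸ v.asIdeal) := Ideal.finiteQuotientOfFreeOfNeBot _ v.ne_bot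
  let _ : Field (𝓞 K ⧸ v.asIdeal) := Ideal.Quotient.field _
  let _ : Fintype (𝓞 K ⧸ v.asIdeal) := Fintype.ofFinite _
  have hwell : ∀ r : 𝓞 K, r ∈ v.asIdeal → ∃ n : ℤ, Algebra.trace ℚ K (ω * x0 ^ 2 * r) = n := by
    intro r hr
    obtain ⟨n, hn⟩ := AF.Tf_int h3 hx0 ((FractionalIdeal.mem_div_iff_of_ne_zero hv).1 hx0 _ ((AF.mem_v v r).2 hr))
    exact ⟨n, by rw [← hn, AF.Tf_apply]; congr 1; ring⟩
  have hcong : ∀ r s : 𝓞 K, r - s ∈ v.asIdeal → AF.e (Algebra.trace ℚ K (ω * x0 ^ 2 * r)) = AF.e (Algebra.trace ℚ K (ω * x0 ^ 2 * s)) := by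
    intro r s hrs
    obtain ⟨n, hn⟩ := hwell _ hrs
    rw [show ω * x0 ^ 2 * (r:K) = ω * x0 ^ 2 * s + ω * x0 ^ 2 * ((r - s : 𝓞 K) : K) by push_cast; ring, map_add, hn, AF.e_add_int]
  have hmo : ∀ r : 𝓞 K, (Quotient.out (Ideal.Quotient.mk v.asIdeal r)) - r ∈ v.asIdeal := by
    intro r
    rw [← Ideal.Quotient.eq]
    exact Ideal.Quotient.mk_out _
  let Ψ : AddChar (𝓞 K ⧸ v.asIdeal) ℂ :=
    { toFun := fun r => AF.e (Algebra.trace ℚ K (ω * x0 ^ 2 * (Quotient.out r : 𝓞 K)))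
      map_zero_eq_one' := by
        rw [hcong _ 0]
        · simp [AF.e_zero]
        · exact hmo 0
      map_add_eq_mul' := by
        intro r s
        rw [← AF.e_add, ← map_add, ← mul_add]
        rw [hcong _ (Quotient.out r + Quotient.out s)]
        · push_cast; rfl
        · rw [← Ideal.Quotient.eq, map_add, Ideal.Quotient.mk_out, Ideal.Quotient.mk_out, Ideal.Quotient.mk_out] }
  have hΨ : ∀ r : 𝓞 K, Ψ (Ideal.Quotient.mk _ r) = AF.e (Algebra.trace ℚ K (ω * x0 ^ 2 * r)) := fun r => hcong _ _ (hmo r)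
  have hΨ1 : Ψ ≠ 1 := by
    intro h1
    apply hJ2
    have hx2 : ω * x0 ^ 2 ∈ AF.Cd K := by
      rw [AF.mem_Cd]
      intro a
      rw [← AF.e_eq_one_iff, ← hΨ, h1, AddChar.one_apply]
    have h4 : sp ω * (b / V) ^ 2 ≤ AF.Cd K := by
      have e1 : sp ω * (b / V) ^ 2 = sp (ω * x0 ^ 2) + (sp ω * (sp x0 * b) + sp ω * ((b / V) * b)) := by
        rw [AF.sp_mul, pow_two x0, AF.sp_mul]
        rw [← hgen]
        ring
      rw [e1, ← FractionalIdeal.sup_eq_add, ← FractionalIdeal.sup_eq_add]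
      refine sup_le (AF.sp_le.2 hx2) (sup_le (le_trans ?_ h3) h3)
      gcongr
      exact AF.sp_le.2 hx0
    calc J = (sp ω * (b / V) ^ 2) * (V ^ 2 * (AF.Cd K)⁻¹) := by
          rw [div_pow, ← mul_div_assoc, h]; field_simp
      _ ≤ AF.Cd K * (V ^ 2 * (AF.Cd K)⁻¹) := by gcongr
      _ = V ^ 2 := by field_simp
  have hsum : ∀ α : 𝓞 K, AF.G b V (α * ω) = ∑ r, Ψ (Ideal.Quotient.mk _ α * r ^ 2) := by
    intro α
    unfold AF.G
    rw [AF.gs_eq (AF.inv_of _ _) hreps]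
    · refine Finset.sum_congr rfl fun r _ => ?_
      rw [AF.Tf_apply]
      have : r = Ideal.Quotient.mk v.asIdeal (Quotient.out r) := (Ideal.Quotient.mk_out r).symm
      nth_rw 3 [this]
      rw [← map_pow, ← map_mul, hΨ]
      congr 2
      push_cast
      ring
    · rw [AF.sp_mul]
      calc sp (α:K) * sp ω * b ^ 2 ≤ 1 * sp ω * b ^ 2 := by gcongr; exact AF.sp_int_le_one α
        _ ≤ 1 * (V * AF.Cd K) := by rw [mul_assoc]; gcongr
        _ ≤ 1 * (1 * AF.Cd K) := by gcongr
        _ = _ := by simp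
    · rw [AF.sp_mul, AF.sp_mul]
      calc sp (2:K) * (sp (α:K) * sp ω) * (b / V * b) ≤ 1 * (1 * sp ω) * (b / V * b) := by
            gcongr
            · exact mod_cast AF.sp_int_le_one (2 : 𝓞 K)
            · exact AF.sp_int_le_one α
        _ = sp ω * (b / V * b) := by simp
        _ ≤ _ := h3
  have hα' : Ideal.Quotient.mk v.asIdeal α ≠ 0 := by rwa [Ne, Ideal.Quotient.eq_zero_iff_mem]
  have h1 := hsum 1
  simp only [map_one, one_mul] at h1
  rw [hsum, h1, AF.gauss_ff _ Ψ hΨ1 hα']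
  · congr 1
    have hiff : IsSquare (Ideal.Quotient.mk v.asIdeal α) ↔ ∃ r : 𝓞 K, r ^ 2 - α ∈ v.asIdeal := by
      constructor
      · rintro ⟨r, hr⟩
        obtain ⟨r, rfl⟩ := Ideal.Quotient.mk_surjective r
        exact ⟨r, by rw [← Ideal.Quotient.eq, hr, map_pow, pow_two]⟩
      · rintro ⟨r, hr⟩
        exact ⟨Ideal.Quotient.mk _ r, by rw [← Ideal.Quotient.eq.2 hr, map_pow, pow_two]⟩
    unfold AF.chi
    split_ifs with hc
    · rw [(quadraticChar_one_iff_isSquare hα').2 (hiff.2 hc)]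
    · rw [quadraticChar_neg_one_iff_not_isSquare.2 (mt hiff.1 hc)]
  · intro hc
    apply h2v
    have : ((2:ℕ) : 𝓞 K ⧸ v.asIdeal) = 0 := by rw [ringChar.spec, hc]
    rw [← Ideal.Quotient.eq_zero_iff_mem, ← this]
    exact map_natCast (Ideal.Quotient.mk v.asIdeal) 2
end
end

section
open NumberField
open scoped nonZeroDivisors

section
set_option linter.unusedSectionVars false
variable {K : Type*} [Field K] [NumberField K]

local notation "F" => FractionalIdeal (𝓞 K)⁰ K
local notation "sp" => FractionalIdeal.spanSingleton (𝓞 K)⁰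
local notation "P" => IsDedekindDomain.HeightOneSpectrum (𝓞 K)

lemma AF.cop_iff {M N : Ideal (𝓞 K)} : (M : F) + (N : F) = 1 ↔ IsCoprime M N := by
  rw [Ideal.isCoprime_iff_add, ← FractionalIdeal.coeIdeal_sup, ← Submodule.add_eq_sup, ← FractionalIdeal.coeIdeal_inj (K := K), Ideal.one_eq_top, FractionalIdeal.coeIdeal_top]

lemma AF.sp_coe (a : 𝓞 K) : sp (a : K) = ((Ideal.span {a} : Ideal (𝓞 K)) : F) := (FractionalIdeal.coeIdeal_span_singleton a).symm

lemma AF.cop_v {v : P} {M : Ideal (𝓞 K)} : IsCoprime M v.asIdeal ↔ ¬ M ≤ v.asIdeal := by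
  rw [Ideal.isCoprime_iff_sup_eq]
  constructor
  · intro h hle
    rw [sup_eq_right.2 hle] at h
    exact v.isPrime.ne_top h
  · intro h
    by_contra hne
    exact h (le_sup_left.trans (v.isMaximal.eq_of_le hne le_sup_right).ge)

lemma AF.cop_vv {v w : P} (h : v ≠ w) : IsCoprime v.asIdeal w.asIdeal := by
  rw [AF.cop_v]
  intro hle
  exact h (IsDedekindDomain.HeightOneSpectrum.ext (v.isMaximal.eq_of_le w.isPrime.ne_top hle))

lemma AF.le_one_of_sq {a : F} (h : a ^ 2 ≤ 1) : a ≤ 1 := by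
  intro x hx
  have : x ^ 2 ∈ (1 : F) := h (by rw [pow_two, pow_two]; exact FractionalIdeal.mul_mem_mul hx hx)
  obtain ⟨y, hy⟩ := (FractionalIdeal.mem_one_iff _).1 this
  have hi : IsIntegral ℤ x := IsIntegral.of_pow (n := 2) (by norm_num) (by rw [← hy]; exact y.2)
  exact (FractionalIdeal.mem_one_iff _).2 ⟨⟨x, hi⟩, rfl⟩

noncomputable def AF.JI (S : Finset (IsDedekindDomain.HeightOneSpectrum (𝓞 K))) : Ideal (𝓞 K) := ∏ v ∈ S, v.asIdeal

lemma AF.JI_ne (S : Finset P) : AF.JI S ≠ ⊥ := by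
  unfold AF.JI
  rw [Ne, ← Ideal.zero_eq_bot, Finset.prod_eq_zero_iff]
  push Not
  exact fun v _ => v.ne_bot

lemma AF.two_notMem {v : P} : IsCoprime (Ideal.span {(2:𝓞 K)}) v.asIdeal ↔ (2 : 𝓞 K) ∉ v.asIdeal := by
  rw [AF.cop_v, Ideal.span_singleton_le_iff_mem]

lemma AF.coe_ne {I : Ideal (𝓞 K)} (h : I ≠ ⊥) : (I : F) ≠ 0 := by
  simpa using h

lemma AF.sp2 : sp (2 : K) = ((Ideal.span {2} : Ideal (𝓞 K)) : F) := by
  rw [← AF.sp_coe]; congr 1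

lemma AF.G_prod [DecidableEq P] {ω : K} {b : F} (hb : b ≠ 0) (S : Finset P) (hS : ∀ v ∈ S, (2 : 𝓞 K) ∉ v.asIdeal)
    (h : sp ω * b ^ 2 ≤ (AF.JI S : F) * AF.Cd K) :
    AF.G b (sp 2 * (AF.JI S : F)) ω = AF.G b (sp 2) ω * ∏ v ∈ S, AF.G b (v.asIdeal : F) ω := by
  induction S using Finset.induction_on with
  | empty => simp [AF.JI]
  | insert v S hv ih =>
    have e : AF.JI (insert v S) = v.asIdeal * AF.JI S := by unfold AF.JI; rw [Finset.prod_insert hv]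
    have hle : ((AF.JI (insert v S) : Ideal (𝓞 K)) : F) ≤ (AF.JI S : F) := by
      rw [FractionalIdeal.coeIdeal_le_coeIdeal, e]; exact Ideal.mul_le_right (R := 𝓞 K)
    rw [Finset.prod_insert hv]
    have ih' := ih (fun w hw => hS w (Finset.mem_insert_of_mem hw)) (h.trans (by gcongr))
    have h2 := AF.sp_ne (K := K) two_ne_zero
    have h21 : sp (2:K) ≤ 1 := by rw [AF.sp2]; exact FractionalIdeal.coeIdeal_le_one
    have hJ := AF.coe_ne (AF.JI_ne S)
    have key : AF.G b (sp 2 * (AF.JI S : F) * (v.asIdeal : F)) ω = AF.G b (sp 2 * (AF.JI S : F)) ω * AF.G b (v.asIdeal : F) ω := by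
      refine AF.G_mul hb (mul_ne_zero h2 hJ) (AF.v_ne v) ?_ (AF.v_le v) ?_ ?_ ?_
      · rw [AF.sp2, ← FractionalIdeal.coeIdeal_mul]; exact FractionalIdeal.coeIdeal_le_one
      · rw [AF.sp2, ← FractionalIdeal.coeIdeal_mul, AF.cop_iff]
        refine IsCoprime.mul_left (AF.two_notMem.2 (hS v (Finset.mem_insert_self _ _))) (IsCoprime.prod_left fun w hw => AF.cop_vv ?_)
        rintro rfl; exact hv hw
      · refine h.trans ?_
        calc _ ≤ 1 * AF.Cd K := by gcongr; exact FractionalIdeal.coeIdeal_le_one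
          _ = _ := one_mul _
      · rw [AF.sp_mul]
        rw [e, FractionalIdeal.coeIdeal_mul] at h
        calc _ = sp 2 * (sp ω * b ^ 2) := by ring
          _ ≤ sp 2 * ((v.asIdeal : F) * (AF.JI S : F) * AF.Cd K) := by gcongr
          _ = _ := by ring
    rw [mul_comm (AF.G b (v.asIdeal : F) ω), ← mul_assoc, ← ih', ← key, e, FractionalIdeal.coeIdeal_mul]
    congr 1; ring

/-- Standing data. -/
structure AF.Dat (ω : K) (b : FractionalIdeal (𝓞 K)⁰ K) (S : Finset (IsDedekindDomain.HeightOneSpectrum (𝓞 K))) : Prop where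
  hω : ω ≠ 0
  hb : b ≠ 0
  odd : ∀ v ∈ S, (2 : 𝓞 K) ∉ v.asIdeal
  eq : FractionalIdeal.spanSingleton (𝓞 K)⁰ ω * b ^ 2 = (AF.JI S : FractionalIdeal (𝓞 K)⁰ K) * AF.Cd K

lemma AF.JI_le [DecidableEq P] {S : Finset P} {v : P} (hv : v ∈ S) : AF.JI S ≤ v.asIdeal ∧ ¬ (AF.JI S) ≤ v.asIdeal ^ 2 := by
  have e : AF.JI S = v.asIdeal * AF.JI (S.erase v) := by
    unfold AF.JI; rw [Finset.mul_prod_erase _ _ hv]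
  constructor
  · rw [e]; exact Ideal.mul_le_left (R := 𝓞 K)
  · rw [e, ← FractionalIdeal.coeIdeal_le_coeIdeal K, FractionalIdeal.coeIdeal_mul, FractionalIdeal.coeIdeal_pow]
    intro h
    have : ((AF.JI (S.erase v) : Ideal (𝓞 K)) : F) ≤ v.asIdeal := by
      have hv := AF.v_ne v
      calc ((AF.JI (S.erase v) : Ideal (𝓞 K)) : F) = (v.asIdeal : F)⁻¹ * ((v.asIdeal : F) * (AF.JI (S.erase v) : F)) := by field_simp
        _ ≤ (v.asIdeal : F)⁻¹ * (v.asIdeal : F) ^ 2 := by gcongr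
        _ = _ := by field_simp
    rw [FractionalIdeal.coeIdeal_le_coeIdeal] at this
    refine AF.cop_v.1 (IsCoprime.prod_left fun w hw => AF.cop_vv ?_) this
    exact (Finset.mem_erase.1 hw).1

lemma AF.E6 {ω : K} {b : F} {S : Finset P} (D : AF.Dat ω b S) (α : 𝓞 K) (hα0 : α ≠ 0) (hpos : ∀ φ : K →+* ℝ, 0 < φ α)
    (a : F) (ha : sp (α:K) = a ^ 2) (hα2 : IsCoprime (Ideal.span {2}) (Ideal.span {α})) (hαS : ∀ v ∈ S, α ∉ v.asIdeal) :
    AF.G b (sp 2) ω ≠ 0 ∧ ∃ c : ℝ, 0 < c ∧ AF.G b (sp 2) (α * ω) * ((∏ v ∈ S, AF.chi v α : ℤ) : ℂ) = c * AF.G b (sp 2) ω := by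
  classical
  obtain ⟨hω, hb, odd, h⟩ := D
  have hαK : (α : K) ≠ 0 := by exact_mod_cast hα0
  have hJ := AF.coe_ne (AF.JI_ne S)
  have hJ1 : (AF.JI S : F) ≤ 1 := FractionalIdeal.coeIdeal_le_one
  have hα1 := AF.sp_int_le_one α
  have ha1 : a ≤ 1 := AF.le_one_of_sq (ha ▸ hα1)
  have ha0 : a ≠ 0 := by
    rintro rfl
    have := AF.sp_ne hαK
    rw [ha] at this; simp at this
  obtain ⟨A, rfl⟩ := FractionalIdeal.le_one_iff_exists_coeIdeal.1 ha1
  have hA : Ideal.span {α} = A ^ 2 := by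
    rw [← FractionalIdeal.coeIdeal_inj (K := K), ← AF.sp_coe, ha, FractionalIdeal.coeIdeal_pow]
  have hcop : sp (2:K) * (AF.JI S : F) + (A : F) = 1 := by
    rw [AF.sp2, ← FractionalIdeal.coeIdeal_mul, AF.cop_iff]
    have : IsCoprime (Ideal.span {2} * AF.JI S) (A ^ 2) := by
      rw [← hA]
      refine IsCoprime.mul_left hα2 (IsCoprime.prod_left fun w hw => IsCoprime.symm ?_)
      rw [AF.cop_v, Ideal.span_singleton_le_iff_mem]
      exact hαS w hw
    exact (IsCoprime.pow_right_iff (by norm_num)).1 this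
  have h21 : sp (2:K) ≤ 1 := by rw [AF.sp2]; exact FractionalIdeal.coeIdeal_le_one
  have h20 := AF.sp_ne (K := K) two_ne_zero
  obtain ⟨-, c1, hc1, e1⟩ := AF.milgram_id hω hb hJ hJ1 h
  obtain ⟨-, c2, hc2, e2⟩ := AF.milgram_id (ω := α * ω) (b := b / A) (mul_ne_zero hαK hω) (div_ne_zero hb ha0) hJ hJ1 (by
    rw [← h, AF.sp_mul, ha]; field_simp)
  rw [AF.kap_mul _ _ hαK hpos] at e2
  change AF.G _ _ _ = _ at e1 e2
  rw [← AF.G_shift hb (mul_ne_zero h20 hJ) ha0 _ ha1 hcop _ _] at e2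
  rotate_left
  · calc sp (2:K) * (AF.JI S : F) ≤ 1 * 1 := by gcongr
      _ = 1 := one_mul _
  · rw [AF.sp_mul, ha, mul_assoc, h]
    calc (A:F) ^ 2 * ((AF.JI S : F) * AF.Cd K) ≤ (A:F) ^ 2 * (1 * AF.Cd K) := by gcongr
      _ = _ := by rw [one_mul]
  · rw [AF.sp_mul, AF.sp_mul, ha, show sp (2:K) * ((A:F) ^ 2 * sp ω) * b ^ 2 = sp 2 * (A:F) ^ 2 * (sp ω * b ^ 2) by ring, h]
    exact le_of_eq (by ring)
  have e3 : ∀ v ∈ S, AF.G b (v.asIdeal : F) (α * ω) = AF.chi v α * AF.G b (v.asIdeal : F) ω := fun v hv => by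
    refine AF.G_chi hb h v (odd v hv) ?_ ?_ α (hαS v hv)
    · rw [FractionalIdeal.coeIdeal_le_coeIdeal]; exact (AF.JI_le hv).1
    · rw [← FractionalIdeal.coeIdeal_pow, FractionalIdeal.coeIdeal_le_coeIdeal]; exact (AF.JI_le hv).2
  rw [AF.G_prod hb S odd, Finset.prod_congr rfl e3, Finset.prod_mul_distrib] at e2
  rotate_left
  · rw [AF.sp_mul, mul_assoc, h]
    calc _ ≤ 1 * ((AF.JI S : F) * AF.Cd K) := by gcongr
      _ = _ := one_mul _
  rw [AF.G_prod hb S odd h.le] at e1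
  have hk : AF.kap ω ≠ 0 := AF.kap_ne_zero ω
  have hc1' : (c1 : ℂ) ≠ 0 := by exact_mod_cast hc1.ne'
  have hne : AF.G b (sp 2) ω * ∏ v ∈ S, AF.G b (v.asIdeal : F) ω ≠ 0 := by rw [e1]; exact mul_ne_zero hc1' hk
  refine ⟨left_ne_zero_of_mul hne, c2 / c1, by positivity, ?_⟩
  apply mul_right_cancel₀ (right_ne_zero_of_mul hne)
  push_cast
  rw [mul_assoc, e2, mul_assoc, e1]
  field_simp
end
end

section
open NumberField
open scoped nonZeroDivisors

section
set_option linter.unusedSectionVars false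
variable {K : Type*} [Field K] [NumberField K]

local notation "F" => FractionalIdeal (𝓞 K)⁰ K
local notation "sp" => FractionalIdeal.spanSingleton (𝓞 K)⁰
local notation "P" => IsDedekindDomain.HeightOneSpectrum (𝓞 K)

lemma AF.chi_pm (v : P) (α : 𝓞 K) : AF.chi v α = 1 ∨ AF.chi v α = -1 := by
  unfold AF.chi; split_ifs <;> simp

lemma AF.chi_prod_pm (S : Finset P) (α : 𝓞 K) : ∏ v ∈ S, AF.chi v α = 1 ∨ ∏ v ∈ S, AF.chi v α = -1 := by
  classical
  induction S using Finset.induction_on with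
  | empty => simp
  | insert v S hv ih =>
    rw [Finset.prod_insert hv]
    rcases ih with h | h <;> rcases AF.chi_pm v α with h' | h' <;> simp [h, h']

lemma AF.pm_of_pos {z : ℤ} (hz : z = 1 ∨ z = -1) {c d : ℝ} (hc : 0 < c) (hd : 0 < d) (h : (d:ℂ) * (z : ℂ) = c) : z = 1 := by
  rcases hz with h1 | h1
  · exact h1
  · subst h1
    have : d * ((-1 : ℤ) : ℝ) = c := by exact_mod_cast h
    push_cast at this
    linarith

lemma AF.G_cong {ω : K} {b : F} (h : sp ω * b ^ 2 ≤ AF.Cd K) (α : 𝓞 K) (hα : α - 1 ∈ Ideal.span {(4 : 𝓞 K)}) :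
    AF.G b (sp 2) (α * ω) = AF.G b (sp 2) ω := by
  unfold AF.G
  refine AF.gs_congr fun x hx => ?_
  obtain ⟨γ, hγ⟩ := Ideal.mem_span_singleton'.1 hα
  have h2x : x * 2 ∈ b := (FractionalIdeal.mem_div_iff_of_ne_zero (AF.sp_ne two_ne_zero)).1 hx 2 (FractionalIdeal.mem_spanSingleton_self _ _)
  obtain ⟨n, hn⟩ := AF.Tf_int (I := b) (J := b) (by rwa [← pow_two]) h2x (AF.smul_mem' γ h2x)
  have hγ' : (α : K) = 1 + γ * 4 := by
    have := congrArg (algebraMap (𝓞 K) K) hγ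
    rw [map_mul, map_sub, map_ofNat, map_one] at this
    linear_combination -this
  rw [AF.Tf_apply, hγ', show (1 + (γ:K) * 4) * ω * (x * x) = ω * (x * x) + ω * (x * 2 * (γ * (x * 2))) by ring, map_add, ← AF.Tf_apply ω x, ← AF.Tf_apply ω (x * 2), hn, AF.e_add_int]

lemma AF.cop_of_mod4 {α : 𝓞 K} (hα : α - 1 ∈ Ideal.span {(4 : 𝓞 K)}) : IsCoprime (Ideal.span {2}) (Ideal.span {α}) := by
  obtain ⟨γ, hγ⟩ := Ideal.mem_span_singleton'.1 hα
  rw [Ideal.isCoprime_span_singleton_iff]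
  exact ⟨-2 * γ, 1, by linear_combination -hγ⟩

lemma AF.Dat.le {ω : K} {b : F} {S : Finset P} (D : AF.Dat ω b S) : sp ω * b ^ 2 ≤ AF.Cd K := by
  rw [D.eq]
  calc _ ≤ 1 * AF.Cd K := by gcongr; exact FractionalIdeal.coeIdeal_le_one
    _ = _ := one_mul _

lemma AF.R1a {ω : K} {b : F} {S : Finset P} (D : AF.Dat ω b S) (α : 𝓞 K) (hα0 : α ≠ 0) (hpos : ∀ φ : K →+* ℝ, 0 < φ α)
    (a : F) (ha : sp (α:K) = a ^ 2) (hα4 : α - 1 ∈ Ideal.span {(4 : 𝓞 K)}) (hαS : ∀ v ∈ S, α ∉ v.asIdeal) :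
    ∏ v ∈ S, AF.chi v α = 1 := by
  obtain ⟨hne, c, hc, h⟩ := AF.E6 D α hα0 hpos a ha (AF.cop_of_mod4 hα4) hαS
  rw [AF.G_cong D.le α hα4, mul_comm] at h
  exact AF.pm_of_pos (AF.chi_prod_pm S α) hc one_pos (by rw [Complex.ofReal_one, one_mul]; exact mul_right_cancel₀ hne h)

lemma AF.Dat.ext [DecidableEq P] {δ : K} {b : F} {S T : Finset P} (D : AF.Dat δ b S) (hT : ∀ v ∈ T, (2 : 𝓞 K) ∉ v.asIdeal) (hST : Disjoint S T)
    {β : K} (hβ : β ≠ 0) {c : F} (hc : c ≠ 0) (h : sp β = (AF.JI T : F) * c ^ 2) : AF.Dat (β * δ) (b / c) (S ∪ T) where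
  hω := mul_ne_zero hβ D.hω
  hb := div_ne_zero D.hb hc
  odd := by
    intro v hv
    rcases Finset.mem_union.1 hv with hv | hv
    exacts [D.odd v hv, hT v hv]
  eq := by
    have e : AF.JI (S ∪ T) = AF.JI S * AF.JI T := Finset.prod_union hST
    rw [e, AF.sp_mul, h, FractionalIdeal.coeIdeal_mul, div_pow]
    have := D.eq
    calc _ = (AF.JI T : F) * (sp δ * b ^ 2) := by field_simp
      _ = _ := by rw [this]; ring

lemma AF.R1 [DecidableEq P] {δ : K} {b : F} {S T : Finset P} (D : AF.Dat δ b S) (hT : ∀ v ∈ T, (2 : 𝓞 K) ∉ v.asIdeal) (hST : Disjoint S T)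
    {β : K} (hβ : β ≠ 0) {c : F} (hc : c ≠ 0) (h : sp β = (AF.JI T : F) * c ^ 2)
    (α : 𝓞 K) (hα0 : α ≠ 0) (hpos : ∀ φ : K →+* ℝ, 0 < φ α)
    (a : F) (ha : sp (α:K) = a ^ 2) (hα4 : α - 1 ∈ Ideal.span {(4 : 𝓞 K)}) (hαS : ∀ v ∈ S ∪ T, α ∉ v.asIdeal) :
    ∏ v ∈ T, AF.chi v α = 1 := by
  have h1 := AF.R1a D α hα0 hpos a ha hα4 (fun v hv => hαS v (Finset.mem_union_left _ hv))
  have h2 := AF.R1a (D.ext hT hST hβ hc h) α hα0 hpos a ha hα4 hαS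
  rwa [Finset.prod_union hST, h1, one_mul] at h2

lemma AF.R2 [DecidableEq P] {δ : K} {b : F} {S T : Finset P} (D : AF.Dat δ b S) (hT : ∀ v ∈ T, (2 : 𝓞 K) ∉ v.asIdeal) (hST : Disjoint S T)
    {β : 𝓞 K} (hβ : β ≠ 0) (hβ4 : β - 1 ∈ Ideal.span {(4 : 𝓞 K)}) {c : Ideal (𝓞 K)} (hc : c ≠ ⊥) (h : sp (β : K) = (AF.JI T : F) * (c : F) ^ 2)
    (α : 𝓞 K) (hα0 : α ≠ 0) (hpos : ∀ φ : K →+* ℝ, 0 < φ α)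
    (a : F) (ha : sp (α:K) = a ^ 2) (hα2 : IsCoprime (Ideal.span {2}) (Ideal.span {α})) (hαS : ∀ v ∈ S ∪ T, α ∉ v.asIdeal) :
    ∏ v ∈ T, AF.chi v α = 1 := by
  have hβK : (β : K) ≠ 0 := by exact_mod_cast hβ
  obtain ⟨hne, k0, hk0, h1⟩ := AF.E6 D α hα0 hpos a ha hα2 (fun v hv => hαS v (Finset.mem_union_left _ hv))
  obtain ⟨-, k1, hk1, h2⟩ := AF.E6 (D.ext hT hST hβK (AF.coe_ne hc) h) α hα0 hpos a ha hα2 hαS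
  have hJ1 : ((AF.JI T : Ideal (𝓞 K)) : F) ≤ 1 := FractionalIdeal.coeIdeal_le_one
  have hcop : sp (2:K) + (c : F) = 1 := by
    rw [AF.sp2, AF.cop_iff]
    have h3 := AF.cop_of_mod4 hβ4
    have : Ideal.span {β} = AF.JI T * c ^ 2 := by
      rw [← FractionalIdeal.coeIdeal_inj (K := K), ← AF.sp_coe, h, FractionalIdeal.coeIdeal_mul, FractionalIdeal.coeIdeal_pow]
    rw [this] at h3
    exact (IsCoprime.pow_right_iff (by norm_num)).1 (IsCoprime.of_mul_right_right h3)
  have key : ∀ α : 𝓞 K, AF.G (b / (c : F)) (sp 2) (α * (β * δ)) = AF.G b (sp 2) (α * δ) := by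
    intro α
    have hα1 := AF.sp_int_le_one α
    have hle : sp (α * δ) * b ^ 2 ≤ AF.Cd K := by
      rw [AF.sp_mul, mul_assoc]
      calc _ ≤ 1 * AF.Cd K := by gcongr; exact D.le
        _ = _ := one_mul _
    have hle2 : sp (α * (β * δ)) * b ^ 2 ≤ (c:F) ^ 2 * AF.Cd K := by
      calc _ = sp (β:K) * (sp (α * δ) * b ^ 2) := by simp only [AF.sp_mul]; ring
        _ ≤ (1 * (c:F) ^ 2) * AF.Cd K := by rw [h]; gcongr
        _ = _ := by rw [one_mul]
    rw [← AF.G_shift D.hb (AF.sp_ne two_ne_zero) (AF.coe_ne hc) (by rw [AF.sp2]; exact FractionalIdeal.coeIdeal_le_one) FractionalIdeal.coeIdeal_le_one hcop hle2,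
      show (α:K) * (β * δ) = β * (α * δ) by ring, AF.G_cong hle β hβ4]
    rw [AF.sp_mul]
    calc _ = sp 2 * (sp (α * (β * δ)) * b ^ 2) := by ring
      _ ≤ sp 2 * ((c:F) ^ 2 * AF.Cd K) := by gcongr
      _ = _ := by ring
  have key1 := key 1
  push_cast at key1
  rw [one_mul, one_mul] at key1
  rw [key, key1, Finset.prod_union hST] at h2
  push_cast at h1 h2
  rw [← mul_assoc, h1] at h2
  refine AF.pm_of_pos (AF.chi_prod_pm T α) hk1 hk0 ?_
  push_cast
  apply mul_right_cancel₀ hne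
  linear_combination h2
end
end

section
open scoped ENNReal

section
variable {α β : Type*}

noncomputable def AF.Zs (A : Set α) (w : α → ℝ≥0∞) : ℝ≥0∞ := ∑' m : {m : Multiset α // ∀ x ∈ m, x ∈ A}, (m.1.map w).prod

lemma AF.Zs_union (A B : Set α) (w : α → ℝ≥0∞) : AF.Zs (A ∪ B) w ≤ AF.Zs A w * AF.Zs B w := by
  classical
  unfold AF.Zs
  let f : ({m : Multiset α // ∀ x ∈ m, x ∈ A} × {m : Multiset α // ∀ x ∈ m, x ∈ B}) → {m : Multiset α // ∀ x ∈ m, x ∈ A ∪ B} :=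
    fun p => ⟨p.1.1 + p.2.1, fun x hx => (Multiset.mem_add.1 hx).elim (fun h => Or.inl (p.1.2 x h)) (fun h => Or.inr (p.2.2 x h))⟩
  have hf : Function.Surjective f := by
    rintro ⟨m, hm⟩
    refine ⟨⟨⟨m.filter (· ∈ A), fun x hx => (Multiset.mem_filter.1 hx).2⟩, ⟨m.filter (¬ · ∈ A), fun x hx => ?_⟩⟩, ?_⟩
    · have := Multiset.mem_filter.1 hx
      exact (hm x this.1).resolve_left this.2
    · exact Subtype.ext (Multiset.filter_add_not _ _)
  refine (ENNReal.tsum_le_tsum_comp_of_surjective hf _).trans (le_of_eq ?_)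
  rw [ENNReal.tsum_prod', ← ENNReal.tsum_mul_right]
  refine tsum_congr fun a => ?_
  rw [← ENNReal.tsum_mul_left]
  refine tsum_congr fun b => ?_
  simp [f]

lemma AF.Zs_singleton (v : α) (w : α → ℝ≥0∞) : AF.Zs {v} w ≤ (1 - w v)⁻¹ := by
  unfold AF.Zs
  let f : ℕ → {m : Multiset α // ∀ x ∈ m, x ∈ ({v} : Set α)} := fun n => ⟨Multiset.replicate n v, fun x hx => Multiset.eq_of_mem_replicate hx⟩
  have hf : Function.Surjective f := by
    rintro ⟨m, hm⟩
    exact ⟨m.card, Subtype.ext (Multiset.eq_replicate_card.2 hm).symm⟩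
  refine (ENNReal.tsum_le_tsum_comp_of_surjective hf _).trans (le_of_eq ?_)
  rw [← ENNReal.tsum_geometric]
  refine tsum_congr fun n => ?_
  simp [f]

lemma AF.Zs_finset (S : Finset α) (w : α → ℝ≥0∞) : AF.Zs (S : Set α) w ≤ ∏ v ∈ S, (1 - w v)⁻¹ := by
  classical
  induction S using Finset.induction_on with
  | empty =>
    unfold AF.Zs
    have : Unique {m : Multiset α // ∀ x ∈ m, x ∈ ((∅ : Finset α) : Set α)} :=
      ⟨⟨⟨0, by simp⟩⟩, fun ⟨m, hm⟩ => Subtype.ext (Multiset.eq_zero_of_forall_notMem fun x hx => by simpa using hm x hx)⟩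
    rw [tsum_eq_single ⟨0, by simp⟩ fun b hb => (hb (Subsingleton.elim _ _)).elim]
    simp
  | insert v S hv ih =>
    rw [Finset.prod_insert hv, Finset.coe_insert, Set.insert_eq]
    exact (AF.Zs_union _ _ _).trans (mul_le_mul' (AF.Zs_singleton _ _) ih)

lemma AF.Zs_sq (A : Set α) (w : α → ℝ≥0∞) (w' : β → ℝ≥0∞) (f g : α → β) (hf : Set.InjOn f A) (hg : Set.InjOn g A)
    (hfg : ∀ x ∈ A, ∀ y ∈ A, f x ≠ g y) (hfw : ∀ x ∈ A, w x ≤ w' (f x)) (hgw : ∀ x ∈ A, w x ≤ w' (g x)) :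
    AF.Zs A w * AF.Zs A w ≤ ∑' m : Multiset β, (m.map w').prod := by
  classical
  unfold AF.Zs
  let h : ({m : Multiset α // ∀ x ∈ m, x ∈ A} × {m : Multiset α // ∀ x ∈ m, x ∈ A}) → Multiset β :=
    fun p => p.1.1.map f + p.2.1.map g
  have hinj : ∀ (f : α → β), Set.InjOn f A → ∀ m n : {m : Multiset α // ∀ x ∈ m, x ∈ A}, m.1.map f = n.1.map f → m = n := by
    intro f hf m n hmn
    apply Subtype.ext
    rcases isEmpty_or_nonempty α with hα | hα
    · exact Subsingleton.elim _ _
    have key : ∀ m : {m : Multiset α // ∀ x ∈ m, x ∈ A}, (m.1.map f).map (Function.invFunOn f A) = m.1 := by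
      intro m
      rw [Multiset.map_map]
      conv_rhs => rw [← Multiset.map_id m.1]
      refine Multiset.map_congr rfl fun x hx => ?_
      exact hf.leftInvOn_invFunOn (m.2 x hx)
    rw [← key m, ← key n, hmn]
  have hh : Function.Injective h := by
    rintro ⟨m, n⟩ ⟨m', n'⟩ e
    have e1 : ∀ (m n : {m : Multiset α // ∀ x ∈ m, x ∈ A}), (h (m, n)).filter (· ∈ f '' A) = m.1.map f := by
      intro m n
      simp only [h, Multiset.filter_add]
      rw [Multiset.filter_eq_self.2, Multiset.filter_eq_nil.2, add_zero]
      · intro y hy ⟨x, hx, hxy⟩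
        obtain ⟨z, hz, rfl⟩ := Multiset.mem_map.1 hy
        exact hfg x hx z (n.2 z hz) hxy
      · intro y hy
        obtain ⟨z, hz, rfl⟩ := Multiset.mem_map.1 hy
        exact ⟨z, m.2 z hz, rfl⟩
    have e2 : m = m' := hinj f hf _ _ (by rw [← e1 m n, ← e1 m' n', e])
    subst e2
    have e3 : n = n' := hinj g hg _ _ (by simpa [h] using e)
    rw [e3]
  refine le_trans ?_ (ENNReal.tsum_comp_le_tsum_of_injective hh _)
  rw [ENNReal.tsum_prod', ← ENNReal.tsum_mul_right]
  refine ENNReal.tsum_le_tsum fun a => ?_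
  rw [← ENNReal.tsum_mul_left]
  refine ENNReal.tsum_le_tsum fun b => ?_
  simp only [h, Multiset.map_add, Multiset.prod_add, Multiset.map_map]
  refine mul_le_mul' ?_ ?_
  · exact Multiset.prod_map_le_prod_map₀ _ _ (fun _ _ => zero_le) fun x hx => hfw x (a.2 x hx)
  · exact Multiset.prod_map_le_prod_map₀ _ _ (fun _ _ => zero_le) fun x hx => hgw x (b.2 x hx)
end
end

section
open scoped ENNReal

section
open Filter Topology Ideal NumberField nonZeroDivisors

noncomputable def AF.W (s : ℝ) (n : ℕ) : ℝ≥0∞ := if n = 0 then 0 else ENNReal.ofReal ((n : ℝ) ^ (-s))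

noncomputable def AF.Zi (K : Type*) [Field K] [NumberField K] (s : ℝ) : ℝ≥0∞ := ∑' I : Ideal (𝓞 K), AF.W s (absNorm I)

variable (K : Type*) [Field K] [NumberField K]

lemma AF.zsum {s : ℝ} (hs : 1 < s) :
    LSeriesSummable (fun n ↦ ((Nat.card {I : Ideal (𝓞 K) // absNorm I = n} : ℝ) : ℂ)) s := by
  refine LSeriesSummable_of_sum_norm_bigO_and_nonneg (r := 1) ?_ (fun _ ↦ Nat.cast_nonneg _) zero_le_one (by simpa using hs)
  refine Asymptotics.isBigO_atTop_natCast_rpow_of_tendsto_div_rpow (a := dedekindZeta_residue K) ?_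
  simp only [Real.rpow_one]
  refine ((Ideal.tendsto_norm_le_div_atTop₀ K).comp tendsto_natCast_atTop_atTop).congr fun n ↦ ?_
  simp only [Function.comp_apply, Nat.cast_le, ← Nat.cast_sum]
  congr
  rw [← add_left_inj 1, ← card_norm_le_eq_card_norm_le_add_one,
    show Finset.Icc 1 n = Finset.Ioc 0 n from Finset.Icc_succ_left_eq_Ioc _ _,
    show 1 = Nat.card {I : Ideal (𝓞 K) // absNorm I = 0} by simp [Ideal.absNorm_eq_zero_iff],
    Finset.sum_Ioc_add_eq_sum_Icc (n.zero_le),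
    ← Finset.card_preimage_eq_sum_card_image_eq (fun k _ ↦ finite_setOfPred_absNorm_eq k)]
  simp [Set.coe_eq_subtype]

lemma AF.zi_eq {s : ℝ} (hs : 1 < s) : ∃ z : ℝ, 0 ≤ z ∧ AF.Zi K s = ENNReal.ofReal z ∧ dedekindZeta K s = (z : ℂ) := by
  let c : ℕ → ℕ := fun n => Nat.card {I : Ideal (𝓞 K) // absNorm I = n}
  let t : ℕ → ℝ := fun n => if n = 0 then 0 else (c n : ℝ) * (n : ℝ) ^ (-s)
  have ht : ∀ n, 0 ≤ t n := fun n => by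
    simp only [t]; split_ifs
    · rfl
    · positivity
  have hterm : ∀ n, LSeries.term (fun n ↦ ((c n : ℝ) : ℂ)) s n = ((t n : ℝ) : ℂ) := by
    intro n
    rw [LSeries.term_def]
    simp only [t]
    split_ifs with h
    · simp
    · push_cast
      rw [Complex.ofReal_cpow (Nat.cast_nonneg n), Complex.ofReal_neg, Complex.cpow_neg, div_eq_mul_inv]
      simp
  have hsum : Summable t := by
    have := AF.zsum K hs
    unfold LSeriesSummable at this
    rw [← Complex.summable_ofReal]
    exact this.congr hterm
  refine ⟨∑' n, t n, tsum_nonneg ht, ?_, ?_⟩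
  · unfold AF.Zi
    rw [← ENNReal.tsum_fiberwise _ (fun I : Ideal (𝓞 K) => absNorm I), ENNReal.ofReal_tsum_of_nonneg ht hsum]
    refine tsum_congr fun n => ?_
    have : ∀ b : ((fun I : Ideal (𝓞 K) => absNorm I) ⁻¹' {n}), AF.W s (absNorm b.1) = AF.W s n := fun b => by
      have := b.2
      simp only [Set.mem_preimage, Set.mem_singleton_iff] at this
      rw [this]
    simp_rw [this]
    simp only [t, AF.W]
    split_ifs with h
    · simp
    · rw [ENNReal.ofReal_mul (by positivity), ENNReal.tsum_const]
      congr 1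
      have hfin : Finite ((fun I : Ideal (𝓞 K) => absNorm I) ⁻¹' {n}) := finite_setOfPred_absNorm_eq n
      rw [ENat.card_eq_coe_natCard]
      rw [ENNReal.ofReal_natCast]
      rfl
  · unfold dedekindZeta LSeries
    rw [Complex.ofReal_tsum]
    exact tsum_congr hterm

lemma AF.zi_lim : Tendsto (fun s : ℝ => (s - 1) * (AF.Zi K s).toReal) (𝓝[>] 1) (𝓝 (dedekindZeta_residue K)) := by
  have h := tendsto_sub_one_mul_dedekindZeta_nhdsGT K
  have h2 := (Complex.continuous_re.tendsto _).comp h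
  refine Tendsto.congr' ?_ h2
  filter_upwards [self_mem_nhdsWithin] with s hs
  obtain ⟨z, hz, h1, h2⟩ := AF.zi_eq K hs
  simp only [Function.comp, h1, h2]
  rw [ENNReal.toReal_ofReal hz]
  have : ((s : ℂ) - 1) * z = ((((s - 1) * z) : ℝ) : ℂ) := by push_cast; rfl
  rw [this, Complex.ofReal_re]

lemma AF.no_ineq (L : Type*) [Field L] [NumberField L] (C : ℝ≥0∞) (hC : C ≠ ∞)
    (h : ∀ s : ℝ, 1 < s → AF.Zi K s * AF.Zi K s ≤ C * AF.Zi L s) : False := by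
  have hK := AF.zi_lim K
  have hL := AF.zi_lim L
  have h0 : Tendsto (fun s : ℝ => s - 1) (𝓝[>] 1) (𝓝 0) := by
    have : Tendsto (fun s : ℝ => s - 1) (𝓝 1) (𝓝 (1 - 1)) := (continuous_sub_right 1).tendsto 1
    rw [sub_self] at this
    exact this.mono_left nhdsWithin_le_nhds
  have h1 := hK.mul hK
  have h2 := (hL.const_mul C.toReal).mul h0
  have h3 : dedekindZeta_residue K * dedekindZeta_residue K ≤ C.toReal * dedekindZeta_residue L * 0 := by
    refine le_of_tendsto_of_tendsto h1 h2 ?_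
    filter_upwards [self_mem_nhdsWithin] with s hs
    obtain ⟨z, hz, hz1, -⟩ := AF.zi_eq K hs
    obtain ⟨y, hy, hy1, -⟩ := AF.zi_eq L hs
    have := h s hs
    have hs' : 0 < s - 1 := sub_pos.2 hs
    have h4 : (AF.Zi K s).toReal * (AF.Zi K s).toReal ≤ C.toReal * (AF.Zi L s).toReal := by
      rw [← ENNReal.toReal_mul, ← ENNReal.toReal_mul]
      refine ENNReal.toReal_mono ?_ this
      rw [hy1]
      exact ENNReal.mul_ne_top hC ENNReal.ofReal_ne_top
    nlinarith [mul_le_mul_of_nonneg_left h4 (mul_pos hs' hs').le]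
  have := dedekindZeta_residue_pos K
  nlinarith
end
end

section
open scoped ENNReal

section
open Ideal NumberField IsDedekindDomain

lemma AF.W_one (s : ℝ) : AF.W s 1 = 1 := by simp [AF.W]

lemma AF.W_mul (s : ℝ) (a b : ℕ) : AF.W s (a * b) = AF.W s a * AF.W s b := by
  unfold AF.W
  by_cases ha : a = 0
  · simp [ha]
  by_cases hb : b = 0
  · simp [hb]
  simp only [ha, hb, mul_eq_zero, or_self, if_false]
  rw [← ENNReal.ofReal_mul (by positivity), Nat.cast_mul, Real.mul_rpow (by positivity) (by positivity)]

lemma AF.W_anti {s : ℝ} (hs : 1 < s) {a b : ℕ} (ha : a ≠ 0) (hab : a ≤ b) : AF.W s b ≤ AF.W s a := by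
  unfold AF.W
  rw [if_neg ha, if_neg (by omega)]
  refine ENNReal.ofReal_le_ofReal ?_
  exact Real.rpow_le_rpow_of_nonpos (by positivity) (by exact_mod_cast hab) (by linarith)

lemma AF.W_half {s : ℝ} (hs : 1 < s) {b : ℕ} (hb : 2 ≤ b) : AF.W s b ≤ 2⁻¹ := by
  refine (AF.W_anti hs two_ne_zero hb).trans ?_
  unfold AF.W
  rw [if_neg two_ne_zero]
  have : ((2 : ℕ) : ℝ) ^ (-s) ≤ ((2 : ℕ) : ℝ) ^ (-1 : ℝ) := Real.rpow_le_rpow_of_exponent_le (by norm_num) (by linarith)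
  refine (ENNReal.ofReal_le_ofReal this).trans (le_of_eq ?_)
  rw [Real.rpow_neg_one, ENNReal.ofReal_inv_of_pos (by norm_num)]
  norm_num

variable (K : Type*) [Field K] [NumberField K]

local notation "P" => HeightOneSpectrum (𝓞 K)

lemma AF.W_prod (s : ℝ) (m : Multiset P) :
    AF.W s (absNorm (m.map (fun v => v.asIdeal)).prod) = (m.map (fun v => AF.W s (absNorm v.asIdeal))).prod := by
  induction m using Multiset.induction_on with
  | empty => simp [AF.W_one]
  | cons a m ih => simp [AF.W_mul, ih]

lemma AF.Zi_le (s : ℝ) : AF.Zi K s ≤ AF.Zs (Set.univ : Set P) (fun v => AF.W s (absNorm v.asIdeal)) := by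
  have h1 : AF.Zi K s = ∑' I : {I : Ideal (𝓞 K) // I ≠ ⊥}, AF.W s (absNorm I.1) := by
    unfold AF.Zi
    refine (tsum_subtype_eq_of_support_subset (s := {I : Ideal (𝓞 K) | I ≠ ⊥}) ?_).symm
    intro I hI h0
    apply hI
    rw [h0]
    simp [AF.W]
  rw [h1]
  unfold AF.Zs
  let f : {m : Multiset P // ∀ x ∈ m, x ∈ (Set.univ : Set P)} → {I : Ideal (𝓞 K) // I ≠ ⊥} :=
    fun m => ⟨(m.1.map (fun v => v.asIdeal)).prod, by
      intro h
      rw [← Ideal.zero_eq_bot, Multiset.prod_eq_zero_iff] at h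
      obtain ⟨v, -, hv⟩ := Multiset.mem_map.1 h
      exact v.ne_bot hv⟩
  have hf : Function.Surjective f := by
    rintro ⟨I, hI⟩
    have key : ∀ I : Ideal (𝓞 K), I ≠ 0 → ∃ m : Multiset P, (m.map (fun v => v.asIdeal)).prod = I := by
      intro I
      refine UniqueFactorizationMonoid.induction_on_prime I (fun h => (h rfl).elim) (fun x hx _ => ⟨0, ?_⟩) ?_
      · rw [Ideal.isUnit_iff.1 hx]; simp
      · intro a p ha hp ih _
        obtain ⟨m, hm⟩ := ih ha
        refine ⟨⟨p, Ideal.isPrime_of_prime hp, hp.ne_zero⟩ ::ₘ m, ?_⟩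
        simp [hm]
    obtain ⟨m, hm⟩ := key I hI
    exact ⟨⟨m, fun _ _ => trivial⟩, Subtype.ext hm⟩
  refine (ENNReal.tsum_le_tsum_comp_of_surjective hf _).trans (le_of_eq ?_)
  refine tsum_congr fun m => ?_
  exact AF.W_prod K s m.1

lemma AF.le_Zi (s : ℝ) : ∑' m : Multiset P, (m.map (fun v => AF.W s (absNorm v.asIdeal))).prod ≤ AF.Zi K s := by
  have hinj : Function.Injective (fun m : Multiset P => (m.map (fun v => v.asIdeal)).prod) := by
    intro m n h
    have key : ∀ m : Multiset P, UniqueFactorizationMonoid.normalizedFactors (m.map (fun v => v.asIdeal)).prod = m.map (fun v => v.asIdeal) := by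
      intro m
      refine UniqueFactorizationMonoid.normalizedFactors_prod_of_prime ?_
      intro p hp
      obtain ⟨v, -, rfl⟩ := Multiset.mem_map.1 hp
      exact v.prime
    have h2 : m.map (fun v => v.asIdeal) = n.map (fun v => v.asIdeal) := by
      rw [← key m, ← key n]
      exact congrArg _ h
    exact Multiset.map_injective (fun v w h => HeightOneSpectrum.ext h) h2
  refine le_trans (le_of_eq ?_) (ENNReal.tsum_comp_le_tsum_of_injective hinj _)
  exact tsum_congr fun m => (AF.W_prod K s m).symm

theorem AF.half_bound (S : Finset P) {s : ℝ} (hs : 1 < s) : AF.Zs (S : Set P) (fun v => AF.W s (absNorm v.asIdeal)) ≤ 2 ^ S.card := by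
  refine (AF.Zs_finset _ _).trans ?_
  refine Finset.prod_le_pow_card _ _ _ fun v _ => ?_
  have h5 : 2 ≤ absNorm v.asIdeal := by
    have h6 : absNorm v.asIdeal ≠ 0 := fun h => v.ne_bot (Ideal.absNorm_eq_zero_iff.1 h)
    have h7 : absNorm v.asIdeal ≠ 1 := fun h => v.isPrime.ne_top (Ideal.absNorm_eq_one_iff.1 h)
    omega
  have h8 := AF.W_half hs h5
  have h9 : (2 : ℝ≥0∞)⁻¹ ≤ 1 - AF.W s (absNorm v.asIdeal) := by
    refine le_trans (le_of_eq ?_) (tsub_le_tsub_left h8 1)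
    exact ENNReal.one_sub_inv_two.symm
  calc (1 - AF.W s (absNorm v.asIdeal))⁻¹ ≤ ((2 : ℝ≥0∞)⁻¹)⁻¹ := ENNReal.inv_le_inv.2 h9
    _ = 2 := inv_inv _

lemma AF.mul4 {a b c d e : ℝ≥0∞} (h : a ≤ b * c) (hb : b ≤ d) (hc : c * c ≤ e) : a * a ≤ d * d * e := by
  calc a * a ≤ (b * c) * (b * c) := mul_le_mul' h h
    _ = (b * b) * (c * c) := by ring
    _ ≤ _ := mul_le_mul' (mul_le_mul' hb hb) hc

theorem AF.no_split (L : Type*) [Field L] [NumberField L] (S : Finset P) (f g : P → HeightOneSpectrum (𝓞 L))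
    (hf : Set.InjOn f (S : Set P)ᶜ) (hg : Set.InjOn g (S : Set P)ᶜ)
    (hfg : ∀ x ∈ (S : Set P)ᶜ, ∀ y ∈ (S : Set P)ᶜ, f x ≠ g y) (hfw : ∀ x ∈ (S : Set P)ᶜ, absNorm (f x).asIdeal ≤ absNorm x.asIdeal)
    (hgw : ∀ x ∈ (S : Set P)ᶜ, absNorm (g x).asIdeal ≤ absNorm x.asIdeal) : False := by
  have hne : ∀ v : HeightOneSpectrum (𝓞 L), absNorm v.asIdeal ≠ 0 := fun v h => v.ne_bot (Ideal.absNorm_eq_zero_iff.1 h)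
  refine AF.no_ineq K L ((2 ^ S.card) * (2 ^ S.card)) (ENNReal.mul_ne_top (ENNReal.pow_ne_top (by simp)) (ENNReal.pow_ne_top (by simp))) fun s hs => ?_
  have hA : ∀ x ∈ (S : Set P)ᶜ, AF.W s (absNorm x.asIdeal) ≤ AF.W s (absNorm (f x).asIdeal) := by
    intro x hx
    exact AF.W_anti hs (hne (f x)) (hfw x hx)
  have hB : ∀ x ∈ (S : Set P)ᶜ, AF.W s (absNorm x.asIdeal) ≤ AF.W s (absNorm (g x).asIdeal) := by
    intro x hx
    exact AF.W_anti hs (hne (g x)) (hgw x hx)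
  have h1 : AF.Zs (S : Set P)ᶜ (fun v : P => AF.W s (absNorm v.asIdeal)) * AF.Zs (S : Set P)ᶜ (fun v : P => AF.W s (absNorm v.asIdeal)) ≤
      ∑' m : Multiset (HeightOneSpectrum (𝓞 L)), (m.map (fun v : HeightOneSpectrum (𝓞 L) => AF.W s (absNorm v.asIdeal))).prod :=
    AF.Zs_sq (α := P) (β := HeightOneSpectrum (𝓞 L)) (S : Set P)ᶜ (fun v : P => AF.W s (absNorm v.asIdeal)) (fun v : HeightOneSpectrum (𝓞 L) => AF.W s (absNorm v.asIdeal)) f g hf hg hfg hA hB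
  have h2 := AF.Zi_le K s
  rw [← Set.union_compl_self (S : Set P)] at h2
  have h3 := h2.trans (AF.Zs_union _ _ _)
  exact AF.mul4 h3 (AF.half_bound K S hs) (h1.trans (AF.le_Zi L s))
end
end

section
section
open Polynomial NumberField
lemma AF.quad.{u} (K : Type u) [Field K] [NumberField K] (α : K) (h : ∀ b, b^2 ≠ α)
    (Q : Prop) (H : ∀ (L : Type u) [Field L] [NumberField L] [Algebra K L] (θ : L), θ ^ 2 = algebraMap K L α →
      Algebra.trace K L 1 = 2 → Algebra.trace K L θ = 0 → (∀ x : L, ∃ a b : K, x = algebraMap K L a + algebraMap K L b * θ) → Q) : Q := by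
  have hi : Irreducible (X ^ 2 - C α) := X_pow_sub_C_irreducible_of_prime Nat.prime_two (fun b => h b)
  have : Fact (Irreducible (X ^ 2 - C α)) := ⟨hi⟩
  have hm : (X ^ 2 - C α).Monic := monic_X_pow_sub_C _ two_ne_zero
  let pb := AdjoinRoot.powerBasis hi.ne_zero
  have hd : pb.dim = 2 := by simp [pb]
  have : Module.Finite K (AdjoinRoot (X ^ 2 - C α)) := pb.finite
  have : NumberField (AdjoinRoot (X ^ 2 - C α)) := NumberField.of_module_finite K _
  have h1 : Module.finrank K (AdjoinRoot (X ^ 2 - C α)) = 2 := by rw [pb.finrank, hd]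
  have h2 : Algebra.trace K (AdjoinRoot (X ^ 2 - C α)) (AdjoinRoot.root _) = 0 := by
    have := pb.trace_gen_eq_nextCoeff_minpoly
    rw [show pb.gen = AdjoinRoot.root _ from AdjoinRoot.powerBasis_gen hi.ne_zero] at this
    rw [this, AdjoinRoot.minpoly_root hi.ne_zero, hm.leadingCoeff]
    simp [nextCoeff]
  have h3 : ∀ x : (AdjoinRoot (X ^ 2 - C α)), ∃ a b : K, x = algebraMap K _ a + algebraMap K _ b * AdjoinRoot.root _ := by
    intro x
    have := pb.basis.sum_repr x
    rw [← (finCongr hd).symm.sum_comp] at this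
    simp only [Fin.sum_univ_two, pb.basis_eq_pow] at this
    refine ⟨(pb.basis.repr x) ((finCongr hd).symm 0), (pb.basis.repr x) ((finCongr hd).symm 1), ?_⟩
    rw [show pb.gen = AdjoinRoot.root _ from AdjoinRoot.powerBasis_gen hi.ne_zero] at this
    conv_lhs => rw [← this]
    simp [Algebra.smul_def]
  refine H (AdjoinRoot (X ^ 2 - C α)) (AdjoinRoot.root _) ?_ ?_ h2 h3
  · have := AdjoinRoot.eval₂_root (X ^ 2 - C α)
    rw [eval₂_sub, eval₂_pow, eval₂_X, eval₂_C, sub_eq_zero] at this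
    exact this
  · have := Algebra.trace_algebraMap_of_basis pb.basis (1 : K)
    rw [map_one] at this
    rw [this]
    simp [hd]
end

section
open NumberField IsDedekindDomain
variable {K : Type*} [Field K] [NumberField K]
local notation "P" => HeightOneSpectrum (𝓞 K)

lemma AF.quad_prime {L : Type*} [Field L] [NumberField L] [Algebra K L] (θ : L) (α : 𝓞 K) (hθ : θ ^ 2 = algebraMap K L α)
    (h1 : Algebra.trace K L 1 = 2) (h0 : Algebra.trace K L θ = 0) (hs : ∀ x : L, ∃ a b : K, x = algebraMap K L a + algebraMap K L b * θ)
    (v : P) (h2v : (2 : 𝓞 K) ∉ v.asIdeal) (hαv : α ∉ v.asIdeal) :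
    ∃ t : 𝓞 L, ∀ r : 𝓞 K, r ^ 2 - α ∈ v.asIdeal → ∃ p : HeightOneSpectrum (𝓞 L), p.asIdeal.comap (algebraMap (𝓞 K) (𝓞 L)) = v.asIdeal ∧
      t - algebraMap (𝓞 K) (𝓞 L) r ∈ p.asIdeal ∧ Ideal.absNorm p.asIdeal ≤ Ideal.absNorm v.asIdeal := by
  have hint : IsIntegral ℤ θ := by
    refine IsIntegral.of_pow (n := 2) two_pos ?_
    rw [hθ]
    exact (α.isIntegral_coe).algebraMap
  let t : 𝓞 L := ⟨θ, hint⟩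
  have ht2 : t ^ 2 = algebraMap (𝓞 K) (𝓞 L) α := by
    apply RingOfIntegers.ext
    exact hθ
  let T := Algebra.intTrace (𝓞 K) (𝓞 L)
  have hT : ∀ x : 𝓞 L, algebraMap (𝓞 K) K (T x) = Algebra.trace K L (algebraMap (𝓞 L) L x) := fun x => Algebra.algebraMap_intTrace x
  have hT1 : T 1 = 2 := by
    apply RingOfIntegers.ext
    change algebraMap (𝓞 K) K _ = algebraMap (𝓞 K) K _
    rw [hT, map_one, h1, map_ofNat]
  have hTt : T t = 0 := by
    apply RingOfIntegers.ext
    change algebraMap (𝓞 K) K _ = algebraMap (𝓞 K) K _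
    rw [hT, map_zero]
    exact h0
  have hid : ∀ x : 𝓞 L, algebraMap (𝓞 K) (𝓞 L) (2 * α) * x = algebraMap (𝓞 K) (𝓞 L) (α * T x) + t * algebraMap (𝓞 K) (𝓞 L) (T (x * t)) := by
    intro x
    apply RingOfIntegers.ext
    change algebraMap (𝓞 L) L _ = algebraMap (𝓞 L) L _
    obtain ⟨a, b, hab⟩ := hs (algebraMap (𝓞 L) L x)
    have e1 : Algebra.trace K L (algebraMap (𝓞 L) L x) = 2 * a := by
      rw [hab, map_add, ← mul_one (algebraMap K L a), ← Algebra.smul_def, ← Algebra.smul_def, map_smul, map_smul, h1, h0]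
      simp [mul_comm]
    have e2 : Algebra.trace K L (algebraMap (𝓞 L) L x * θ) = 2 * b * α := by
      have : algebraMap (𝓞 L) L x * θ = a • θ + (b * α) • (1 : L) := by
        rw [hab, Algebra.smul_def, Algebra.smul_def, map_mul, ← hθ]; ring
      rw [this, map_add, map_smul, map_smul, h1, h0]
      simp; ring
    have c : ∀ y : 𝓞 K, algebraMap (𝓞 L) L (algebraMap (𝓞 K) (𝓞 L) y) = algebraMap K L (algebraMap (𝓞 K) K y) := fun y => rfl
    simp only [map_mul, map_add, c, hT]
    have ct : algebraMap (𝓞 L) L t = θ := rfl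
    rw [ct, e1, e2, hab]
    simp only [map_mul, map_ofNat]
    rw [← hθ]
    ring
  have hTv : ∀ y ∈ v.asIdeal.map (algebraMap (𝓞 K) (𝓞 L)), T y ∈ v.asIdeal := by
    intro y hy
    refine Submodule.span_induction ?_ ?_ ?_ ?_ (p := fun y _ => ∀ z : 𝓞 L, T (z * y) ∈ v.asIdeal) hy 1 |> (by simpa using ·)
    · rintro _ ⟨a, ha, rfl⟩ z
      rw [mul_comm, ← Algebra.smul_def, map_smul, smul_eq_mul]
      exact Ideal.mul_mem_right _ _ ha
    · intro z; simp
    · intro a b _ _ ha hb z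
      rw [mul_add, map_add]
      exact Ideal.add_mem _ (ha z) (hb z)
    · intro a b _ hb z
      rw [smul_eq_mul, ← mul_assoc]
      exact hb _
  refine ⟨t, fun r hr => ?_⟩
  have hrv : r ∉ v.asIdeal := by
    intro h
    apply hαv
    have := Ideal.sub_mem _ (Ideal.pow_mem_of_mem _ h 2 two_pos) hr
    simpa using this
  have h2rv : 2 * r ∉ v.asIdeal := fun h => (v.isPrime.mem_or_mem h).elim h2v hrv
  have hne : v.asIdeal.map (algebraMap (𝓞 K) (𝓞 L)) ⊔ Ideal.span {t - algebraMap (𝓞 K) (𝓞 L) r} ≠ ⊤ := by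
    intro h
    obtain ⟨y, hy, z, hz, hyz⟩ := Submodule.mem_sup.1 ((Ideal.eq_top_iff_one _).1 h)
    obtain ⟨w, rfl⟩ := Ideal.mem_span_singleton'.1 hz
    have h5 : t + algebraMap (𝓞 K) (𝓞 L) r ∈ v.asIdeal.map (algebraMap (𝓞 K) (𝓞 L)) := by
      have : t + algebraMap (𝓞 K) (𝓞 L) r = (t + algebraMap (𝓞 K) (𝓞 L) r) * y - w * algebraMap (𝓞 K) (𝓞 L) (r ^ 2 - α) := by
        rw [map_sub, map_pow, ← ht2]
        linear_combination (-(t + algebraMap (𝓞 K) (𝓞 L) r)) * hyz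
      rw [this]
      exact Ideal.sub_mem _ (Ideal.mul_mem_left _ _ hy) (Ideal.mul_mem_left _ _ (Ideal.mem_map_of_mem _ hr))
    have h6 := hTv _ h5
    rw [map_add, hTt, ← mul_one (algebraMap _ _ r), ← Algebra.smul_def, map_smul, hT1, zero_add, smul_eq_mul, mul_comm] at h6
    exact h2rv h6
  obtain ⟨p, hp, hle⟩ := Ideal.exists_le_maximal _ hne
  have hpr : p.IsPrime := hp.isPrime
  have hvp : v.asIdeal.map (algebraMap (𝓞 K) (𝓞 L)) ≤ p := le_sup_left.trans hle
  have htp : t - algebraMap (𝓞 K) (𝓞 L) r ∈ p := hle (Ideal.mem_sup_right (Ideal.mem_span_singleton_self _))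
  have hpb : p ≠ ⊥ := by
    rintro rfl
    apply v.ne_bot
    rw [le_bot_iff, Ideal.map_eq_bot_iff_of_injective] at hvp
    · exact hvp
    · exact FaithfulSMul.algebraMap_injective _ _
  have hcomap : p.comap (algebraMap (𝓞 K) (𝓞 L)) = v.asIdeal := by
    refine (v.isMaximal.eq_of_le (Ideal.comap_ne_top _ hpr.ne_top) ?_).symm
    exact Ideal.map_le_iff_le_comap.1 hvp
  refine ⟨⟨p, hpr, hpb⟩, hcomap, htp, ?_⟩
  rw [Ideal.absNorm_apply, Ideal.absNorm_apply, Submodule.cardQuot_apply, Submodule.cardQuot_apply]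
  have hfin : Finite (𝓞 K ⧸ v.asIdeal) := Ideal.finiteQuotientOfFreeOfNeBot v.asIdeal v.ne_bot
  refine Nat.card_le_card_of_surjective (Ideal.quotientMap p (algebraMap (𝓞 K) (𝓞 L)) hcomap.ge) ?_
  intro x
  obtain ⟨x, rfl⟩ := Ideal.Quotient.mk_surjective x
  have h2α : 2 * α ∉ v.asIdeal := fun h => (v.isPrime.mem_or_mem h).elim h2v hαv
  obtain ⟨d, y, hy, hd⟩ := (v.isMaximal).exists_inv h2α
  refine ⟨Ideal.Quotient.mk _ (d * (α * T x + r * T (x * t))), ?_⟩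
  rw [Ideal.quotientMap_mk, Ideal.Quotient.mk_eq_mk_iff_sub_mem]
  have hyp : algebraMap (𝓞 K) (𝓞 L) y ∈ p := hvp (Ideal.mem_map_of_mem _ hy)
  have hdd : algebraMap (𝓞 K) (𝓞 L) d * algebraMap (𝓞 K) (𝓞 L) (2 * α) + algebraMap (𝓞 K) (𝓞 L) y = 1 := by
    rw [← map_mul, ← map_add, hd, map_one]
  have : algebraMap (𝓞 K) (𝓞 L) (d * (α * T x + r * T (x * t))) - x =
      - (algebraMap (𝓞 K) (𝓞 L) d * algebraMap (𝓞 K) (𝓞 L) (T (x * t))) * (t - algebraMap (𝓞 K) (𝓞 L) r) - x * algebraMap (𝓞 K) (𝓞 L) y := by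
    have := hid x
    simp only [map_mul, map_add] at this hdd ⊢
    linear_combination x * hdd - algebraMap (𝓞 K) (𝓞 L) d * this
  rw [this]
  exact Ideal.sub_mem _ (Ideal.mul_mem_left _ _ htp) (Ideal.mul_mem_left _ _ hyp)

lemma AF.fin_mem {a : 𝓞 K} (ha : a ≠ 0) : {v : P | a ∈ v.asIdeal}.Finite := by
  refine (Ideal.finite_factors (I := Ideal.span {a}) (by simpa using ha)).subset ?_
  intro v hv
  exact Ideal.dvd_span_singleton.2 hv

theorem AF.exists_nonres (α : 𝓞 K) (hα : ∀ b : K, b ^ 2 ≠ α) (S : Finset P) :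
    ∃ v ∉ S, (2 : 𝓞 K) ∉ v.asIdeal ∧ α ∉ v.asIdeal ∧ AF.chi v α = -1 := by
  classical
  by_contra! hcon
  have hα0 : α ≠ 0 := by rintro rfl; exact hα 0 (by simp)
  refine AF.quad K (α : K) hα False ?_
  intro L _ _ _ θ hθ h1 h0 hs
  obtain ⟨p0, hp0, hp0'⟩ := Ring.not_isField_iff_exists_prime.1 (RingOfIntegers.not_isField L)
  let S' : Finset P := S ∪ (AF.fin_mem (K := K) (a := 2 * α) (mul_ne_zero two_ne_zero hα0)).toFinset
  have hS' : ∀ v : P, v ∉ S' → v ∉ S ∧ (2 : 𝓞 K) ∉ v.asIdeal ∧ α ∉ v.asIdeal := by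
    intro v hv
    simp only [S', Finset.mem_union, Set.Finite.mem_toFinset, Set.mem_ofPred_eq, not_or] at hv
    exact ⟨hv.1, fun h => hv.2 (Ideal.mul_mem_right _ _ h), fun h => hv.2 (Ideal.mul_mem_left _ _ h)⟩
  have key : ∀ v : P, ∃ p q : HeightOneSpectrum (𝓞 L), v ∉ S' →
      (p.asIdeal.comap (algebraMap (𝓞 K) (𝓞 L)) = v.asIdeal ∧ q.asIdeal.comap (algebraMap (𝓞 K) (𝓞 L)) = v.asIdeal ∧ p ≠ q ∧
       Ideal.absNorm p.asIdeal ≤ Ideal.absNorm v.asIdeal ∧ Ideal.absNorm q.asIdeal ≤ Ideal.absNorm v.asIdeal) := by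
    intro v
    by_cases hv : v ∈ S'
    · exact ⟨⟨p0, hp0', hp0⟩, ⟨p0, hp0', hp0⟩, fun h => (h hv).elim⟩
    obtain ⟨hvS, h2v, hαv⟩ := hS' v hv
    have hch := hcon v hvS h2v hαv
    have hr : ∃ r : 𝓞 K, r ^ 2 - α ∈ v.asIdeal := by
      by_contra hr
      exact hch (if_neg hr)
    obtain ⟨r, hr⟩ := hr
    obtain ⟨t, ht⟩ := AF.quad_prime θ α hθ h1 h0 hs v h2v hαv
    obtain ⟨p, hp1, hp2, hp3⟩ := ht r hr
    obtain ⟨q, hq1, hq2, hq3⟩ := ht (-r) (by rwa [neg_sq])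
    refine ⟨p, q, fun _ => ⟨hp1, hq1, ?_, hp3, hq3⟩⟩
    rintro rfl
    have := Ideal.sub_mem _ hq2 hp2
    have h3 : (2 * r) ∈ p.asIdeal.comap (algebraMap (𝓞 K) (𝓞 L)) := by
      rw [Ideal.mem_comap]
      convert this using 1
      simp only [map_mul, map_neg, map_ofNat]; ring
    rw [hp1] at h3
    rcases v.isPrime.mem_or_mem h3 with h | h
    · exact h2v h
    · apply hαv
      have := Ideal.sub_mem _ (Ideal.pow_mem_of_mem _ h 2 two_pos) hr
      simpa using this
  choose f g hfg using key
  have hm : ∀ x : P, x ∈ (S' : Set P)ᶜ → x ∉ S' := fun x hx h => hx (Finset.mem_coe.2 h)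
  refine AF.no_split K L S' f g ?_ ?_ ?_ ?_ ?_
  · intro x hx y hy h
    apply HeightOneSpectrum.ext
    rw [← (hfg x (hm x hx)).1, ← (hfg y (hm y hy)).1, h]
  · intro x hx y hy h
    apply HeightOneSpectrum.ext
    rw [← (hfg x (hm x hx)).2.1, ← (hfg y (hm y hy)).2.1, h]
  · intro x hx y hy h
    have : x = y := by
      apply HeightOneSpectrum.ext
      rw [← (hfg x (hm x hx)).1, ← (hfg y (hm y hy)).2.1, h]
    subst this
    exact (hfg x (hm x hx)).2.2.1 h
  · intro x hx
    exact (hfg x (hm x hx)).2.2.2.1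
  · intro x hx
    exact (hfg x (hm x hx)).2.2.2.2
end
end

section
open NumberField
open scoped nonZeroDivisors

section

variable {K : Type*} [Field K] [NumberField K]

local notation "F" => FractionalIdeal (𝓞 K)⁰ K
local notation "sp" => FractionalIdeal.spanSingleton (𝓞 K)⁰
local notation "P" => IsDedekindDomain.HeightOneSpectrum (𝓞 K)

lemma AF.sqf (N : Ideal (𝓞 K)) (hN : N ≠ ⊥) :
    ∃ (S : Finset P) (B : Ideal (𝓞 K)), B ≠ ⊥ ∧ N = AF.JI S * B ^ 2 := by
  classical
  revert hN
  refine UniqueFactorizationMonoid.induction_on_prime N (fun h => (h rfl).elim) (fun x hx _ => ⟨∅, ⊤, ?_, ?_⟩) ?_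
  · simp
  · rw [Ideal.isUnit_iff.1 hx]; simp only [AF.JI, Finset.prod_empty, one_mul, pow_two, Ideal.top_mul]
  · intro a p ha hp ih _
    obtain ⟨S, B, hB, h⟩ := ih ha
    let v : P := ⟨p, Ideal.isPrime_of_prime hp, hp.ne_zero⟩
    by_cases hv : v ∈ S
    · refine ⟨S.erase v, p * B, mul_ne_zero hp.ne_zero hB, ?_⟩
      have e : AF.JI S = p * AF.JI (S.erase v) := by
        unfold AF.JI; rw [← Finset.mul_prod_erase _ _ hv]
      rw [h, e]; ring
    · refine ⟨insert v S, B, hB, ?_⟩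
      have e : AF.JI (insert v S) = p * AF.JI S := by
        unfold AF.JI; rw [Finset.prod_insert hv]
      rw [h, e]; ring

lemma AF.approx (I : F) (hI : I ≠ 0) (m : Ideal (𝓞 K)) (hm : m ≠ ⊥) :
    ∃ (x : K) (N : Ideal (𝓞 K)), x ≠ 0 ∧ sp x * I = (N : F) ∧ IsCoprime N m := by
  obtain ⟨d, J, hd, hJ⟩ := FractionalIdeal.exists_eq_spanSingleton_mul (I⁻¹)
  have hJ0 : J ≠ ⊥ := by
    rintro rfl
    rw [FractionalIdeal.coeIdeal_bot, mul_zero] at hJ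
    exact inv_ne_zero hI hJ
  have h2 : Ideal.span {(2 : 𝓞 K)} ≠ ⊥ := by simp
  have h2t : Ideal.span {(2 : 𝓞 K)} ≠ ⊤ := by
    rw [Ne, Ideal.span_singleton_eq_top]
    intro h
    have := NumberField.isUnit_iff_norm.1 h
    have e : (RingOfIntegers.norm ℚ (2 : 𝓞 K) : ℚ) = 2 ^ Module.finrank ℚ K := by
      rw [RingOfIntegers.coe_norm]
      have := Algebra.norm_algebraMap (S := K) (2 : ℚ)
      rw [show ((2 : 𝓞 K) : K) = algebraMap ℚ K 2 from by rw [map_ofNat]; rfl]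
      exact this
    rw [e, abs_of_pos (by positivity), pow_eq_one_iff_of_nonneg (by norm_num) Module.finrank_pos.ne'] at this
    norm_num at this
  obtain ⟨x0, hx0⟩ := IsDedekindDomain.exists_sup_span_eq (I := (m * Ideal.span {2}) * J) (J := J) Ideal.mul_le_right
    (mul_ne_zero (mul_ne_zero hm h2) hJ0)
  have hx0J : Ideal.span {x0} ≤ J := by
    conv_rhs => rw [← hx0]
    exact le_sup_right
  obtain ⟨N, hN⟩ := Ideal.dvd_iff_le.2 hx0J
  have hcop : N ⊔ (m * Ideal.span {2}) = ⊤ := by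
    have : J * (N ⊔ (m * Ideal.span {2})) = J * ⊤ := by
      rw [Ideal.mul_sup, ← hN, sup_comm, mul_comm J, hx0, Ideal.mul_top]
    exact mul_left_cancel₀ hJ0 this
  have hx00 : x0 ≠ 0 := by
    rintro rfl
    rw [Ideal.span_singleton_zero] at hN
    have hN0 : N = ⊥ := (mul_eq_zero.1 hN.symm).resolve_left hJ0
    rw [hN0, bot_sup_eq] at hcop
    exact h2t (top_le_iff.1 (hcop ▸ Ideal.mul_le_right))
  have hd' : (d : K) ≠ 0 := by simpa using hd
  have hx0' : (x0 : K) ≠ 0 := by simpa using hx00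
  refine ⟨(x0 : K) / d, N, div_ne_zero hx0' hd', ?_, ?_⟩
  · have e1 : I = sp (d : K) * (J : F)⁻¹ := by
      rw [← inv_inv I, hJ, mul_inv, FractionalIdeal.spanSingleton_inv, inv_inv]
    have e2 : sp (x0 : K) = (J : F) * (N : F) := by
      rw [AF.sp_coe, hN, FractionalIdeal.coeIdeal_mul]
    rw [e1, ← mul_assoc, ← AF.sp_mul, div_mul_cancel₀ _ hd', e2, mul_comm (J : F), mul_assoc, mul_inv_cancel₀ (AF.coe_ne hJ0), mul_one]
  · rw [Ideal.isCoprime_iff_sup_eq]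
    rw [eq_top_iff, ← hcop]
    exact sup_le_sup_left Ideal.mul_le_left _

lemma AF.exists_Dat (M : 𝓞 K) (hM : M ≠ 0) : ∃ (δ : K) (b : F) (S : Finset P), AF.Dat δ b S ∧ ∀ v ∈ S, M ∉ v.asIdeal := by
  classical
  obtain ⟨x, N, hx, hN, hc⟩ := AF.approx (AF.Cd K)⁻¹ (inv_ne_zero AF.Cd_ne_zero) (Ideal.span {2 * M}) (by simp [hM])
  have hN0 : N ≠ ⊥ := by
    rintro rfl
    rw [FractionalIdeal.coeIdeal_bot] at hN
    exact mul_ne_zero (AF.sp_ne hx) (inv_ne_zero AF.Cd_ne_zero) hN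
  obtain ⟨S, B, hB, hS⟩ := AF.sqf N hN0
  have h2M : ∀ v ∈ S, 2 * M ∉ v.asIdeal := by
    intro v hv h2
    have h1 : N ≤ v.asIdeal := by
      rw [hS]; exact Ideal.mul_le_left.trans (AF.JI_le hv).1
    have h3 := hc.symm.of_isCoprime_of_dvd_right (Ideal.dvd_iff_le.2 h1)
    rw [AF.cop_v, Ideal.span_singleton_le_iff_mem] at h3
    exact h3 h2
  refine ⟨x, (B : F)⁻¹, S, ⟨hx, inv_ne_zero (AF.coe_ne hB), ?_, ?_⟩, fun v hv h => h2M v hv (Ideal.mul_mem_left _ _ h)⟩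
  · exact fun v hv h => h2M v hv (Ideal.mul_mem_right _ _ h)
  · have e : sp x = (N : F) * AF.Cd K := by
      rw [← hN, mul_assoc, inv_mul_cancel₀ AF.Cd_ne_zero, mul_one]
    rw [e, hS, FractionalIdeal.coeIdeal_mul, FractionalIdeal.coeIdeal_pow]
    have := AF.coe_ne (K := K) hB
    field_simp
end
end

section
section
variable {Q ι : Type*} [CommGroup Q] [Finite Q] [DecidableEq ι]

lemma AF.dual1 (ψ : ι → Q →* ℤˣ) (h : ∀ c : Q, c ≠ 1 → ∀ S : Finset ι, ∃ v ∉ S, ψ v c = -1) (n : ℕ) :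
    ∀ (S0 : Finset ι) (H : Subgroup Q), Nat.card H = 2 ^ n →
    ∃ V : Finset ι, V.card = n ∧ (∀ v ∈ V, v ∉ S0) ∧ ∀ c ∈ H, (∀ v ∈ V, ψ v c = 1) → c = 1 := by
  induction n with
  | zero =>
    intro S0 H hH
    refine ⟨∅, rfl, by simp, fun c hc _ => ?_⟩
    rw [pow_zero, Subgroup.card_eq_one] at hH
    rw [hH] at hc
    exact hc
  | succ n ih =>
    intro S0 H hH
    have hne : H ≠ ⊥ := by
      intro h0
      rw [← Subgroup.card_eq_one, hH] at h0
      have : 2 ^ (n + 1) ≥ 2 := by rw [pow_succ]; have := Nat.one_le_two_pow (n := n); omega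
      omega
    obtain ⟨c, hc, hc1⟩ := Subgroup.ne_bot_iff_exists_ne_one.1 hne |>.elim fun x hx => (⟨x.1, x.2, fun h => hx (Subtype.ext h)⟩ : ∃ c ∈ H, c ≠ 1)
    obtain ⟨v, hvS, hv⟩ := h c hc1 S0
    let f : H →* ℤˣ := (ψ v).comp H.subtype
    have hfr : Function.Surjective f := by
      intro u
      rcases Int.units_eq_one_or u with rfl | rfl
      · exact ⟨1, map_one _⟩
      · exact ⟨⟨c, hc⟩, hv⟩
    have hcard := Subgroup.card_eq_card_quotient_mul_card_subgroup f.ker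
    have hq : Nat.card (H ⧸ f.ker) = 2 := by
      rw [Nat.card_congr (QuotientGroup.quotientKerEquivOfSurjective f hfr).toEquiv, Nat.card_eq_fintype_card]
      rfl
    rw [hH, hq, pow_succ, mul_comm] at hcard
    have hker : Nat.card (f.ker.map H.subtype) = 2 ^ n := by
      rw [Subgroup.card_map_of_injective H.subtype_injective]
      exact (Nat.mul_left_cancel two_pos hcard).symm
    obtain ⟨V, hV1, hV2, hV3⟩ := ih (insert v S0) _ hker
    have hvV : v ∉ V := fun hh => hV2 v hh (Finset.mem_insert_self _ _)
    refine ⟨insert v V, by rw [Finset.card_insert_of_notMem hvV, hV1], ?_, ?_⟩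
    · intro w hw
      rcases Finset.mem_insert.1 hw with rfl | hw
      · exact hvS
      · exact fun hh => hV2 w hw (Finset.mem_insert_of_mem hh)
    · intro d hd hdV
      refine hV3 d ⟨⟨d, hd⟩, ?_, rfl⟩ fun w hw => hdV w (Finset.mem_insert_of_mem hw)
      exact hdV v (Finset.mem_insert_self _ _)

lemma AF.dual2 (ψ : ι → Q →* ℤˣ) (h : ∀ c : Q, c ≠ 1 → ∀ S : Finset ι, ∃ v ∉ S, ψ v c = -1) (n : ℕ) (hn : Nat.card Q = 2 ^ n)
    (S0 : Finset ι) :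
    ∃ V : Finset ι, V.card = n ∧ (∀ v ∈ V, v ∉ S0) ∧ ∀ T ⊆ V, T.Nonempty → ∃ c, ∏ v ∈ T, ψ v c = -1 := by
  obtain ⟨V, hV1, hV2, hV3⟩ := AF.dual1 ψ h n S0 ⊤ (by rw [Subgroup.card_top, hn])
  refine ⟨V, hV1, hV2, fun T hT ⟨w, hw⟩ => ?_⟩
  let Φ : Q →* (V → ℤˣ) := MonoidHom.mk' (fun c v => ψ v c) (fun a b => by ext; simp)
  have hinj : Function.Injective Φ := by
    rw [injective_iff_map_eq_one]
    intro c hc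
    exact hV3 c trivial fun v hv => congrFun hc ⟨v, hv⟩
  have hbij : Function.Bijective Φ := by
    rw [Nat.bijective_iff_injective_and_card]
    refine ⟨hinj, ?_⟩
    rw [hn, Nat.card_fun, Nat.card_eq_fintype_card, Nat.card_eq_fintype_card, Fintype.card_coe, hV1]
    rfl
  obtain ⟨c, hc⟩ := hbij.2 (fun v => if v.1 = w then -1 else 1)
  refine ⟨c, ?_⟩
  have : ∀ v ∈ T, ψ v c = if v = w then -1 else 1 := fun v hv => congrFun hc ⟨v, hT hv⟩
  rw [Finset.prod_congr rfl this, Finset.prod_ite_eq' T w (fun _ => (-1 : ℤˣ)), if_pos hw]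

end
end

section
open NumberField
open scoped nonZeroDivisors

section

variable {K : Type*} [Field K] [NumberField K]

local notation "F" => FractionalIdeal (𝓞 K)⁰ K
local notation "sp" => FractionalIdeal.spanSingleton (𝓞 K)⁰
local notation "P" => IsDedekindDomain.HeightOneSpectrum (𝓞 K)

lemma AF.chi_mul (v : P) {α β : 𝓞 K} (hα : α ∉ v.asIdeal) (hβ : β ∉ v.asIdeal) :
    AF.chi v (α * β) = AF.chi v α * AF.chi v β := by
  classical
  have := v.isMaximal
  letI : Field (𝓞 K ⧸ v.asIdeal) := Ideal.Quotient.field v.asIdeal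
  have hfin : Finite (𝓞 K ⧸ v.asIdeal) := Ideal.finiteQuotientOfFreeOfNeBot v.asIdeal v.ne_bot
  letI := Fintype.ofFinite (𝓞 K ⧸ v.asIdeal)
  have key : ∀ a : 𝓞 K, a ∉ v.asIdeal → AF.chi v a = quadraticChar (𝓞 K ⧸ v.asIdeal) (Ideal.Quotient.mk _ a) := by
    intro a ha
    have ha0 : Ideal.Quotient.mk v.asIdeal a ≠ 0 := by rwa [Ne, Ideal.Quotient.eq_zero_iff_mem]
    have hiff : IsSquare (Ideal.Quotient.mk v.asIdeal a) ↔ ∃ r : 𝓞 K, r ^ 2 - a ∈ v.asIdeal := by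
      constructor
      · rintro ⟨s, hs⟩
        obtain ⟨r, rfl⟩ := Ideal.Quotient.mk_surjective s
        refine ⟨r, ?_⟩
        rw [← Ideal.Quotient.eq_zero_iff_mem, map_sub, hs, map_pow]; ring
      · rintro ⟨r, hr⟩
        refine ⟨Ideal.Quotient.mk _ r, ?_⟩
        rw [← Ideal.Quotient.eq_zero_iff_mem, map_sub, map_pow, sub_eq_zero] at hr
        rw [← hr]; ring
    unfold AF.chi
    split_ifs with h
    · exact ((quadraticChar_one_iff_isSquare ha0).2 (hiff.2 h)).symm
    · exact (quadraticChar_neg_one_iff_not_isSquare.2 (fun hh => h (hiff.1 hh))).symm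
  have hαβ : α * β ∉ v.asIdeal := fun h => (v.isPrime.mem_or_mem h).elim hα hβ
  rw [key _ hα, key _ hβ, key _ hαβ, map_mul, map_mul]

lemma AF.chi_sq_mul (v : P) {p α : 𝓞 K} (hp : p ∉ v.asIdeal) (hα : α ∉ v.asIdeal) :
    AF.chi v (p ^ 2 * α) = AF.chi v α := by
  have hp2 : p ^ 2 ∉ v.asIdeal := fun h => hp (v.isPrime.mem_of_pow_mem _ h)
  rw [AF.chi_mul v hp2 hα, show AF.chi v (p ^ 2) = 1 from if_pos ⟨p, by simp⟩, one_mul]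

def AF.sqK (K : Type*) [Field K] : Subgroup Kˣ := (powMonoidHom 2 : Kˣ →* Kˣ).range

lemma AF.mem_sqK {z : Kˣ} : z ∈ AF.sqK K ↔ ∃ t : Kˣ, t ^ 2 = z := Iff.rfl

lemma AF.clear (s : Kˣ) : ∃ p q : 𝓞 K, p ≠ 0 ∧ q ≠ 0 ∧ (s : K) = q / p := by
  obtain ⟨q, p, hp, h⟩ := IsFractionRing.div_surjective (A := 𝓞 K) (s : K)
  refine ⟨p, q, nonZeroDivisors.ne_zero hp, ?_, h.symm⟩
  rintro rfl
  rw [map_zero, zero_div] at h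
  exact s.ne_zero h.symm

theorem AF.PC (Y : Subgroup Kˣ) (hsq : AF.sqK K ≤ Y) (hfin : Finite (Y ⧸ (AF.sqK K).subgroupOf Y)) (Pr : 𝓞 K → Prop)
    (hPr : ∀ y ∈ Y, ∃ (t : Kˣ) (x : 𝓞 K), (x : K) = y * t ^ 2 ∧ Pr x) :
    ∃ M : 𝓞 K, M ≠ 0 ∧ ∀ S0 : Finset P, ∃ V : Finset P, Nat.card (Y ⧸ (AF.sqK K).subgroupOf Y) = 2 ^ V.card ∧
      (∀ v ∈ V, v ∉ S0 ∧ (2 : 𝓞 K) ∉ v.asIdeal) ∧ ∀ T ⊆ V, T.Nonempty → ∃ α : 𝓞 K, Pr α ∧ α ∣ M ∧ (∃ y ∈ Y, (y : K) = α) ∧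
        (∀ v ∈ V, α ∉ v.asIdeal) ∧ ∏ v ∈ T, AF.chi v α = -1 := by
  classical
  letI := Fintype.ofFinite (Y ⧸ (AF.sqK K).subgroupOf Y)
  have hY : ∀ c : Y ⧸ (AF.sqK K).subgroupOf Y, ∃ (x : 𝓞 K) (y t : Kˣ) (hy : y ∈ Y), (QuotientGroup.mk (⟨y, hy⟩ : Y) : Y ⧸ (AF.sqK K).subgroupOf Y) = c ∧ (x : K) = y * t ^ 2 ∧ Pr x := by
    intro c
    obtain ⟨⟨y, hy⟩, rfl⟩ := QuotientGroup.mk_surjective c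
    obtain ⟨t, x, h1, h2⟩ := hPr y hy
    exact ⟨x, y, t, hy, rfl, h1, h2⟩
  choose x y t hy hyc hx hxP using hY
  have hx0 : ∀ c, x c ≠ 0 := by
    intro c h
    have := hx c
    rw [h] at this
    exact (mul_ne_zero (y c).ne_zero (pow_ne_zero 2 (t c).ne_zero)) (by rw [← this]; simp)
  have hpq : ∀ c d, ∃ p q : 𝓞 K, p ≠ 0 ∧ q ≠ 0 ∧ p ^ 2 * (x c * x d) = q ^ 2 * x (c * d) := by
    intro c d
    have h1 : (QuotientGroup.mk (⟨y (c * d), hy _⟩ : Y) : Y ⧸ (AF.sqK K).subgroupOf Y) = QuotientGroup.mk ((⟨y c, hy c⟩ : Y) * ⟨y d, hy d⟩) := by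
      rw [QuotientGroup.mk_mul, hyc, hyc, hyc]
    rw [QuotientGroup.eq, Subgroup.mem_subgroupOf] at h1
    obtain ⟨s, hs⟩ := AF.mem_sqK.1 h1
    have hs' : y c * y d = y (c * d) * s ^ 2 := by
      rw [hs]; simp
    obtain ⟨p, q, hp, hq, hpq⟩ := AF.clear (s * t c * t d / t (c * d))
    refine ⟨p, q, hp, hq, ?_⟩
    apply RingOfIntegers.ext
    have hp' : (p : K) ≠ 0 := by simpa using hp
    change algebraMap (𝓞 K) K _ = algebraMap (𝓞 K) K _
    simp only [map_mul, map_pow, hx]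
    push_cast at hpq
    have hs'' := congrArg (Units.val) hs'
    push_cast at hs''
    have ht := (t (c * d)).ne_zero
    rw [div_eq_div_iff ht hp'] at hpq
    have : ((y c : K) * t c ^ 2) * (y d * t d ^ 2) = (y c * y d) * (t c * t d) ^ 2 := by ring
    rw [this, hs'']
    linear_combination (y (c * d) : K) * (s * t c * t d * p + q * t (c * d)) * hpq
  choose p q hp hq hpq using hpq
  let M : 𝓞 K := ∏ c, x c
  have hM : M ≠ 0 := Finset.prod_ne_zero_iff.2 fun c _ => hx0 c
  let M' : 𝓞 K := 2 * M * ((∏ c, ∏ d, p c d) * (∏ c, ∏ d, q c d))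
  have hM' : M' ≠ 0 := mul_ne_zero (mul_ne_zero two_ne_zero hM) (mul_ne_zero
    (Finset.prod_ne_zero_iff.2 fun c _ => Finset.prod_ne_zero_iff.2 fun d _ => hp c d)
    (Finset.prod_ne_zero_iff.2 fun c _ => Finset.prod_ne_zero_iff.2 fun d _ => hq c d))
  have hxM : ∀ c, x c ∣ M := fun c => Finset.dvd_prod_of_mem _ (Finset.mem_univ c)
  have hdv : ∀ (v : P), M' ∉ v.asIdeal → ∀ a, a ∣ M' → a ∉ v.asIdeal := fun v hv a ha h => hv (Ideal.mem_of_dvd _ ha h)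
  have hxM' : ∀ c, x c ∣ M' := fun c => (hxM c).trans ⟨2 * ((∏ c, ∏ d, p c d) * (∏ c, ∏ d, q c d)), by simp only [M']; ring⟩
  have hpM' : ∀ c d, p c d ∣ M' := fun c d =>
    ((Finset.dvd_prod_of_mem (p c) (Finset.mem_univ d)).trans (Finset.dvd_prod_of_mem (fun c => ∏ d, p c d) (Finset.mem_univ c))).trans
      ⟨2 * M * (∏ c, ∏ d, q c d), by simp only [M']; ring⟩
  have hqM' : ∀ c d, q c d ∣ M' := fun c d =>
    ((Finset.dvd_prod_of_mem (q c) (Finset.mem_univ d)).trans (Finset.dvd_prod_of_mem (fun c => ∏ d, q c d) (Finset.mem_univ c))).trans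
      ⟨2 * M * (∏ c, ∏ d, p c d), by simp only [M']; ring⟩
  have hmul : ∀ v : P, M' ∉ v.asIdeal → ∀ c d, AF.chi v (x (c * d)) = AF.chi v (x c) * AF.chi v (x d) := by
    intro v hv c d
    have h1 := AF.chi_sq_mul v (hdv v hv _ (hqM' c d)) (hdv v hv _ (hxM' (c * d)))
    have hcd : x c * x d ∉ v.asIdeal := fun h => (v.isPrime.mem_or_mem h).elim (hdv v hv _ (hxM' c)) (hdv v hv _ (hxM' d))
    have h2 := AF.chi_sq_mul v (hdv v hv _ (hpM' c d)) hcd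
    rw [← h1, ← hpq, h2, AF.chi_mul v (hdv v hv _ (hxM' c)) (hdv v hv _ (hxM' d))]
  let u : ℤ → ℤˣ := fun z => if z = 1 then 1 else -1
  have hu : ∀ a b : ℤ, (a = 1 ∨ a = -1) → (b = 1 ∨ b = -1) → u (a * b) = u a * u b := by
    rintro a b (rfl | rfl) (rfl | rfl) <;> simp [u]
  let ψ : P → (Y ⧸ (AF.sqK K).subgroupOf Y) →* ℤˣ := fun v =>
    if hv : M' ∈ v.asIdeal then 1 else MonoidHom.mk' (fun c => u (AF.chi v (x c)))
      (fun c d => by rw [hmul v hv c d, hu _ _ (AF.chi_pm _ _) (AF.chi_pm _ _)])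
  have hψ : ∀ v : P, M' ∉ v.asIdeal → ∀ c, ψ v c = u (AF.chi v (x c)) := by
    intro v hv c
    simp only [ψ, dif_neg hv]; rfl
  let S1 : Finset P := (AF.fin_mem hM').toFinset
  have hS1 : ∀ v : P, v ∉ S1 → M' ∉ v.asIdeal := by
    intro v hv h
    exact hv (by simpa [S1] using h)
  have hns : ∀ c, c ≠ 1 → ∀ b : K, b ^ 2 ≠ x c := by
    intro c hc b hb
    apply hc
    have hb0 : b ≠ 0 := by
      rintro rfl
      apply hx0 c
      have : ((x c : 𝓞 K) : K) = 0 := by rw [← hb]; simp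
      simpa using this
    rw [← hyc c, QuotientGroup.eq_one_iff, Subgroup.mem_subgroupOf]
    refine AF.mem_sqK.2 ⟨Units.mk0 b hb0 / t c, ?_⟩
    apply Units.ext
    push_cast
    rw [Units.val_mk0, div_pow, hb, hx c]
    have := (t c).ne_zero
    field_simp
  have hpg : IsPGroup 2 (Y ⧸ (AF.sqK K).subgroupOf Y) := by
    intro g
    refine ⟨1, ?_⟩
    obtain ⟨⟨y, hy⟩, rfl⟩ := QuotientGroup.mk_surjective g
    rw [pow_one, ← QuotientGroup.mk_pow, QuotientGroup.eq_one_iff, Subgroup.mem_subgroupOf]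
    exact AF.mem_sqK.2 ⟨y, rfl⟩
  obtain ⟨n, hn⟩ := IsPGroup.iff_card.1 hpg
  have hres : ∀ c, c ≠ 1 → ∀ S : Finset P, ∃ v ∉ S, ψ v c = -1 := by
    intro c hc S
    obtain ⟨v, hv1, -, -, hv4⟩ := AF.exists_nonres (x c) (hns c hc) (S ∪ S1)
    rw [Finset.mem_union, not_or] at hv1
    refine ⟨v, hv1.1, ?_⟩
    rw [hψ v (hS1 v hv1.2), hv4]
    simp [u]
  refine ⟨M, hM, fun S0 => ?_⟩
  obtain ⟨V, hV1, hV2, hV3⟩ := AF.dual2 ψ hres n hn (S0 ∪ S1)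
  · refine ⟨V, by rw [hV1, hn], ?_, ?_⟩
    · intro v hv
      have := hV2 v hv
      rw [Finset.mem_union, not_or] at this
      refine ⟨this.1, hdv v (hS1 v this.2) _ ⟨M * ((∏ c, ∏ d, p c d) * (∏ c, ∏ d, q c d)), by simp only [M']; ring⟩⟩
    · intro T hT hTn
      obtain ⟨c, hc⟩ := hV3 T hT hTn
      have hVM : ∀ v ∈ V, M' ∉ v.asIdeal := fun v hv => hS1 v (fun h => hV2 v hv (Finset.mem_union_right _ h))
      refine ⟨x c, hxP c, hxM c, ⟨y c * t c ^ 2, Y.mul_mem (hy c) (hsq ⟨t c, rfl⟩), by rw [hx]; push_cast; rfl⟩,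
        fun v hv => hdv v (hVM v hv) _ (hxM' c), ?_⟩
      rcases AF.chi_prod_pm T (x c) with h | h
      · exfalso
        have e : ∏ v ∈ T, ψ v c = u (∏ v ∈ T, AF.chi v (x c)) := by
          have : ∀ W ⊆ V, ∏ v ∈ W, ψ v c = u (∏ v ∈ W, AF.chi v (x c)) := by
            intro W
            induction W using Finset.induction_on with
            | empty => intro _; simp [u]
            | insert w W hw ih =>
              intro hW
              rw [Finset.prod_insert hw, Finset.prod_insert hw, hu _ _ (AF.chi_pm _ _) (AF.chi_prod_pm _ _),
                ih (fun a ha => hW (Finset.mem_insert_of_mem ha)), hψ w (hVM w (hW (Finset.mem_insert_self _ _)))]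
          exact this T hT
        rw [e, h] at hc
        simp [u] at hc
      · exact h
end
end

section
open NumberField
open scoped nonZeroDivisors

section

lemma AF.card_two {C : Type*} [CommGroup C] [Finite C] :
    Nat.card {c : C // c ^ 2 = 1} = (powMonoidHom 2 : C →* C).range.index := by
  have h1 : Nat.card {c : C // c ^ 2 = 1} = Nat.card (powMonoidHom 2 : C →* C).ker :=
    Nat.card_congr (Equiv.subtypeEquivRight fun c => by rw [MonoidHom.mem_ker]; rfl)
  have h2 := Subgroup.card_mul_index (powMonoidHom 2 : C →* C).ker
  have h3 := Subgroup.card_mul_index (powMonoidHom 2 : C →* C).range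
  rw [Subgroup.index_ker] at h2
  rw [h1]
  have h4 : 0 < Nat.card (powMonoidHom 2 : C →* C).range := Nat.card_pos
  apply Nat.eq_of_mul_eq_mul_left h4
  rw [h3, ← h2, mul_comm]

lemma AF.card_two_quot {G : Type*} [CommGroup G] (N : Subgroup G) [Finite (G ⧸ N)] :
    Nat.card {c : G ⧸ N // c ^ 2 = 1} = ((powMonoidHom 2 : G →* G).range ⊔ N).index := by
  rw [AF.card_two, ← Subgroup.index_comap_of_surjective _ (QuotientGroup.mk'_surjective N)]
  congr 1
  ext g
  rw [Subgroup.mem_comap, Subgroup.mem_sup]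
  constructor
  · rintro ⟨c, hc⟩
    obtain ⟨h, rfl⟩ := QuotientGroup.mk_surjective c
    refine ⟨h ^ 2, ⟨h, rfl⟩, (h ^ 2)⁻¹ * g, ?_, by simp⟩
    rw [← QuotientGroup.eq]
    exact hc
  · rintro ⟨_, ⟨h, rfl⟩, n, hn, rfl⟩
    refine ⟨(h : G ⧸ N), ?_⟩
    change ((h ^ 2 : G) : G ⧸ N) = ((h ^ 2 * n : G) : G ⧸ N)
    rw [QuotientGroup.eq]
    simpa using hn

variable (K : Type*) [Field K] [NumberField K]

noncomputable def AF.P0 : Subgroup (FractionalIdeal (𝓞 K)⁰ K)ˣ := (toPrincipalIdeal (𝓞 K) K).range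
noncomputable def AF.I2 : Subgroup (FractionalIdeal (𝓞 K)⁰ K)ˣ := (powMonoidHom 2 : (FractionalIdeal (𝓞 K)⁰ K)ˣ →* (FractionalIdeal (𝓞 K)⁰ K)ˣ).range
noncomputable def AF.ZI : Subgroup Kˣ := (AF.I2 K).comap (toPrincipalIdeal (𝓞 K) K)
noncomputable def AF.sg : Kˣ →* ((K →+* ℝ) → SignTypeˣ) :=
  MonoidHom.pi fun φ => Units.map ((signHom (α := ℝ) : ℝ →* SignType).comp (φ : K →* ℝ))
noncomputable def AF.Kp : Subgroup Kˣ := (AF.sg K).ker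

variable {K}
lemma AF.mem_Kp {x : Kˣ} : x ∈ AF.Kp K ↔ ∀ φ : K →+* ℝ, 0 < φ x := by
  rw [AF.Kp, MonoidHom.mem_ker, funext_iff]
  refine forall_congr' fun φ => ?_
  rw [Units.ext_iff]
  change SignType.sign (φ x) = 1 ↔ _
  exact sign_eq_one_iff

lemma AF.fin_emb : Finite (K →+* ℝ) ∧ Nat.card (K →+* ℝ) ≤ Nat.card {w : InfinitePlace K // w.IsReal} := by
  let f : (K →+* ℝ) → {w : InfinitePlace K // w.IsReal} := fun φ =>
    ⟨InfinitePlace.mk (Complex.ofRealHom.comp φ), Complex.ofRealHom.comp φ, by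
      ext x; simp [ComplexEmbedding.conjugate], rfl⟩
  have hf : Function.Injective f := by
    intro φ ψ h
    have h1 := congrArg Subtype.val h
    have h2 : Complex.ofRealHom.comp φ = Complex.ofRealHom.comp ψ := by
      rcases InfinitePlace.mk_eq_iff.1 h1 with h | h
      · exact h
      · rw [← h]; ext x; simp [ComplexEmbedding.conjugate]
    ext x
    have := RingHom.congr_fun h2 x
    simpa using this
  exact ⟨Finite.of_injective f hf, Nat.card_le_card_of_injective f hf⟩

lemma AF.Kp_index : (AF.Kp K).index ≠ 0 ∧ (AF.Kp K).index ≤ 2 ^ Nat.card {w : InfinitePlace K // w.IsReal} := by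
  have := (AF.fin_emb (K := K)).1
  have : Fintype (K →+* ℝ) := Fintype.ofFinite _
  rw [AF.Kp, Subgroup.index_ker]
  refine ⟨Nat.card_pos.ne', ?_⟩
  refine (Subgroup.card_le_card_group _).trans ?_
  rw [Nat.card_pi, Finset.prod_const, Finset.card_univ, ← Nat.card_eq_fintype_card]
  have : Nat.card SignTypeˣ = 2 := by rw [Nat.card_eq_fintype_card]; decide
  rw [this]
  exact Nat.pow_le_pow_right two_pos AF.fin_emb.2

lemma AF.P0_index : (AF.P0 K).index ≠ 0 := by
  have : Finite ((FractionalIdeal (𝓞 K)⁰ K)ˣ ⧸ (toPrincipalIdeal (𝓞 K) K).range) :=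
    Finite.of_equiv _ (ClassGroup.equiv (R := 𝓞 K) K).toEquiv
  exact Subgroup.index_ne_zero_of_finite (hH := this)

lemma AF.card_Cl : Nat.card {c : ClassGroup (𝓞 K) // c ^ 2 = 1} = (AF.I2 K ⊔ AF.P0 K).index := by
  have : Finite ((FractionalIdeal (𝓞 K)⁰ K)ˣ ⧸ (toPrincipalIdeal (𝓞 K) K).range) :=
    Finite.of_equiv _ (ClassGroup.equiv (R := 𝓞 K) K).toEquiv
  have h := AF.card_two_quot (toPrincipalIdeal (𝓞 K) K).range
  change _ = (AF.I2 K ⊔ AF.P0 K).index at h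
  rw [← h]
  refine Nat.card_congr ((ClassGroup.equiv (R := 𝓞 K) K).toEquiv.subtypeEquiv fun c => ?_)
  change _ ↔ (ClassGroup.equiv K c) ^ 2 = 1
  rw [← map_pow, map_eq_one_iff _ (MulEquiv.injective _)]

lemma AF.Hpart (ρ ρ' : ℕ) (hρ : Nat.card {c : ClassGroup (𝓞 K) // c ^ 2 = 1} = 2 ^ ρ)
    (N : Subgroup (FractionalIdeal (𝓞 K)⁰ K)ˣ) (hN : N = (AF.Kp K).map (toPrincipalIdeal (𝓞 K) K))
    (hρ' : Nat.card {c : (FractionalIdeal (𝓞 K)⁰ K)ˣ ⧸ N // c ^ 2 = 1} = 2 ^ ρ') :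
    2 ^ ρ' * (AF.ZI K ⊓ AF.Kp K).relIndex (AF.ZI K) ≤ 2 ^ (ρ + Nat.card {w : InfinitePlace K // w.IsReal}) := by
  have hNP : N ≤ AF.P0 K := by rw [hN]; rintro _ ⟨x, -, rfl⟩; exact ⟨x, rfl⟩
  have hcm : AF.Kp K ≤ N.comap (toPrincipalIdeal (𝓞 K) K) := by rw [hN]; exact Subgroup.le_comap_map _ _
  have hNi : N.index ≠ 0 := by
    rw [← Subgroup.relIndex_mul_index hNP, mul_ne_zero_iff]
    refine ⟨?_, AF.P0_index⟩
    rw [AF.P0, ← Subgroup.index_comap]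
    exact fun h => AF.Kp_index.1 (Nat.eq_zero_of_zero_dvd (h ▸ Subgroup.index_dvd_of_le hcm))
  have : N.FiniteIndex := ⟨hNi⟩
  have : Finite ((FractionalIdeal (𝓞 K)⁰ K)ˣ ⧸ N) := Subgroup.finite_quotient_of_finiteIndex
  rw [AF.card_two_quot] at hρ'
  change (AF.I2 K ⊔ N).index = _ at hρ'
  rw [AF.card_Cl] at hρ
  have h1 : (AF.I2 K ⊔ N).relIndex (AF.I2 K ⊔ AF.P0 K) * (AF.I2 K ⊔ AF.P0 K).index = (AF.I2 K ⊔ N).index :=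
    Subgroup.relIndex_mul_index (sup_le_sup_left hNP _)
  have h2 : (AF.I2 K ⊔ N).relIndex (AF.I2 K ⊔ AF.P0 K) = (AF.ZI K ⊔ AF.Kp K).index := by
    have e : AF.I2 K ⊔ AF.P0 K = AF.P0 K ⊔ (AF.I2 K ⊔ N) := by
      apply le_antisymm
      · exact sup_le (le_sup_left.trans le_sup_right) le_sup_left
      · exact sup_le le_sup_right (sup_le le_sup_left (hNP.trans le_sup_right))
    rw [e, Subgroup.relIndex_sup_right, AF.P0, ← Subgroup.index_comap]
    congr 1
    ext x
    rw [Subgroup.mem_comap, Subgroup.mem_sup, Subgroup.mem_sup]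
    constructor
    · rintro ⟨i, hi, n, hn, h⟩
      rw [hN] at hn
      obtain ⟨y, hy, rfl⟩ := hn
      refine ⟨x * y⁻¹, ?_, y, hy, by simp⟩
      change toPrincipalIdeal (𝓞 K) K (x * y⁻¹) ∈ AF.I2 K
      rw [map_mul, map_inv, ← h]
      simpa using hi
    · rintro ⟨z, hz, y, hy, rfl⟩
      exact ⟨_, hz, _, hcm hy, (map_mul _ _ _).symm⟩
  have h3 : (AF.ZI K ⊓ AF.Kp K).relIndex (AF.ZI K) = (AF.Kp K).relIndex (AF.ZI K) := by
    exact Subgroup.inf_relIndex_left _ _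
  have h4 : (AF.Kp K).relIndex (AF.ZI K) * (AF.ZI K ⊔ AF.Kp K).index = (AF.Kp K).index := by
    rw [← Subgroup.relIndex_sup_right]
    exact Subgroup.relIndex_mul_index le_sup_right
  have h5 := AF.Kp_index (K := K)
  rw [h3, ← hρ', ← h1, hρ, h2, pow_add]
  calc _ = 2 ^ ρ * ((AF.Kp K).relIndex (AF.ZI K) * (AF.ZI K ⊔ AF.Kp K).index) := by ring
    _ ≤ _ := by rw [h4]; exact Nat.mul_le_mul_left _ h5.2
end
end

section
open NumberField
open scoped nonZeroDivisors

section

variable {K : Type*} [Field K] [NumberField K]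

noncomputable def AF.UK (K : Type*) [Field K] [NumberField K] : Subgroup Kˣ := (toPrincipalIdeal (𝓞 K) K).ker

lemma AF.mem_UK {x : Kˣ} : x ∈ AF.UK K ↔ ∃ u : (𝓞 K)ˣ, ((u : 𝓞 K) : K) = x := by
  rw [AF.UK, MonoidHom.mem_ker, toPrincipalIdeal_eq_iff, Units.val_one]
  constructor
  · intro h
    have h1 : (x : K) ∈ (1 : FractionalIdeal (𝓞 K)⁰ K) := by rw [← h]; exact FractionalIdeal.mem_spanSingleton_self _ _
    have h2 : ((x⁻¹ : Kˣ) : K) ∈ (1 : FractionalIdeal (𝓞 K)⁰ K) := by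
      have : FractionalIdeal.spanSingleton (𝓞 K)⁰ ((x⁻¹ : Kˣ) : K) = 1 := by
        rw [Units.val_inv_eq_inv_val, ← FractionalIdeal.spanSingleton_inv, h, inv_one]
      rw [← this]; exact FractionalIdeal.mem_spanSingleton_self _ _
    obtain ⟨a, ha⟩ := (FractionalIdeal.mem_one_iff _).1 h1
    obtain ⟨b, hb⟩ := (FractionalIdeal.mem_one_iff _).1 h2
    have hab : a * b = 1 := by
      apply RingOfIntegers.ext
      change algebraMap (𝓞 K) K _ = algebraMap (𝓞 K) K _
      rw [map_mul, ha, hb, map_one, Units.mul_inv]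
    exact ⟨⟨a, b, hab, by rw [mul_comm, hab]⟩, ha⟩
  · rintro ⟨u, hu⟩
    rw [← hu, AF.sp_coe, Ideal.span_singleton_eq_top.2 u.isUnit, FractionalIdeal.coeIdeal_top]

lemma AF.rk (h : 0 < Nat.card {w : InfinitePlace K // w.IsReal}) :
    (AF.sqK K).relIndex (AF.UK K) ≠ 0 ∧ 2 ^ (Units.rank K + 1) ≤ (AF.sqK K).relIndex (AF.UK K) := by
  have hφ : Nonempty (K →+* ℝ) := by
    obtain ⟨⟨w, hw⟩⟩ := (Nat.card_pos_iff.1 h).1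
    exact ⟨InfinitePlace.embedding_of_isReal hw⟩
  obtain ⟨φ⟩ := hφ
  let f : (𝓞 K)ˣ →* Kˣ := Units.map (algebraMap (𝓞 K) K : 𝓞 K →* K)
  have hf : f.range = AF.UK K := by
    ext x
    rw [AF.mem_UK, MonoidHom.mem_range]
    exact exists_congr fun u => Units.ext_iff
  have hc : (AF.sqK K).comap f = (powMonoidHom 2 : (𝓞 K)ˣ →* (𝓞 K)ˣ).range := by
    ext u
    rw [Subgroup.mem_comap, AF.mem_sqK, MonoidHom.mem_range]
    constructor
    · rintro ⟨t, ht⟩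
      have h1 : t ∈ AF.UK K := by
        have : f u ∈ AF.UK K := by rw [← hf]; exact ⟨u, rfl⟩
        rw [AF.UK, MonoidHom.mem_ker, ← ht, map_pow] at this
        have h2 := congrArg Units.val this
        rw [Units.val_pow_eq_pow_val, Units.val_one] at h2
        rw [AF.UK, MonoidHom.mem_ker]
        apply Units.ext
        rw [Units.val_one]
        apply le_antisymm (AF.le_one_of_sq h2.le)
        have h3 : (((toPrincipalIdeal (𝓞 K) K) t)⁻¹ : (FractionalIdeal (𝓞 K)⁰ K)ˣ).val ≤ 1 := by
          apply AF.le_one_of_sq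
          rw [Units.val_inv_eq_inv_val, inv_pow, h2, inv_one]
        have := mul_le_mul_left h3 ((toPrincipalIdeal (𝓞 K) K) t).val
        simpa using this
      obtain ⟨w, hw⟩ := AF.mem_UK.1 h1
      refine ⟨w, ?_⟩
      apply Units.ext
      apply RingOfIntegers.ext
      change algebraMap (𝓞 K) K ((w : 𝓞 K) ^ 2) = (f u : K)
      rw [map_pow, ← ht, Units.val_pow_eq_pow_val, ← hw]
    · rintro ⟨w, rfl⟩
      exact ⟨f w, (map_pow f w 2).symm⟩
  rw [← hf, ← Subgroup.index_comap, hc]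
  set Q := (powMonoidHom 2 : (𝓞 K)ˣ →* (𝓞 K)ˣ).range with hQ
  have hfin : Finite ((𝓞 K)ˣ ⧸ Q) := by
    have : Group.FG (𝓞 K)ˣ := Group.fg_iff_monoid_fg.2 inferInstance
    refine CommGroup.finite_of_fg_isMulTorsion _ ?_
    intro g
    obtain ⟨u, rfl⟩ := QuotientGroup.mk_surjective g
    rw [isOfFinOrder_iff_pow_eq_one]
    refine ⟨2, two_pos, ?_⟩
    rw [← QuotientGroup.mk_pow, QuotientGroup.eq_one_iff]
    exact ⟨u, rfl⟩
  refine ⟨Subgroup.index_ne_zero_of_finite, ?_⟩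
  let g : Fin 2 × (Fin (Units.rank K) → Fin 2) → (𝓞 K)ˣ ⧸ Q := fun p =>
    (((-1) ^ (p.1 : ℕ) * ∏ i, Units.fundSystem K i ^ ((p.2 i : ℕ) : ℤ) : (𝓞 K)ˣ) : (𝓞 K)ˣ ⧸ Q)
  have hg : Function.Injective g := by
    rintro ⟨a, e⟩ ⟨a', e'⟩ he
    simp only [g] at he
    rw [QuotientGroup.eq] at he
    obtain ⟨w, hw⟩ := he
    change w ^ 2 = _ at hw
    obtain ⟨⟨ζ, k⟩, hζ, -⟩ := Units.exist_unique_eq_mul_prod K w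
    simp only at hζ
    have htor : ∀ n : ℕ, ((-1 : (𝓞 K)ˣ) ^ n) ∈ Units.torsion K := by
      intro n
      apply Subgroup.pow_mem
      rw [Units.torsion, CommGroup.mem_torsion, isOfFinOrder_iff_pow_eq_one]
      exact ⟨2, two_pos, by simp⟩
    have e1 : w ^ 2 = ((-1) ^ (a : ℕ))⁻¹ * (-1) ^ (a' : ℕ) * ∏ i, Units.fundSystem K i ^ (((e' i : ℕ) : ℤ) - ((e i : ℕ) : ℤ)) := by
      rw [hw, mul_inv]
      simp only [zpow_sub, Finset.prod_mul_distrib, Finset.prod_inv_distrib]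
      rw [mul_mul_mul_comm, mul_comm (∏ i, Units.fundSystem K i ^ ((e' i : ℕ) : ℤ))]
    have e2 : w ^ 2 = (ζ : (𝓞 K)ˣ) ^ 2 * ∏ i, Units.fundSystem K i ^ (2 * k i) := by
      rw [hζ, mul_pow, ← Finset.prod_pow]
      congr 1
      refine Finset.prod_congr rfl fun i _ => ?_
      rw [← zpow_natCast, ← zpow_mul, mul_comm (k i)]; rfl
    obtain ⟨_, -, huniq⟩ := Units.exist_unique_eq_mul_prod K (w ^ 2)
    have u1 := huniq ⟨⟨((-1) ^ (a : ℕ))⁻¹ * (-1) ^ (a' : ℕ), Subgroup.mul_mem _ (Subgroup.inv_mem _ (htor _)) (htor _)⟩, _⟩ e1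
    have u2 := huniq ⟨ζ ^ 2, fun i => 2 * k i⟩ e2
    have u3 := u1.trans u2.symm
    rw [Prod.mk.injEq] at u3
    obtain ⟨v1, v2⟩ := u3
    have h1 : e = e' := by
      ext i
      have := congrFun v2 i
      have := (e i).2; have := (e' i).2
      omega
    have h2 : a = a' := by
      have v3 := congrArg (fun z : Units.torsion K => φ (((z : (𝓞 K)ˣ) : 𝓞 K) : K)) v1
      simp only [Subgroup.coe_pow, Units.val_pow_eq_pow_val, Units.val_mul] at v3
      have v4 : (0:ℝ) ≤ φ ((((ζ : (𝓞 K)ˣ) : 𝓞 K) ^ 2 : 𝓞 K) : K) := by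
        have : φ ((((ζ : (𝓞 K)ˣ) : 𝓞 K) ^ 2 : 𝓞 K) : K) = φ (((ζ : (𝓞 K)ˣ) : 𝓞 K) : K) ^ 2 := by
          rw [← map_pow]; rfl
        rw [this]; positivity
      rw [← v3] at v4
      fin_cases a <;> fin_cases a' <;> simp at v4 ⊢ <;> norm_num at v4
    rw [h1, h2]
  have := Nat.card_le_card_of_injective g hg
  rw [Subgroup.index]
  refine le_trans (le_of_eq ?_) this
  simp [pow_succ, mul_comm]

lemma AF.Gpart (h : 0 < Nat.card {w : InfinitePlace K // w.IsReal}) (ρ : ℕ)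
    (hρ : Nat.card {c : ClassGroup (𝓞 K) // c ^ 2 = 1} = 2 ^ ρ) :
    (AF.sqK K).relIndex (AF.ZI K) ≠ 0 ∧ 2 ^ (ρ + (Units.rank K + 1)) ≤ (AF.sqK K).relIndex (AF.ZI K) := by
  obtain ⟨h1, h2⟩ := AF.rk h
  let p := toPrincipalIdeal (𝓞 K) K
  let σ : (FractionalIdeal (𝓞 K)⁰ K)ˣ →* (FractionalIdeal (𝓞 K)⁰ K)ˣ := powMonoidHom 2
  have hσ : Function.Injective σ := by
    rw [injective_iff_map_eq_one]
    intro a ha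
    have h2 := congrArg Units.val ha
    change a.val ^ 2 = 1 at h2
    apply Units.ext
    rw [Units.val_one]
    apply le_antisymm (AF.le_one_of_sq h2.le)
    have h3 : (a⁻¹ : (FractionalIdeal (𝓞 K)⁰ K)ˣ).val ≤ 1 := by
      apply AF.le_one_of_sq
      rw [Units.val_inv_eq_inv_val, inv_pow, h2, inv_one]
    have := mul_le_mul_left h3 a.val
    simpa using this
  have hle : AF.sqK K ⊔ AF.UK K ≤ AF.ZI K := by
    apply sup_le
    · rintro _ ⟨t, rfl⟩
      exact ⟨p t, (map_pow p t 2).symm⟩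
    · intro u hu
      have : p u = 1 := hu
      refine ⟨1, ?_⟩
      change (1 : (FractionalIdeal (𝓞 K)⁰ K)ˣ) ^ 2 = p u
      rw [this, one_pow]
  have e1 : (AF.sqK K).relIndex (AF.sqK K ⊔ AF.UK K) = (AF.sqK K).relIndex (AF.UK K) := Subgroup.relIndex_sup_left _ _
  have e2 : (AF.sqK K ⊔ AF.UK K).relIndex (AF.ZI K) = 2 ^ ρ := by
    have a1 := Subgroup.relIndex_map_map p (AF.sqK K) (AF.ZI K)
    have a2 : AF.ZI K ⊔ p.ker = AF.ZI K := sup_eq_left.2 (le_sup_right.trans hle)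
    rw [a2] at a1
    change _ = (AF.sqK K ⊔ AF.UK K).relIndex (AF.ZI K) at a1
    rw [← a1]
    have a3 : (AF.sqK K).map p = (AF.P0 K).map σ := by
      ext i
      constructor
      · rintro ⟨_, ⟨t, rfl⟩, rfl⟩
        exact ⟨p t, ⟨t, rfl⟩, (map_pow p t 2).symm⟩
      · rintro ⟨_, ⟨t, rfl⟩, rfl⟩
        exact ⟨t ^ 2, ⟨t, rfl⟩, map_pow p t 2⟩
    have a4 : (AF.ZI K).map p = ((AF.P0 K).comap σ).map σ := by
      ext i
      constructor
      · rintro ⟨z, ⟨a, ha⟩, rfl⟩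
        refine ⟨a, ?_, ha⟩
        exact ⟨z, ha.symm⟩
      · rintro ⟨a, ⟨z, hz⟩, rfl⟩
        exact ⟨z, ⟨a, hz.symm⟩, hz⟩
    rw [a3, a4, Subgroup.relIndex_map_map_of_injective _ _ hσ, ← hρ]
    have a5 : Nat.card {c : ClassGroup (𝓞 K) // c ^ 2 = 1} = Nat.card {c : (FractionalIdeal (𝓞 K)⁰ K)ˣ ⧸ (AF.P0 K) // c ^ 2 = 1} := by
      unfold AF.P0
      refine Nat.card_congr ((ClassGroup.equiv (R := 𝓞 K) K).toEquiv.subtypeEquiv fun c => ?_)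
      change _ ↔ (ClassGroup.equiv K c) ^ 2 = 1
      rw [← map_pow, map_eq_one_iff _ (MulEquiv.injective _)]
    rw [a5]
    have hPle : AF.P0 K ≤ (AF.P0 K).comap σ := fun a ha => Subgroup.pow_mem _ ha 2
    have a6 := Subgroup.relIndex_map_map (QuotientGroup.mk' (AF.P0 K)) (AF.P0 K) ((AF.P0 K).comap σ)
    rw [QuotientGroup.ker_mk', sup_idem, sup_eq_left.2 hPle, QuotientGroup.map_mk'_self, Subgroup.relIndex_bot_left] at a6
    rw [← a6]
    refine Nat.card_congr (Equiv.subtypeEquivRight fun c => ?_)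
    obtain ⟨a, rfl⟩ := QuotientGroup.mk_surjective c
    rw [← QuotientGroup.mk_pow, QuotientGroup.eq_one_iff]
    constructor
    · rintro ⟨b, hb, hba⟩
      have : b⁻¹ * a ∈ AF.P0 K := QuotientGroup.eq.1 hba
      have hb' : b ^ 2 ∈ AF.P0 K := hb
      have h3 := Subgroup.mul_mem _ hb' (Subgroup.pow_mem _ this 2)
      rwa [← mul_pow, mul_inv_cancel_left] at h3
    · intro ha
      exact ⟨a, ha, rfl⟩
  rw [← Subgroup.relIndex_mul_relIndex _ _ _ le_sup_left hle, e1, e2]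
  refine ⟨mul_ne_zero h1 (by positivity), ?_⟩
  rw [pow_add, mul_comm]
  exact Nat.mul_le_mul_right _ h2
end
end

section
open NumberField
open scoped nonZeroDivisors

section

variable {K : Type*} [Field K] [NumberField K]

local notation "F" => FractionalIdeal (𝓞 K)⁰ K
local notation "sp" => FractionalIdeal.spanSingleton (𝓞 K)⁰
local notation "P" => IsDedekindDomain.HeightOneSpectrum (𝓞 K)

lemma AF.JI_mul [DecidableEq P] (S T : Finset P) : AF.JI S * AF.JI T = AF.JI (symmDiff S T) * AF.JI (S ∩ T) ^ 2 := by
  unfold AF.JI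
  rw [← Finset.prod_union_inter, pow_two, ← mul_assoc]
  congr 1
  rw [← Finset.prod_union]
  · congr 1
    ext v; simp only [Finset.mem_union, Finset.mem_symmDiff, Finset.mem_inter]; tauto
  · rw [Finset.disjoint_left]
    intro v; simp only [Finset.mem_symmDiff, Finset.mem_inter]; tauto

noncomputable def AF.ju (T : Finset P) : Fˣ := Units.mk0 (AF.JI T : F) (AF.coe_ne (AF.JI_ne T))

noncomputable def AF.cls (T : Finset P) : Fˣ ⧸ (AF.I2 K ⊔ AF.P0 K) := AF.ju T

lemma AF.cls_eq [DecidableEq P] {S T : Finset P} (h : AF.cls S = AF.cls T) :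
    ∃ (β : K) (c : F), β ≠ 0 ∧ c ≠ 0 ∧ sp β = (AF.JI (symmDiff S T) : F) * c ^ 2 := by
  have h1 := QuotientGroup.eq.1 h
  obtain ⟨_, ⟨a, rfl⟩, _, ⟨x, rfl⟩, h2⟩ := Subgroup.mem_sup.1 h1
  have h3 := congrArg Units.val h2
  rw [Units.val_mul, Units.val_mul, coe_toPrincipalIdeal] at h3
  change (a : F) ^ 2 * sp (x : K) = ((AF.ju S)⁻¹ : Fˣ).val * (AF.JI T : F) at h3
  have hS : (AF.JI S : F) ≠ 0 := AF.coe_ne (AF.JI_ne S)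
  rw [Units.val_inv_eq_inv_val] at h3
  change (a : F) ^ 2 * sp (x : K) = (AF.JI S : F)⁻¹ * (AF.JI T : F) at h3
  have h4 := congrArg (fun I : Ideal (𝓞 K) => (I : F)) (AF.JI_mul S T)
  simp only [FractionalIdeal.coeIdeal_mul, FractionalIdeal.coeIdeal_pow] at h4
  have ha : (a : F) ≠ 0 := a.ne_zero
  refine ⟨x, (AF.JI (S ∩ T) : F) / (a * (AF.JI S : F)), x.ne_zero, div_ne_zero (AF.coe_ne (AF.JI_ne _)) (mul_ne_zero ha hS), ?_⟩
  rw [div_pow, ← mul_div_assoc, ← h4]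
  have : sp (x : K) = (a : F)⁻¹ ^ 2 * ((AF.JI S : F)⁻¹ * (AF.JI T : F)) := by
    rw [← h3]; field_simp
  rw [this]
  field_simp

lemma AF.mem_ZI {z : Kˣ} : z ∈ AF.ZI K ↔ ∃ a : F, sp (z : K) = a ^ 2 := by
  constructor
  · rintro ⟨a, ha⟩
    have := congrArg Units.val ha
    rw [coe_toPrincipalIdeal] at this
    exact ⟨a, this.symm⟩
  · rintro ⟨a, ha⟩
    have ha0 : a ≠ 0 := by
      rintro rfl
      exact AF.sp_ne z.ne_zero (by rw [ha]; simp)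
    exact ⟨Units.mk0 a ha0, Units.ext (by rw [coe_toPrincipalIdeal]; exact ha.symm)⟩

/-- integrality from a fractional ideal identity -/
lemma AF.int_of {x : K} {N : Ideal (𝓞 K)} (h : sp x = (N : F)) : ∃ a : 𝓞 K, (a : K) = x ∧ Ideal.span {a} = N := by
  have h1 : x ∈ (1 : F) := by
    rw [← AF.sp_le, h]; exact FractionalIdeal.coeIdeal_le_one
  obtain ⟨a, ha⟩ := (FractionalIdeal.mem_one_iff _).1 h1
  refine ⟨a, ha, ?_⟩
  rw [← ha] at h
  have := (AF.sp_coe a).symm.trans h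
  exact FractionalIdeal.coeIdeal_injective this

/-- odd integral representatives -/
lemma AF.odd_rep {β : K} (hβ : β ≠ 0) {J : Ideal (𝓞 K)} {c : F} (hc : c ≠ 0) (h : sp β = (J : F) * c ^ 2) 
    (hJ : IsCoprime (Ideal.span {2}) J) :
    ∃ (y : K) (b : 𝓞 K) (N : Ideal (𝓞 K)), y ≠ 0 ∧ (b : K) = β * y ^ 2 ∧ b ≠ 0 ∧ N ≠ ⊥ ∧
      sp (b : K) = (J : F) * (N : F) ^ 2 ∧ IsCoprime (Ideal.span {2}) (Ideal.span {b}) := by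
  obtain ⟨y, N, hy, hN, hcop⟩ := AF.approx c hc (Ideal.span {2}) (by simp)
  have h1 : sp (β * y ^ 2) = ((J * N ^ 2 : Ideal (𝓞 K)) : F) := by
    rw [pow_two, AF.sp_mul, AF.sp_mul, h, FractionalIdeal.coeIdeal_mul, FractionalIdeal.coeIdeal_pow, ← hN]
    ring
  obtain ⟨b, hb, hbN⟩ := AF.int_of h1
  refine ⟨y, b, N, hy, hb, ?_, ?_, ?_, ?_⟩
  · rintro rfl
    exact mul_ne_zero hβ (pow_ne_zero 2 hy) (by rw [← hb]; simp)
  · rintro rfl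
    rw [FractionalIdeal.coeIdeal_bot] at hN
    exact mul_ne_zero (AF.sp_ne hy) hc hN
  · rw [hb, h1, FractionalIdeal.coeIdeal_mul, FractionalIdeal.coeIdeal_pow]
  · rw [hbN]
    exact IsCoprime.mul_right hJ (IsCoprime.pow_right hcop.symm)

lemma AF.JI_odd {T : Finset P} (h : ∀ v ∈ T, (2 : 𝓞 K) ∉ v.asIdeal) : IsCoprime (Ideal.span {(2 : 𝓞 K)}) (AF.JI T) := by
  unfold AF.JI
  exact IsCoprime.prod_right fun v hv => AF.two_notMem.2 (h v hv)

noncomputable def AF.Zp (K : Type*) [Field K] [NumberField K] : Subgroup Kˣ := AF.ZI K ⊓ AF.Kp K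

noncomputable def AF.Z4 (K : Type*) [Field K] [NumberField K] : Subgroup Kˣ where
  carrier := {z | z ∈ AF.Zp K ∧ ∃ (t : Kˣ) (x : 𝓞 K), (x : K) = z * t ^ 2 ∧ x - 1 ∈ Ideal.span {(4 : 𝓞 K)}}
  one_mem' := ⟨Subgroup.one_mem _, 1, 1, by simp, by simp⟩
  mul_mem' := by
    rintro z w ⟨hz, t, x, hx, hx4⟩ ⟨hw, s, y, hy, hy4⟩
    refine ⟨Subgroup.mul_mem _ hz hw, t * s, x * y, ?_, ?_⟩
    · rw [show ((x * y : 𝓞 K) : K) = (x : K) * (y : K) from map_mul (algebraMap (𝓞 K) K) x y, hx, hy]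
      push_cast
      ring
    · have : x * y - 1 = x * (y - 1) + (x - 1) := by ring
      rw [this]
      exact Ideal.add_mem _ (Ideal.mul_mem_left _ _ hy4) hx4
  inv_mem' := by
    rintro z ⟨hz, t, x, hx, hx4⟩
    refine ⟨Subgroup.inv_mem _ hz, z * t, x, ?_, hx4⟩
    rw [hx]
    have := z.ne_zero
    push_cast
    field_simp

lemma AF.Z4_le : AF.Z4 K ≤ AF.Zp K := fun _ h => h.1

lemma AF.sq_le_Z4 : AF.sqK K ≤ AF.Z4 K := by
  rintro _ ⟨t, rfl⟩
  refine ⟨⟨⟨toPrincipalIdeal (𝓞 K) K t, (map_pow (toPrincipalIdeal (𝓞 K) K) t 2).symm⟩, ?_⟩, t⁻¹, 1, ?_, by simp⟩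
  · refine AF.mem_Kp.2 fun φ => ?_
    change 0 < φ ((t : K) ^ 2)
    rw [map_pow]
    have : φ (t : K) ≠ 0 := (map_ne_zero φ).2 t.ne_zero
    positivity
  · have := t.ne_zero
    change algebraMap (𝓞 K) K 1 = ((t : K) ^ 2) * _
    rw [map_one]
    push_cast
    field_simp

lemma AF.C1 (ρ : ℕ) (hρ : (AF.I2 K ⊔ AF.P0 K).index = 2 ^ ρ) (hfin : (AF.sqK K).relIndex (AF.Z4 K) ≠ 0) :
    (AF.sqK K).relIndex (AF.Z4 K) ≤ 2 ^ ρ := by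
  classical
  obtain ⟨M, hM, hPC⟩ := AF.PC (AF.Z4 K) AF.sq_le_Z4 (Nat.finite_of_card_ne_zero hfin) (fun x => x - 1 ∈ Ideal.span {(4 : 𝓞 K)})
    (fun y hy => by obtain ⟨-, t, x, h⟩ := hy; exact ⟨t, x, h⟩)
  obtain ⟨δ, b, S, D, hSM⟩ := AF.exists_Dat M hM
  obtain ⟨V, hcard, hV, hT⟩ := hPC S
  rw [Subgroup.relIndex, Subgroup.index, hcard, ← hρ, Subgroup.index]
  have hf : Finite (Fˣ ⧸ (AF.I2 K ⊔ AF.P0 K)) := Nat.finite_of_card_ne_zero (by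
    change (AF.I2 K ⊔ AF.P0 K).index ≠ 0
    rw [hρ]; positivity)
  have hinj : Function.Injective (fun T : V.powerset => AF.cls (T : Finset P)) := by
    rintro ⟨T, hTV⟩ ⟨T', hTV'⟩ he
    rw [Finset.mem_powerset] at hTV hTV'
    by_contra hne
    have hne' : T ≠ T' := fun h => hne (Subtype.ext h)
    obtain ⟨β, c, hβ, hc, hsp⟩ := AF.cls_eq he
    have hsub : symmDiff T T' ⊆ V := by
      intro v hv
      rcases Finset.mem_symmDiff.1 hv with h | h
      · exact hTV h.1
      · exact hTV' h.1
    have hnon : (symmDiff T T').Nonempty := by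
      rw [Finset.nonempty_iff_ne_empty]
      intro h
      exact hne' (symmDiff_eq_bot.1 h)
    obtain ⟨α, h4, hαM, ⟨y, hy, hyα⟩, hαV, hprod⟩ := hT _ hsub hnon
    have hα0 : α ≠ 0 := by rintro rfl; exact hM (zero_dvd_iff.1 hαM)
    obtain ⟨a, ha⟩ := AF.mem_ZI.1 hy.1.1
    rw [hyα] at ha
    have hp := AF.mem_Kp.1 hy.1.2
    rw [hyα] at hp
    have := AF.R1 D (T := symmDiff T T') (fun v hv => (hV v (hsub hv)).2)
      (Finset.disjoint_left.2 fun v hvS hvT => (hV v (hsub hvT)).1 hvS) hβ hc hsp α hα0 hp a ha h4 (by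
        intro v hv
        rcases Finset.mem_union.1 hv with hv | hv
        · exact fun h => hSM v hv (Ideal.mem_of_dvd _ hαM h)
        · exact hαV v (hsub hv))
    rw [hprod] at this
    norm_num at this
  have := Nat.card_le_card_of_injective _ hinj
  rwa [Nat.card_eq_fintype_card, Fintype.card_coe, Finset.card_powerset] at this

end
end

section
open NumberField
open scoped nonZeroDivisors

section

variable {K : Type*} [Field K] [NumberField K]

local notation "F" => FractionalIdeal (𝓞 K)⁰ K
local notation "sp" => FractionalIdeal.spanSingleton (𝓞 K)⁰
local notation "P" => IsDedekindDomain.HeightOneSpectrum (𝓞 K)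

lemma AF.fin_q (a : 𝓞 K) (ha : a ≠ 0) : Finite (𝓞 K ⧸ Ideal.span {a}) :=
  Ideal.finiteQuotientOfFreeOfNeBot _ (by simpa using ha)

lemma AF.card_q2 : Nat.card (𝓞 K ⧸ Ideal.span {(2 : 𝓞 K)}) = 2 ^ Module.finrank ℚ K := by
  have := Ideal.absNorm_span_natCast (S := 𝓞 K) 2
  rw [RingOfIntegers.rank] at this
  rw [← this, Ideal.absNorm_apply]
  rfl

lemma AF.card_A : (powMonoidHom 2 : (𝓞 K ⧸ Ideal.span {(4 : 𝓞 K)})ˣ →* _).range.index ≤ 2 ^ Module.finrank ℚ K := by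
  have := AF.fin_q (4 : 𝓞 K) (by norm_num)
  have := AF.fin_q (2 : 𝓞 K) (by norm_num)
  rw [← AF.card_two, ← AF.card_q2]
  have key : ∀ u : (𝓞 K ⧸ Ideal.span {(4 : 𝓞 K)})ˣ, u ^ 2 = 1 → ∃ y : 𝓞 K, (u : 𝓞 K ⧸ Ideal.span {(4 : 𝓞 K)}) = Ideal.Quotient.mk _ (1 + 2 * y) := by
    intro u hu
    obtain ⟨x, hx⟩ := Ideal.Quotient.mk_surjective (u : 𝓞 K ⧸ Ideal.span {(4 : 𝓞 K)})
    have h1 := congrArg Units.val hu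
    rw [Units.val_pow_eq_pow_val, ← hx, ← map_pow, Units.val_one, ← map_one (Ideal.Quotient.mk _), Ideal.Quotient.eq, Ideal.mem_span_singleton] at h1
    obtain ⟨c, hc⟩ := h1
    have hint : IsIntegral ℤ (((x : K) - 1) / 2) := by
      have hi : IsIntegral (𝓞 K) (((x : K) - 1) / 2) := by
        refine ⟨Polynomial.X ^ 2 + Polynomial.X - Polynomial.C c, ?_, ?_⟩
        · have : Polynomial.X ^ 2 + Polynomial.X - Polynomial.C c = Polynomial.X ^ 2 + (Polynomial.X - Polynomial.C c) := by ring
          rw [this]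
          apply Polynomial.monic_X_pow_add
          rw [Polynomial.degree_X_sub_C]
          norm_num
        · have hc' := congrArg (algebraMap (𝓞 K) K) hc
          rw [map_sub, map_pow, map_one, map_mul, map_ofNat] at hc'
          simp only [Polynomial.eval₂_sub, Polynomial.eval₂_add, Polynomial.eval₂_pow, Polynomial.eval₂_X, Polynomial.eval₂_C]
          linear_combination hc' / 4
      exact isIntegral_trans (R := ℤ) (A := 𝓞 K) _ hi
    refine ⟨⟨_, hint⟩, ?_⟩
    rw [← hx]
    congr 1
    apply RingOfIntegers.ext
    have h12 : ∀ z : 𝓞 K, ((1 + 2 * z : 𝓞 K) : K) = 1 + 2 * (z : K) := fun z => by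
      change algebraMap (𝓞 K) K _ = _
      rw [map_add, map_one, map_mul, map_ofNat]
    refine Eq.trans ?_ (h12 _).symm
    change algebraMap (𝓞 K) K x = 1 + 2 * ((algebraMap (𝓞 K) K x - 1) / 2)
    ring
  choose y hy using key
  refine Nat.card_le_card_of_injective (fun u : {u : (𝓞 K ⧸ Ideal.span {(4 : 𝓞 K)})ˣ // u ^ 2 = 1} =>
    Ideal.Quotient.mk (Ideal.span {(2 : 𝓞 K)}) (y u.1 u.2)) ?_
  rintro ⟨u, hu⟩ ⟨w, hw⟩ h
  simp only at h
  rw [Ideal.Quotient.eq, Ideal.mem_span_singleton] at h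
  obtain ⟨d, hd⟩ := h
  apply Subtype.ext
  apply Units.ext
  rw [hy u hu, hy w hw, Ideal.Quotient.eq, Ideal.mem_span_singleton]
  exact ⟨d, by linear_combination 2 * hd⟩

lemma AF.co (a b c d w : 𝓞 K) : ((a * b * (c * d) * w ^ 2 : 𝓞 K) : K) = (a : K) * b * (c * d) * (w : K) ^ 2 := by
  change algebraMap (𝓞 K) K _ = _
  rw [map_mul, map_mul, map_mul, map_mul, map_pow]

lemma AF.two_nu (h : (-1 : 𝓞 K) ∈ Ideal.span {(4 : 𝓞 K)}) : False := by
  obtain ⟨c, hc⟩ := Ideal.mem_span_singleton.1 h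
  have h1 : Ideal.span {(2 : 𝓞 K)} = ⊤ := by
    rw [Ideal.span_singleton_eq_top]
    exact IsUnit.of_mul_eq_one (-2 * c) (by linear_combination hc)
  have h2 := AF.card_q2 (K := K)
  rw [h1] at h2
  have : Subsingleton (𝓞 K ⧸ (⊤ : Ideal (𝓞 K))) := Ideal.Quotient.subsingleton_iff.2 rfl
  rw [Nat.card_unique] at h2
  exact (Nat.one_lt_two_pow (Module.finrank_pos (R := ℚ) (M := K)).ne').ne h2

lemma AF.isUnit4 {b : 𝓞 K} (h : IsCoprime (Ideal.span {2}) (Ideal.span {b})) :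
    IsUnit (Ideal.Quotient.mk (Ideal.span {(4 : 𝓞 K)}) b) := by
  rw [Ideal.isCoprime_span_singleton_iff] at h
  have h4 : IsCoprime ((2 : 𝓞 K) ^ 2) b := h.pow_left
  obtain ⟨r, s, hrs⟩ := h4
  refine IsUnit.of_mul_eq_one (Ideal.Quotient.mk _ s) ?_
  rw [← map_mul, ← map_one (Ideal.Quotient.mk _), Ideal.Quotient.eq, Ideal.mem_span_singleton]
  exact ⟨-r, by linear_combination hrs⟩

lemma AF.C2 (ρ : ℕ) (hρ : (AF.I2 K ⊔ AF.P0 K).index = 2 ^ ρ) (hfin : (AF.sqK K).relIndex (AF.Zp K) ≠ 0) :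
    (AF.sqK K).relIndex (AF.Zp K) * (AF.Z4 K).relIndex (AF.Zp K) ≤ 2 ^ ρ * 2 ^ Module.finrank ℚ K := by
  classical
  -- odd representatives of elements of Zp
  have hrep : ∀ y ∈ AF.Zp K, ∃ (t : Kˣ) (x : 𝓞 K) (N : Ideal (𝓞 K)), (x : K) = y * t ^ 2 ∧ IsCoprime (Ideal.span {2}) (Ideal.span {x}) ∧
      x ≠ 0 ∧ N ≠ ⊥ ∧ sp (x : K) = (N : F) ^ 2 := by
    intro y hy
    obtain ⟨a, ha⟩ := AF.mem_ZI.1 hy.1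
    have ha0 : a ≠ 0 := by
      rintro rfl
      exact AF.sp_ne y.ne_zero (by rw [ha]; simp)
    obtain ⟨t, b, N, ht, hb, hb0, hN, h1, h2⟩ := AF.odd_rep (J := ⊤) (c := a) y.ne_zero ha0 (by rw [ha]; simp)
      (by rw [Ideal.isCoprime_iff_sup_eq]; simp)
    exact ⟨Units.mk0 t ht, b, N, hb, h2, hb0, hN, by rw [h1]; simp⟩
  obtain ⟨M, hM, hPC⟩ := AF.PC (AF.Zp K) (AF.sq_le_Z4.trans AF.Z4_le) (Nat.finite_of_card_ne_zero hfin)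
    (fun x => IsCoprime (Ideal.span {2}) (Ideal.span {x}))
    (fun y hy => by obtain ⟨t, x, N, h1, h2, -⟩ := hrep y hy; exact ⟨t, x, h1, h2⟩)
  obtain ⟨δ, b, S, D, hSM⟩ := AF.exists_Dat M hM
  obtain ⟨V, hcard, hV, hT⟩ := hPC S
  have hsd : ∀ T ⊆ V, ∀ T' ⊆ V, symmDiff T T' ⊆ V := by
    intro T hTV T' hTV' v hv
    rcases Finset.mem_symmDiff.1 hv with h | h
    · exact hTV h.1
    · exact hTV' h.1
  have hf : Finite (Fˣ ⧸ (AF.I2 K ⊔ AF.P0 K)) := Nat.finite_of_card_ne_zero (by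
    change (AF.I2 K ⊔ AF.P0 K).index ≠ 0
    rw [hρ]; positivity)
  -- the reciprocity statement
  have hrec : ∀ T ⊆ V, T.Nonempty → ∀ (β : 𝓞 K) (c : Ideal (𝓞 K)), c ≠ ⊥ → β - 1 ∈ Ideal.span {(4 : 𝓞 K)} → β ≠ 0 →
      sp (β : K) = (AF.JI T : F) * (c : F) ^ 2 → False := by
    intro T hTV hTn β c hc hβ4 hβ0 hsp
    obtain ⟨α, h2, hαM, ⟨y, hy, hyα⟩, hαV, hprod⟩ := hT T hTV hTn
    have hα0 : α ≠ 0 := by rintro rfl; exact hM (zero_dvd_iff.1 hαM)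
    obtain ⟨a, ha⟩ := AF.mem_ZI.1 hy.1
    rw [hyα] at ha
    have hp := AF.mem_Kp.1 hy.2
    rw [hyα] at hp
    have := AF.R2 D (T := T) (fun v hv => (hV v (hTV hv)).2)
      (Finset.disjoint_left.2 fun v hvS hvT => (hV v (hTV hvT)).1 hvS) (β := β) (c := c) hβ0 hβ4 hc hsp α hα0 hp a ha h2 (by
        intro v hv
        rcases Finset.mem_union.1 hv with hv | hv
        · exact fun h => hSM v hv (Ideal.mem_of_dvd _ hαM h)
        · exact hαV v (hTV hv))
    rw [hprod] at this
    norm_num at this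
  let cl : V.powerset → Fˣ ⧸ (AF.I2 K ⊔ AF.P0 K) := fun T => AF.cls (T : Finset P)
  have : Nonempty V.powerset := ⟨⟨∅, by simp⟩⟩
  let r : V.powerset → V.powerset := fun T => Function.invFun cl (cl T)
  have hr : ∀ T, cl (r T) = cl T := fun T => Function.invFun_eq ⟨T, rfl⟩
  have hr' : ∀ T T', cl T = cl T' → r T = r T' := fun T T' h => by simp only [r, h]
  have hV' : ∀ T : V.powerset, (T : Finset P) ⊆ V := fun T => Finset.mem_powerset.1 T.2
  have hβ : ∀ T : V.powerset, ∃ (β : 𝓞 K) (N : Ideal (𝓞 K)), β ≠ 0 ∧ N ≠ ⊥ ∧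
      sp (β : K) = (AF.JI (symmDiff (T : Finset P) (r T)) : F) * (N : F) ^ 2 ∧ IsCoprime (Ideal.span {2}) (Ideal.span {β}) := by
    intro T
    obtain ⟨β, c, hβ, hc, h⟩ := AF.cls_eq (hr T).symm
    obtain ⟨y, b, N, -, -, h1, h2, h3, h4⟩ := AF.odd_rep hβ hc h (AF.JI_odd fun v hv => (hV v (hsd _ (hV' _) _ (hV' _) hv)).2)
    exact ⟨b, N, h1, h2, h3, h4⟩
  choose β N hβ0 hN hβN hβ2 using hβ
  let Q := AF.Zp K ⧸ (AF.Z4 K).subgroupOf (AF.Zp K)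
  have hq : ∀ q : Q, ∃ (y t : Kˣ) (hy : y ∈ AF.Zp K) (x : 𝓞 K) (N : Ideal (𝓞 K)), ((⟨y, hy⟩ : AF.Zp K) : Q) = q ∧ (x : K) = y * t ^ 2 ∧ IsCoprime (Ideal.span {2}) (Ideal.span {x}) ∧
      x ≠ 0 ∧ N ≠ ⊥ ∧ sp (x : K) = (N : F) ^ 2 := by
    intro q
    obtain ⟨⟨y, hy⟩, rfl⟩ := QuotientGroup.mk_surjective q
    obtain ⟨t, x, N, h⟩ := hrep y hy
    exact ⟨y, t, hy, x, N, rfl, h⟩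
  choose y t hy x N' hyq hxy hx2 hx0 hN' hxN using hq
  let A := (𝓞 K ⧸ Ideal.span {(4 : 𝓞 K)})ˣ
  have hf4 := AF.fin_q (4 : 𝓞 K) (by norm_num)
  have hfA : Finite A := inferInstance
  let g : V.powerset × Q → (Fˣ ⧸ (AF.I2 K ⊔ AF.P0 K)) × (A ⧸ (powMonoidHom 2 : A →* A).range) := fun p =>
    (cl p.1, (((AF.isUnit4 (hβ2 p.1)).unit * (AF.isUnit4 (hx2 p.2)).unit : A) : A ⧸ (powMonoidHom 2 : A →* A).range))
  have hg : Function.Injective g := by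
    rintro ⟨T, q⟩ ⟨T', q'⟩ he
    obtain ⟨he1, he2⟩ := Prod.mk.inj he
    simp only at he1 he2
    have hrr := hr' T T' he1
    rw [QuotientGroup.eq] at he2
    obtain ⟨u, hu⟩ := he2
    change u ^ 2 = _ at hu
    set B := (AF.isUnit4 (hβ2 T)).unit
    set X := (AF.isUnit4 (hx2 q)).unit
    set B' := (AF.isUnit4 (hβ2 T')).unit
    set X' := (AF.isUnit4 (hx2 q')).unit
    obtain ⟨w, hw⟩ := Ideal.Quotient.mk_surjective ((u * (B' * X')⁻¹ : A) : 𝓞 K ⧸ Ideal.span {(4 : 𝓞 K)})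
    have hone : (β T * x q * (β T' * x q') * w ^ 2) - 1 ∈ Ideal.span {(4 : 𝓞 K)} := by
      rw [← Ideal.Quotient.eq, map_mul, map_pow, hw, map_mul, map_mul, map_mul, map_one]
      have : B * X * (B' * X') * (u * (B' * X')⁻¹) ^ 2 = 1 := by
        rw [mul_pow, hu]
        have : ∀ a c : A, a * c * (a⁻¹ * c * c⁻¹ ^ 2) = 1 := by
          intro a c
          have h : a * c * (a⁻¹ * c * c⁻¹ ^ 2) = (a * a⁻¹) * ((c * c⁻¹) * (c * c⁻¹)) := by
            rw [pow_two]; ac_rfl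
          rw [h, mul_inv_cancel, mul_inv_cancel, one_mul, one_mul]
        exact this _ _
      exact congrArg Units.val this
    have hw0 : w ≠ 0 := by
      intro h0
      rw [h0] at hone
      refine AF.two_nu (K := K) ?_
      simpa using hone
    have hTT : T = T' := by
      by_contra hne
      have hne' : (T : Finset P) ≠ T' := fun h => hne (Subtype.ext h)
      have hnon : (symmDiff (T : Finset P) T').Nonempty := by
        rw [Finset.nonempty_iff_ne_empty]
        intro h
        exact hne' (symmDiff_eq_bot.1 h)
      have e1 := AF.JI_mul (symmDiff (T : Finset P) (r T)) (symmDiff (T' : Finset P) (r T))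
      have e2 : symmDiff (symmDiff (T : Finset P) (r T)) (symmDiff (T' : Finset P) (r T)) = symmDiff (T : Finset P) T' := by
        rw [symmDiff_comm (T' : Finset P), symmDiff_assoc, symmDiff_symmDiff_cancel_left]
      rw [e2] at e1
      have e3 := congrArg (fun I : Ideal (𝓞 K) => (I : F)) e1
      simp only [FractionalIdeal.coeIdeal_mul, FractionalIdeal.coeIdeal_pow] at e3
      have hβN' := hβN T'
      rw [← hrr] at hβN'
      refine hrec _ (hsd _ (hV' T) _ (hV' T')) hnon (β T * x q * (β T' * x q') * w ^ 2)
        (AF.JI (symmDiff (T : Finset P) (r T) ∩ symmDiff (T' : Finset P) (r T)) * N T * N T' * N' q * N' q' * Ideal.span {w}) ?_ hone ?_ ?_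
      · have hsw : Ideal.span {w} ≠ (⊥ : Ideal (𝓞 K)) := by simpa using hw0
        exact mul_ne_zero (mul_ne_zero (mul_ne_zero (mul_ne_zero (mul_ne_zero (AF.JI_ne _) (hN T)) (hN T')) (hN' q)) (hN' q')) hsw
      · exact mul_ne_zero (mul_ne_zero (mul_ne_zero (hβ0 _) (hx0 _)) (mul_ne_zero (hβ0 _) (hx0 _))) (pow_ne_zero 2 hw0)
      · rw [AF.co, AF.sp_mul, AF.sp_mul, AF.sp_mul, AF.sp_mul, pow_two, AF.sp_mul, hβN T, hβN', hxN, hxN, AF.sp_coe w]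
        simp only [FractionalIdeal.coeIdeal_mul]
        calc _ = ((AF.JI (symmDiff (T : Finset P) (r T)) : F) * (AF.JI (symmDiff (T' : Finset P) (r T)) : F)) *
              ((N T : F) ^ 2 * (N T' : F) ^ 2 * (N' q : F) ^ 2 * (N' q' : F) ^ 2 * ((Ideal.span {w} : Ideal (𝓞 K)) : F) ^ 2) := by ring
          _ = _ := by rw [e3]; ring
    subst hTT
    have hqq : q = q' := by
      rw [← hyq q, ← hyq q', QuotientGroup.eq, Subgroup.mem_subgroupOf]
      have hm : y q * y q' ∈ AF.Z4 K := by
        have hbk : ((β T : 𝓞 K) : K) ≠ 0 := by simpa using hβ0 T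
        have hwk : (w : K) ≠ 0 := by simpa using hw0
        refine ⟨Subgroup.mul_mem _ (hy q) (hy q'), t q * t q' * Units.mk0 _ hbk * Units.mk0 _ hwk, _, ?_, hone⟩
        rw [AF.co, hxy, hxy]
        push_cast
        simp only [Units.val_mk0]
        ring
      have : (y q)⁻¹ * y q' = (y q)⁻¹ ^ 2 * (y q * y q') := by
        rw [pow_two, mul_assoc, inv_mul_cancel_left]
      change (y q)⁻¹ * y q' ∈ _
      rw [this]
      exact Subgroup.mul_mem _ (AF.sq_le_Z4 ⟨(y q)⁻¹, rfl⟩) hm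
    rw [hqq]
  have h1 := Nat.card_le_card_of_injective g hg
  rw [Nat.card_prod, Nat.card_prod, Nat.card_eq_fintype_card (α := V.powerset), Fintype.card_coe, Finset.card_powerset, ← hcard] at h1
  refine le_trans h1 (Nat.mul_le_mul (le_of_eq hρ) AF.card_A)
end
end

/-- **Armitage–Fröhlich.**  Let `K` be a number field with `r₁ > 0` real places.  If `ρ` is
the 2-rank of the class group of `K` and `ρ⁺` is the 2-rank of the narrow class group of `K`,
then `ρ⁺ − ρ ≤ ⌊r₁/2⌋`. -/
theorem armitage_frohlich (r₁ ρ ρplus : ℕ)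
    (hr₁ : Nat.card {w : InfinitePlace K // w.IsReal} = r₁)
    (hr₁pos : 0 < r₁)
    (hρ : Nat.card {c : ClassGroup (𝓞 K) // c ^ 2 = 1} = 2 ^ ρ)
    (hρplus : Nat.card {c : NarrowClassGroup K // c ^ 2 = 1} = 2 ^ ρplus) :
    ρplus - ρ ≤ r₁ / 2 := by
  have hN : totPosPrincipalSubgroup K = (AF.Kp K).map (toPrincipalIdeal (𝓞 K) K) := by
    ext I
    constructor
    · rintro ⟨x, hx, hI⟩
      refine ⟨x, AF.mem_Kp.mpr hx, ?_⟩
      apply Units.ext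
      rw [coe_toPrincipalIdeal, hI]
    · rintro ⟨x, hx, rfl⟩
      exact ⟨x, AF.mem_Kp.mp hx, by rw [coe_toPrincipalIdeal]⟩
  have hH := AF.Hpart ρ ρplus hρ (totPosPrincipalSubgroup K) hN hρplus
  have hG := AF.Gpart (K := K) (by rw [hr₁]; exact hr₁pos) ρ hρ
  have hidx : (AF.I2 K ⊔ AF.P0 K).index = 2 ^ ρ := by rw [← AF.card_Cl]; exact hρ
  have e1 : (AF.sqK K).relIndex (AF.Z4 K) * (AF.Z4 K).relIndex (AF.Zp K)
      = (AF.sqK K).relIndex (AF.Zp K) :=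
    Subgroup.relIndex_mul_relIndex _ _ _ AF.sq_le_Z4 AF.Z4_le
  have e2 : (AF.sqK K).relIndex (AF.Zp K) * (AF.Zp K).relIndex (AF.ZI K)
      = (AF.sqK K).relIndex (AF.ZI K) :=
    Subgroup.relIndex_mul_relIndex _ _ _ (AF.sq_le_Z4.trans AF.Z4_le) inf_le_left
  obtain ⟨hG0, hG1⟩ := hG
  have ha0 : (AF.sqK K).relIndex (AF.Zp K) ≠ 0 := by
    intro h; apply hG0; rw [← e2, h, zero_mul]
  have hd0 : (AF.Zp K).relIndex (AF.ZI K) ≠ 0 := by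
    intro h; apply hG0; rw [← e2, h, mul_zero]
  have hb0 : (AF.sqK K).relIndex (AF.Z4 K) ≠ 0 := by
    intro h; apply ha0; rw [← e1, h, zero_mul]
  have hC1 := AF.C1 (K := K) ρ hidx hb0
  have hC2 := AF.C2 (K := K) ρ hidx ha0
  have hH' : 2 ^ ρplus * (AF.Zp K).relIndex (AF.ZI K) ≤ 2 ^ (ρ + r₁) := by
    rw [← hr₁]; exact hH
  have hrr : InfinitePlace.nrRealPlaces K = r₁ := by
    classical
    rw [← hr₁, Nat.card_eq_fintype_card]
  have hn := InfinitePlace.card_add_two_mul_card_eq_rank K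
  have hc := InfinitePlace.card_eq_nrRealPlaces_add_nrComplexPlaces K
  have hrank : Units.rank K = Fintype.card (InfinitePlace K) - 1 := rfl
  generalize (AF.sqK K).relIndex (AF.Zp K) = a at *
  generalize (AF.Zp K).relIndex (AF.ZI K) = d at *
  generalize (AF.sqK K).relIndex (AF.ZI K) = g at *
  generalize (AF.Z4 K).relIndex (AF.Zp K) = e at *
  generalize (AF.sqK K).relIndex (AF.Z4 K) = b at *
  generalize InfinitePlace.nrComplexPlaces K = r₂ at *
  have hrk : Units.rank K + 1 = r₁ + r₂ := by omega
  rw [hrk] at hG1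
  rw [← hn, hrr] at hC2
  have s1 : a * a ≤ 2 ^ (2 * ρ + r₁ + 2 * r₂) := by
    calc a * a = b * (a * e) := by rw [← e1]; ring
      _ ≤ 2 ^ ρ * (2 ^ ρ * 2 ^ (r₁ + 2 * r₂)) := Nat.mul_le_mul hC1 hC2
      _ = 2 ^ (2 * ρ + r₁ + 2 * r₂) := by ring
  have s2 : 2 ^ (ρplus + r₂) ≤ a := by
    have : 2 ^ (ρplus + r₂) * 2 ^ (ρ + r₁) ≤ a * 2 ^ (ρ + r₁) := by
      calc 2 ^ (ρplus + r₂) * 2 ^ (ρ + r₁) = 2 ^ ρplus * 2 ^ (ρ + (r₁ + r₂)) := by ring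
        _ ≤ 2 ^ ρplus * (a * d) := Nat.mul_le_mul le_rfl (by rw [e2]; exact hG1)
        _ = a * (2 ^ ρplus * d) := by ring
        _ ≤ a * 2 ^ (ρ + r₁) := Nat.mul_le_mul le_rfl hH'
    exact Nat.le_of_mul_le_mul_right this (by positivity)
  have s3 : 2 ^ (2 * (ρplus + r₂)) ≤ 2 ^ (2 * ρ + r₁ + 2 * r₂) := by
    calc 2 ^ (2 * (ρplus + r₂)) = 2 ^ (ρplus + r₂) * 2 ^ (ρplus + r₂) := by ring
      _ ≤ a * a := Nat.mul_le_mul s2 s2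
      _ ≤ _ := s1
  have s4 := (Nat.pow_le_pow_iff_right (by norm_num : 1 < 2)).mp s3
  omega
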